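/- arXiv:2306.10446 — 4 statements merged into one kernel-verified Lean document; each statement's English description precedes it below -/
import Mathlib

section
/- Let p be a prime with p ∉ {2,3}, and let s be a real number with s ≥ 1. Let μ be a translation-invariant (additive Haar) Borel measure on the ℚ_p-vector space ℚ_p⁴ of binary cubic forms over ℚ_p, normalized so that μ(ℤ_p⁴) = 1. For each natural number b, the set {v ∈ ℤ_p⁴ : v_p(Δ₃(v)) = b} is a finite union of orbits for the twisted GL₂(ℤ_p)-action, each with finite stabilizer; let N_b be the sum over these orbits of 1/#Stab_{GL₂(ℤ_p)}. Then the series Σ_{b≥0} N_b p^{−bs} converges and (1 − p⁻¹)(1 − p⁻²) · Σ_{b≥0} N_b p^{−bs} = ∫_{ℤ_p⁴} |Δ₃(v)|_p^{s−1} dμ(v), where |·|_p is the p-adic absolute value. -/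
open MeasureTheory

/-- The discriminant of the binary cubic form `a·x³ + b·x²y + c·xy² + d·y³`. -/
def disc3 {R : Type*} [CommRing R] (a b c d : R) : R :=
  b ^ 2 * c ^ 2 - 4 * a * c ^ 3 - 4 * b ^ 3 * d - 27 * a ^ 2 * d ^ 2 + 18 * a * b * c * d

/-- The twisted action of `GL₂(R)` on binary cubic forms, in coordinates:
`(g·f)(x,y) = det(g)⁻¹·f(g₁₁x + g₂₁y, g₁₂x + g₂₂y)` for `f ↔ (a,b,c,d)`. -/
def cubicAct {R : Type*} [CommRing R] (g : Matrix.GeneralLinearGroup (Fin 2) R)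
    (v : Fin 4 → R) : Fin 4 → R :=
  let α := (g : Matrix (Fin 2) (Fin 2) R) 0 0
  let β := (g : Matrix (Fin 2) (Fin 2) R) 0 1
  let γ := (g : Matrix (Fin 2) (Fin 2) R) 1 0
  let δ := (g : Matrix (Fin 2) (Fin 2) R) 1 1
  let e := Matrix.det (↑(g⁻¹) : Matrix (Fin 2) (Fin 2) R)
  ![e * (v 0 * α ^ 3 + v 1 * α ^ 2 * β + v 2 * α * β ^ 2 + v 3 * β ^ 3),
    e * (3 * v 0 * α ^ 2 * γ + v 1 * (α ^ 2 * δ + 2 * α * β * γ) +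
      v 2 * (β ^ 2 * γ + 2 * α * β * δ) + 3 * v 3 * β ^ 2 * δ),
    e * (3 * v 0 * α * γ ^ 2 + v 1 * (β * γ ^ 2 + 2 * α * γ * δ) +
      v 2 * (α * δ ^ 2 + 2 * β * γ * δ) + 3 * v 3 * β * δ ^ 2),
    e * (v 0 * γ ^ 3 + v 1 * γ ^ 2 * δ + v 2 * γ * δ ^ 2 + v 3 * δ ^ 3)]

/-- `N` is the weighted number of orbits of the twisted `GL₂(R)`-action on the set `S` of
binary cubic forms: `S` is a finite union of orbits, each with finite stabilizer, and `N`
is the sum over the orbits of `1/#Stab`. -/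
def IsWeightedGL2OrbitCount {R : Type*} [CommRing R] (S : Set (Fin 4 → R)) (N : ℝ) :
    Prop :=
  ∃ (m : ℕ) (reps : Fin m → (Fin 4 → R)),
    (∀ i, reps i ∈ S) ∧
    (∀ i j : Fin m, (∃ g, cubicAct g (reps i) = reps j) → i = j) ∧
    (∀ v ∈ S, ∃ i, ∃ g, cubicAct g (reps i) = v) ∧
    (∀ i, {g : Matrix.GeneralLinearGroup (Fin 2) R | cubicAct g (reps i) = reps i}.Finite) ∧
    N = ∑ i : Fin m,
      (1 : ℝ) / ({g : Matrix.GeneralLinearGroup (Fin 2) R |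
        cubicAct g (reps i) = reps i}.ncard)

theorem padic_card_quot {p : ℕ} [Fact p.Prime] (a : ℤ_[p]) (ha : a ≠ 0) :
    Nat.card (ℤ_[p] ⧸ Ideal.span ({a} : Set ℤ_[p])) = p ^ a.valuation := by
  have h1 : Ideal.span ({a} : Set ℤ_[p]) =
      RingHom.ker (PadicInt.toZModPow (p := p) a.valuation) := by
    rw [PadicInt.ker_toZModPow, Ideal.span_singleton_eq_span_singleton]
    refine ⟨(PadicInt.unitCoeff ha)⁻¹, ?_⟩
    rw [Units.mul_inv_eq_iff_eq_mul, mul_comm]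
    exact PadicInt.unitCoeff_spec ha
  rw [h1, Nat.card_congr (RingHom.quotientKerEquivOfSurjective
    (ZMod.ringHom_surjective (PadicInt.toZModPow (p := p) a.valuation))).toEquiv, Nat.card_zmod]

theorem padic_valuation_prod {p : ℕ} [Fact p.Prime] {ι : Type*} (t : Finset ι) (a : ι → ℤ_[p])
    (ha : ∀ i ∈ t, a i ≠ 0) : (∏ i ∈ t, a i).valuation = ∑ i ∈ t, (a i).valuation := by
  classical
  induction t using Finset.induction_on with
  | empty => simp
  | insert i t hi ih =>
    rw [Finset.prod_insert hi, Finset.sum_insert hi, PadicInt.valuation_mul, ih]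
    · exact fun j hj => ha j (Finset.mem_insert_of_mem hj)
    · exact ha i (Finset.mem_insert_self _ _)
    · exact Finset.prod_ne_zero_iff.2 fun j hj => ha j (Finset.mem_insert_of_mem hj)

theorem padic_valuation_unit {p : ℕ} [Fact p.Prime] (u : ℤ_[p]ˣ) :
    (u : ℤ_[p]).valuation = 0 := by
  have h : ((u : ℤ_[p]) * ((u⁻¹ : ℤ_[p]ˣ) : ℤ_[p])).valuation = 0 := by simp
  rw [PadicInt.valuation_mul u.ne_zero (u⁻¹).ne_zero] at h
  omega

theorem padic_valuation_assoc {p : ℕ} [Fact p.Prime] {a b : ℤ_[p]} (h : Associated a b)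
    (ha : a ≠ 0) : a.valuation = b.valuation := by
  obtain ⟨u, rfl⟩ := h
  rw [PadicInt.valuation_mul ha u.ne_zero, padic_valuation_unit, add_zero]

theorem padic_index_range {p : ℕ} [Fact p.Prime]
    (T : (Fin 4 → ℤ_[p]) →ₗ[ℤ_[p]] (Fin 4 → ℤ_[p])) (hT : LinearMap.det T ≠ 0) :
    (LinearMap.range T).toAddSubgroup.index = p ^ (LinearMap.det T).valuation := by
  have hinj : Function.Injective T := by
    rw [← LinearMap.ker_eq_bot]
    by_contra hk
    exact hT (LinearMap.det_eq_zero_iff_ker_ne_bot.2 hk)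
  set N := LinearMap.range T with hN
  let e : (Fin 4 → ℤ_[p]) ≃ₗ[ℤ_[p]] N := LinearEquiv.ofInjective T hinj
  have h : Module.finrank ℤ_[p] N = Module.finrank ℤ_[p] (Fin 4 → ℤ_[p]) := e.symm.finrank_eq
  let b := Pi.basisFun ℤ_[p] (Fin 4)
  let a := Submodule.smithNormalFormCoeffs b h
  let b' := Submodule.smithNormalFormTopBasis b h
  let ab := Submodule.smithNormalFormBotBasis b h
  have ab_eq := Submodule.smithNormalFormBotBasis_def b h
  let e' : (Fin 4 → ℤ_[p]) ≃ₗ[ℤ_[p]] N := b'.equiv ab (Equiv.refl _)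
  let f : (Fin 4 → ℤ_[p]) →ₗ[ℤ_[p]] (Fin 4 → ℤ_[p]) := N.subtype.comp (e' : _ →ₗ[ℤ_[p]] N)
  have hTe : T = N.subtype.comp (e : _ →ₗ[ℤ_[p]] N) := by
    ext x; rfl
  have hassoc : Associated (LinearMap.det T) (LinearMap.det f) := by
    rw [hTe]; exact LinearMap.associated_det_comp_equiv _ _ _
  have ha : ∀ i, f (b' i) = a i • b' i := by
    intro i
    change ((b'.equiv ab (Equiv.refl _) (b' i) : N) : Fin 4 → ℤ_[p]) = _
    rw [b'.equiv_apply, Equiv.refl_apply]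
    exact ab_eq i
  have hdet : LinearMap.det f = ∏ i, a i := by
    rw [← LinearMap.det_toMatrix b', ← Matrix.det_diagonal]
    congr 1; ext i j
    rw [LinearMap.toMatrix_apply, ha, map_smul, Module.Basis.repr_self, Finsupp.smul_single,
      smul_eq_mul, mul_one]
    by_cases h : i = j
    · rw [h, Matrix.diagonal_apply_eq, Finsupp.single_eq_same]
    · rw [Matrix.diagonal_apply_ne _ h, Finsupp.single_eq_of_ne h]
  have hne : ∀ i ∈ Finset.univ, a i ≠ 0 := by
    rw [← Finset.prod_ne_zero_iff, ← hdet]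
    exact fun h0 => hT ((hassoc.eq_zero_iff).2 h0)
  rw [padic_valuation_assoc hassoc hT, hdet, padic_valuation_prod _ _ hne]
  change Nat.card ((Fin 4 → ℤ_[p]) ⧸ N) = _
  rw [Nat.card_congr (Submodule.quotientEquivPiSpan N b h).toEquiv, Nat.card_pi,
    ← Finset.prod_pow_eq_pow_sum]
  exact Finset.prod_congr rfl fun i hi => padic_card_quot _ (hne i hi)

/-- The untwisted substitution action. -/
def cubicPoly {R : Type*} [CommRing R] (α β γ δ : R) (v : Fin 4 → R) : Fin 4 → R :=
  ![v 0 * α ^ 3 + v 1 * α ^ 2 * β + v 2 * α * β ^ 2 + v 3 * β ^ 3,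
    3 * v 0 * α ^ 2 * γ + v 1 * (α ^ 2 * δ + 2 * α * β * γ) +
      v 2 * (β ^ 2 * γ + 2 * α * β * δ) + 3 * v 3 * β ^ 2 * δ,
    3 * v 0 * α * γ ^ 2 + v 1 * (β * γ ^ 2 + 2 * α * γ * δ) +
      v 2 * (α * δ ^ 2 + 2 * β * γ * δ) + 3 * v 3 * β * δ ^ 2,
    v 0 * γ ^ 3 + v 1 * γ ^ 2 * δ + v 2 * γ * δ ^ 2 + v 3 * δ ^ 3]

theorem cubicAct_eq_smul {R : Type*} [CommRing R] (g : Matrix.GeneralLinearGroup (Fin 2) R)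
    (v : Fin 4 → R) : cubicAct g v =
      Matrix.det (↑(g⁻¹) : Matrix (Fin 2) (Fin 2) R) • cubicPoly (g 0 0) (g 0 1) (g 1 0) (g 1 1) v := by
  ext i
  fin_cases i <;> simp [cubicAct, cubicPoly]

theorem GL2_det_inv_mul {R : Type*} [CommRing R] (g : Matrix.GeneralLinearGroup (Fin 2) R) :
    Matrix.det (↑(g⁻¹) : Matrix (Fin 2) (Fin 2) R) * Matrix.det (g : Matrix (Fin 2) (Fin 2) R) = 1 := by
  rw [← Matrix.det_mul, ← Units.val_mul, inv_mul_cancel, Units.val_one, Matrix.det_one]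

theorem cubicAct_eq_iff {R : Type*} [CommRing R] (g : Matrix.GeneralLinearGroup (Fin 2) R)
    (v w : Fin 4 → R) : cubicAct g v = w ↔
      cubicPoly (g 0 0) (g 0 1) (g 1 0) (g 1 1) v = (g 0 0 * g 1 1 - g 0 1 * g 1 0) • w := by
  rw [cubicAct_eq_smul, ← Matrix.det_fin_two]
  have h := GL2_det_inv_mul g
  constructor
  · rintro rfl
    rw [smul_smul, mul_comm, h, one_smul]
  · intro h'
    rw [h', smul_smul, h, one_smul]

theorem cubicAct_one {R : Type*} [CommRing R] (v : Fin 4 → R) : cubicAct 1 v = v := by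
  rw [cubicAct_eq_iff]
  ext i
  fin_cases i <;> simp [cubicPoly]

theorem cubicPoly_mul {R : Type*} [CommRing R] (a b c d a' b' c' d' : R) (v : Fin 4 → R) :
    cubicPoly a b c d (cubicPoly a' b' c' d' v) =
      cubicPoly (a * a' + b * c') (a * b' + b * d') (c * a' + d * c') (c * b' + d * d') v := by
  ext i
  fin_cases i <;> simp [cubicPoly] <;> ring

theorem cubicPoly_smul {R : Type*} [CommRing R] (a b c d e : R) (v : Fin 4 → R) :
    cubicPoly a b c d (e • v) = e • cubicPoly a b c d v := by
  ext i
  fin_cases i <;> simp [cubicPoly] <;> ring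

theorem cubicAct_mul {R : Type*} [CommRing R] (g h : Matrix.GeneralLinearGroup (Fin 2) R)
    (v : Fin 4 → R) : cubicAct (g * h) v = cubicAct g (cubicAct h v) := by
  rw [cubicAct_eq_smul, cubicAct_eq_smul g, cubicAct_eq_smul h, cubicPoly_smul, cubicPoly_mul,
    smul_smul, mul_inv_rev, Units.val_mul, Matrix.det_mul, mul_comm]
  simp [Matrix.mul_apply, Fin.sum_univ_two]

theorem disc3_cubicPoly {R : Type*} [CommRing R] (a b c d : R) (v : Fin 4 → R) :
    disc3 (cubicPoly a b c d v 0) (cubicPoly a b c d v 1) (cubicPoly a b c d v 2)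
      (cubicPoly a b c d v 3) = (a * d - b * c) ^ 6 * disc3 (v 0) (v 1) (v 2) (v 3) := by
  simp [cubicPoly, disc3]; ring

theorem disc3_smul {R : Type*} [CommRing R] (e : R) (v : Fin 4 → R) :
    disc3 ((e • v) 0) ((e • v) 1) ((e • v) 2) ((e • v) 3) =
      e ^ 4 * disc3 (v 0) (v 1) (v 2) (v 3) := by
  simp [disc3]; ring

theorem disc3_cubicAct {R : Type*} [CommRing R] (g : Matrix.GeneralLinearGroup (Fin 2) R)
    (v : Fin 4 → R) :
    disc3 (cubicAct g v 0) (cubicAct g v 1) (cubicAct g v 2) (cubicAct g v 3) =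
      Matrix.det (g : Matrix (Fin 2) (Fin 2) R) ^ 2 * disc3 (v 0) (v 1) (v 2) (v 3) := by
  rw [cubicAct_eq_smul, disc3_smul, disc3_cubicPoly, ← Matrix.det_fin_two]
  have h := GL2_det_inv_mul g
  set e := Matrix.det (↑(g⁻¹) : Matrix (Fin 2) (Fin 2) R)
  set f := Matrix.det (g : Matrix (Fin 2) (Fin 2) R)
  linear_combination (f ^ 2 * disc3 (v 0) (v 1) (v 2) (v 3)) * (e * f + 1) * ((e * f) ^ 2 + 1) * h

/-- Differential of the orbit map at the identity. -/
def cubicL {R : Type*} [CommRing R] (v : Fin 4 → R) : Matrix (Fin 4) (Fin 4) R :=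
  !![2 * v 0, v 1, 0, - v 0; v 1, 2 * v 2, 3 * v 0, 0; 0, 3 * v 3, 2 * v 1, v 2;
    - v 3, 0, v 2, 2 * v 3]

theorem det_cubicL {R : Type*} [CommRing R] (v : Fin 4 → R) :
    (cubicL v).det = disc3 (v 0) (v 1) (v 2) (v 3) := by
  simp [cubicL, Matrix.det_succ_row_zero, Fin.sum_univ_succ, disc3, Fin.succAbove]
  ring

/-- Second order remainder of the orbit map equation. -/
def cubicRem {R : Type*} [CommRing R] (q : R) (v l X : Fin 4 → R) : Fin 4 → R :=
  ![v 0 * (3 * X 0 ^ 2 + q * X 0 ^ 3) + v 1 * (2 * X 0 * X 1 + q * X 0 ^ 2 * X 1)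
      + v 2 * (X 1 ^ 2 + q * X 0 * X 1 ^ 2) + v 3 * (q * X 1 ^ 3)
      - (X 0 + X 3) * l 0 - (X 0 * X 3 - X 1 * X 2) * v 0 - q * (X 0 * X 3 - X 1 * X 2) * l 0,
    3 * v 0 * (2 * X 0 * X 2 + q * X 0 ^ 2 * X 2)
      + v 1 * (X 0 ^ 2 + 2 * X 0 * X 3 + q * X 0 ^ 2 * X 3 + 2 * (X 1 * X 2 + q * X 0 * X 1 * X 2))
      + v 2 * (q * X 1 ^ 2 * X 2 + 2 * (X 1 * (X 0 + X 3) + q * X 0 * X 1 * X 3))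
      + 3 * v 3 * (X 1 ^ 2 + q * X 1 ^ 2 * X 3)
      - (X 0 + X 3) * l 1 - (X 0 * X 3 - X 1 * X 2) * v 1 - q * (X 0 * X 3 - X 1 * X 2) * l 1,
    3 * v 3 * (2 * X 3 * X 1 + q * X 3 ^ 2 * X 1)
      + v 2 * (X 3 ^ 2 + 2 * X 0 * X 3 + q * X 3 ^ 2 * X 0 + 2 * (X 1 * X 2 + q * X 3 * X 1 * X 2))
      + v 1 * (q * X 2 ^ 2 * X 1 + 2 * (X 2 * (X 0 + X 3) + q * X 3 * X 2 * X 0))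
      + 3 * v 0 * (X 2 ^ 2 + q * X 2 ^ 2 * X 0)
      - (X 0 + X 3) * l 2 - (X 0 * X 3 - X 1 * X 2) * v 2 - q * (X 0 * X 3 - X 1 * X 2) * l 2,
    v 3 * (3 * X 3 ^ 2 + q * X 3 ^ 3) + v 2 * (2 * X 3 * X 2 + q * X 3 ^ 2 * X 2)
      + v 1 * (X 2 ^ 2 + q * X 3 * X 2 ^ 2) + v 0 * (q * X 2 ^ 3)
      - (X 0 + X 3) * l 3 - (X 0 * X 3 - X 1 * X 2) * v 3 - q * (X 0 * X 3 - X 1 * X 2) * l 3]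

theorem cubicL_mulVec {R : Type*} [CommRing R] (v X : Fin 4 → R) :
    (cubicL v).mulVec X = ![2 * v 0 * X 0 + v 1 * X 1 - v 0 * X 3,
      v 1 * X 0 + 2 * v 2 * X 1 + 3 * v 0 * X 2, 3 * v 3 * X 1 + 2 * v 1 * X 2 + v 2 * X 3,
      - v 3 * X 0 + v 2 * X 2 + 2 * v 3 * X 3] := by
  ext i
  fin_cases i <;> simp [cubicL, Matrix.mulVec, dotProduct, Fin.sum_univ_four] <;> ring

theorem cubicPoly_expand {R : Type*} [CommRing R] (q : R) (v l X : Fin 4 → R) :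
    cubicPoly (1 + q * X 0) (q * X 1) (q * X 2) (1 + q * X 3) v
      - ((1 + q * X 0) * (1 + q * X 3) - (q * X 1) * (q * X 2)) • (v + q • l) =
    q • ((cubicL v).mulVec X - l + q • cubicRem q v l X) := by
  rw [cubicL_mulVec]
  ext i
  simp only [Pi.sub_apply, Pi.smul_apply, Pi.add_apply, smul_eq_mul]
  fin_cases i <;> simp [cubicPoly, cubicRem] <;> ring

/-- `f` is 1-Lipschitz. -/
def PLip {p : ℕ} [Fact p.Prime] (f : (Fin 4 → ℤ_[p]) → ℤ_[p]) : Prop :=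
  ∀ X X', ‖f X - f X'‖ ≤ ‖X - X'‖

namespace PLip
variable {p : ℕ} [Fact p.Prime] {f g : (Fin 4 → ℤ_[p]) → ℤ_[p]}

theorem const (c : ℤ_[p]) : PLip (fun _ : Fin 4 → ℤ_[p] => c) := fun X X' => by simp

theorem proj (i : Fin 4) : PLip (fun X : Fin 4 → ℤ_[p] => X i) := fun X X' =>
  norm_le_pi_norm (X - X') i

theorem add (hf : PLip f) (hg : PLip g) : PLip (fun X => f X + g X) := fun X X' => by
  have : f X + g X - (f X' + g X') = (f X - f X') + (g X - g X') := by ring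
  rw [this]
  exact (PadicInt.nonarchimedean _ _).trans (max_le (hf X X') (hg X X'))

theorem mul (hf : PLip f) (hg : PLip g) : PLip (fun X => f X * g X) := fun X X' => by
  have : f X * g X - f X' * g X' = f X * (g X - g X') + g X' * (f X - f X') := by ring
  rw [this]
  refine (PadicInt.nonarchimedean _ _).trans (max_le ?_ ?_)
  · rw [norm_mul]
    exact (mul_le_of_le_one_left (norm_nonneg _) (PadicInt.norm_le_one _)).trans (hg X X')
  · rw [norm_mul]
    exact (mul_le_of_le_one_left (norm_nonneg _) (PadicInt.norm_le_one _)).trans (hf X X')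

theorem sub (hf : PLip f) (hg : PLip g) : PLip (fun X => f X - g X) := by
  have := hf.add ((const (-1)).mul hg)
  simpa [sub_eq_add_neg] using this

theorem pow (hf : PLip f) (n : ℕ) : PLip (fun X => f X ^ n) := by
  induction n with
  | zero => simpa using const (p := p) 1
  | succ n ih => simpa [pow_succ] using ih.mul hf

end PLip

theorem plip_cubicRem {p : ℕ} [Fact p.Prime] (q : ℤ_[p]) (v l : Fin 4 → ℤ_[p]) (i : Fin 4) :
    PLip (fun X => cubicRem q v l X i) := by
  fin_cases i <;> simp only [cubicRem] <;> simp <;>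
  repeat' first
    | with_reducible exact PLip.const _
    | with_reducible exact PLip.proj _
    | with_reducible apply PLip.add
    | with_reducible apply PLip.sub
    | with_reducible apply PLip.mul
    | with_reducible apply PLip.pow

theorem plip_mulVec {p : ℕ} [Fact p.Prime] (A : Matrix (Fin 4) (Fin 4) ℤ_[p])
    (f : (Fin 4 → ℤ_[p]) → (Fin 4 → ℤ_[p])) (hf : ∀ i, PLip (fun X => f X i)) (i : Fin 4) :
    PLip (fun X => A.mulVec (f X) i) := by
  simp only [Matrix.mulVec, dotProduct, Fin.sum_univ_four]
  exact ((((PLip.const _).mul (hf _)).add ((PLip.const _).mul (hf _))).add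
    ((PLip.const _).mul (hf _))).add ((PLip.const _).mul (hf _))

theorem exists_unit_pow {p : ℕ} [Fact p.Prime] (D : ℤ_[p]) (hD : D ≠ 0) :
    ∃ c : ℤ_[p], (p : ℤ_[p]) ^ (D.valuation + 1) = D * (p * c) := by
  refine ⟨((PadicInt.unitCoeff hD)⁻¹ : ℤ_[p]ˣ), ?_⟩
  have h := PadicInt.unitCoeff_spec hD
  have h2 : (p : ℤ_[p]) ^ D.valuation = D * ((PadicInt.unitCoeff hD)⁻¹ : ℤ_[p]ˣ) := by
    rw [Units.eq_mul_inv_iff_mul_eq, mul_comm]; exact h.symm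
  rw [pow_succ, h2]; ring

theorem cubic_hensel {p : ℕ} [hp : Fact p.Prime] (v : Fin 4 → ℤ_[p])
    (hv : disc3 (v 0) (v 1) (v 2) (v 3) ≠ 0) (q : ℤ_[p])
    (hq : q = (p : ℤ_[p]) ^ ((disc3 (v 0) (v 1) (v 2) (v 3)).valuation + 1)) (Y : Fin 4 → ℤ_[p]) :
    ∃! X : Fin 4 → ℤ_[p],
      (cubicL v).mulVec X - (cubicL v).mulVec Y + q • cubicRem q v ((cubicL v).mulVec Y) X = 0 := by
  obtain ⟨c, hc⟩ := exists_unit_pow _ hv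
  rw [← hq, ← det_cubicL] at hc
  rw [← det_cubicL] at hv
  set M := cubicL v
  set l := M.mulVec Y
  let F : (Fin 4 → ℤ_[p]) → (Fin 4 → ℤ_[p]) := fun X =>
    Y - (p * c : ℤ_[p]) • M.adjugate.mulVec (cubicRem q v l X)
  have hFc : ContractingWith (1/2) F := by
    refine ⟨by rw [← NNReal.coe_lt_coe]; norm_num, LipschitzWith.of_dist_le_mul fun X X' => ?_⟩
    rw [dist_eq_norm, dist_eq_norm]
    refine (pi_norm_le_iff_of_nonneg (by positivity)).2 fun i => ?_
    have h := plip_mulVec M.adjugate _ (plip_cubicRem q v l) i X X'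
    have h2 : (F X - F X') i = -((p : ℤ_[p]) * (c * (M.adjugate.mulVec (cubicRem q v l X) i -
        M.adjugate.mulVec (cubicRem q v l X') i))) := by
      simp [F]; ring
    rw [h2, norm_neg, norm_mul, norm_mul, PadicInt.norm_p]
    have h3 : (p : ℝ)⁻¹ ≤ 1 / 2 := by
      rw [one_div]
      exact inv_anti₀ (by norm_num) (by exact_mod_cast hp.out.two_le)
    have h4 : ‖c‖ * ‖M.adjugate.mulVec (cubicRem q v l X) i -
        M.adjugate.mulVec (cubicRem q v l X') i‖ ≤ ‖X - X'‖ :=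
      (mul_le_of_le_one_left (norm_nonneg _) (PadicInt.norm_le_one _)).trans h
    have := mul_le_mul h3 h4 (by positivity) (by norm_num)
    simpa using this
  have key : ∀ X, (M.mulVec X - l + q • cubicRem q v l X = 0 ↔ F X = X) := by
    intro X
    simp only [F]
    generalize cubicRem q v l X = r
    constructor
    · intro h
      have h1 := congrArg M.adjugate.mulVec h
      rw [Matrix.mulVec_add, Matrix.mulVec_sub, Matrix.mulVec_smul, Matrix.mulVec_mulVec,
        Matrix.mulVec_mulVec, Matrix.adjugate_mul, Matrix.smul_mulVec, Matrix.smul_mulVec,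
        Matrix.one_mulVec, Matrix.one_mulVec, Matrix.mulVec_zero, hc, mul_smul,
        ← smul_sub, ← smul_add] at h1
      have h2 := (smul_eq_zero.1 h1).resolve_left hv
      rw [sub_eq_iff_eq_add, eq_comm, ← sub_eq_zero, ← h2]
      abel
    · intro h
      have h1 := congrArg M.mulVec h
      rw [Matrix.mulVec_sub, Matrix.mulVec_smul, Matrix.mulVec_mulVec, Matrix.mul_adjugate,
        Matrix.smul_mulVec, Matrix.one_mulVec, smul_smul, mul_comm, ← hc] at h1
      rw [← h1]
      simp [l]
  obtain ⟨X, hX, -⟩ := hFc.exists_fixedPoint Y (edist_ne_top _ _)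
  refine ⟨X, (key X).2 hX, fun X' hX' => ?_⟩
  exact hFc.fixedPoint_unique' ((key X').1 hX') hX

/-- Reduction map on `GL₂`. -/
noncomputable def redGL (p : ℕ) [Fact p.Prime] (n : ℕ) :
    Matrix.GeneralLinearGroup (Fin 2) ℤ_[p] →* Matrix.GeneralLinearGroup (Fin 2) (ZMod (p ^ n)) :=
  Matrix.GeneralLinearGroup.map (PadicInt.toZModPow n)

theorem redGL_apply {p : ℕ} [Fact p.Prime] (n : ℕ) (g : Matrix.GeneralLinearGroup (Fin 2) ℤ_[p])
    (i j : Fin 2) : redGL p n g i j = PadicInt.toZModPow n (g i j) := rfl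

theorem isUnit_of_toZModPow {p : ℕ} [hp : Fact p.Prime] {n : ℕ} (hn : n ≠ 0) {x : ℤ_[p]}
    (h : IsUnit (PadicInt.toZModPow n x)) : IsUnit x := by
  by_contra hx
  have h1 : x ∈ IsLocalRing.maximalIdeal ℤ_[p] := hx
  rw [PadicInt.maximalIdeal_eq_span_p, Ideal.mem_span_singleton] at h1
  obtain ⟨y, rfl⟩ := h1
  rw [map_mul] at h
  have h2 := isUnit_of_mul_isUnit_left h
  have h3 := h2.pow n
  rw [← map_pow] at h3
  have h4 : PadicInt.toZModPow (p := p) n ((p : ℤ_[p]) ^ n) = 0 := by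
    rw [← RingHom.mem_ker, PadicInt.ker_toZModPow]
    exact Ideal.mem_span_singleton_self _
  rw [h4, isUnit_zero_iff] at h3
  have : Fact (1 < p ^ n) := ⟨Nat.one_lt_pow hn hp.out.one_lt⟩
  exact zero_ne_one h3

theorem toZModPow_eq_iff {p : ℕ} [hp : Fact p.Prime] (n : ℕ) (x y : ℤ_[p]) :
    PadicInt.toZModPow n x = PadicInt.toZModPow n y ↔ ∃ z, x = y + (p : ℤ_[p]) ^ n * z := by
  rw [← sub_eq_zero, ← map_sub, ← RingHom.mem_ker, PadicInt.ker_toZModPow,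
    Ideal.mem_span_singleton]
  constructor
  · rintro ⟨z, hz⟩; exact ⟨z, by rw [← hz]; ring⟩
  · rintro ⟨z, rfl⟩; exact ⟨z, by ring⟩

theorem exists_GL_of_unit {R : Type*} [CommRing R] (M : Matrix (Fin 2) (Fin 2) R)
    (h : IsUnit M.det) : ∃ g : Matrix.GeneralLinearGroup (Fin 2) R,
      (g : Matrix (Fin 2) (Fin 2) R) = M :=
  ⟨Matrix.nonsingInvUnit M h, rfl⟩

theorem redGL_surjective {p : ℕ} [hp : Fact p.Prime] {n : ℕ} (hn : n ≠ 0) :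
    Function.Surjective (redGL p n) := by
  intro g
  choose f hf using ZMod.ringHom_surjective (PadicInt.toZModPow (p := p) n)
  have hM : ((Matrix.of fun i j => f (g i j)).map (PadicInt.toZModPow (p := p) n)) =
      (g : Matrix (Fin 2) (Fin 2) (ZMod (p ^ n))) := by
    ext i j; simp [hf]
  obtain ⟨h, hh⟩ := exists_GL_of_unit (Matrix.of fun i j => f (g i j)) (by
    apply isUnit_of_toZModPow hn
    rw [RingHom.map_det, RingHom.mapMatrix_apply, hM]
    exact (Matrix.isUnit_iff_isUnit_det _).1 g.isUnit)
  refine ⟨h, ?_⟩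
  ext i j
  rw [redGL_apply, hh]
  simp [hf]

theorem redGL_eq_one_iff {p : ℕ} [hp : Fact p.Prime] (n : ℕ)
    (g : Matrix.GeneralLinearGroup (Fin 2) ℤ_[p]) :
    redGL p n g = 1 ↔ ∃ X : Fin 4 → ℤ_[p], g 0 0 = 1 + (p : ℤ_[p]) ^ n * X 0 ∧
      g 0 1 = (p : ℤ_[p]) ^ n * X 1 ∧ g 1 0 = (p : ℤ_[p]) ^ n * X 2 ∧
      g 1 1 = 1 + (p : ℤ_[p]) ^ n * X 3 := by
  have h1 : ∀ x : ℤ_[p], PadicInt.toZModPow n x = 1 ↔ ∃ z, x = 1 + (p : ℤ_[p]) ^ n * z := by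
    intro x; rw [← map_one (PadicInt.toZModPow (p := p) n)]; exact toZModPow_eq_iff n x 1
  have h0 : ∀ x : ℤ_[p], PadicInt.toZModPow n x = 0 ↔ ∃ z, x = (p : ℤ_[p]) ^ n * z := by
    intro x; rw [← map_zero (PadicInt.toZModPow (p := p) n), toZModPow_eq_iff n x 0]; simp
  constructor
  · intro h
    have hij : ∀ i j, PadicInt.toZModPow n (g i j) = (1 : Matrix (Fin 2) (Fin 2) (ZMod (p ^ n))) i j := by
      intro i j; rw [← redGL_apply, h]; rfl
    obtain ⟨a, ha⟩ := (h1 _).1 (by simpa using hij 0 0)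
    obtain ⟨b, hb⟩ := (h0 _).1 (by simpa using hij 0 1)
    obtain ⟨c, hc⟩ := (h0 _).1 (by simpa using hij 1 0)
    obtain ⟨d, hd⟩ := (h1 _).1 (by simpa using hij 1 1)
    exact ⟨![a, b, c, d], ha, hb, hc, hd⟩
  · rintro ⟨X, ha, hb, hc, hd⟩
    ext i j
    rw [redGL_apply]
    have e1 := (h1 _).2 ⟨_, ha⟩
    have e2 := (h0 _).2 ⟨_, hb⟩
    have e3 := (h0 _).2 ⟨_, hc⟩
    have e4 := (h1 _).2 ⟨_, hd⟩
    fin_cases i <;> fin_cases j <;> simp [*] at * <;> assumption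

theorem exists_redGL {p : ℕ} [hp : Fact p.Prime] {n : ℕ} (hn : n ≠ 0) (X : Fin 4 → ℤ_[p]) :
    ∃ g : Matrix.GeneralLinearGroup (Fin 2) ℤ_[p], g 0 0 = 1 + (p : ℤ_[p]) ^ n * X 0 ∧
      g 0 1 = (p : ℤ_[p]) ^ n * X 1 ∧ g 1 0 = (p : ℤ_[p]) ^ n * X 2 ∧
      g 1 1 = 1 + (p : ℤ_[p]) ^ n * X 3 := by
  obtain ⟨g, hg⟩ := exists_GL_of_unit
    !![1 + (p : ℤ_[p]) ^ n * X 0, (p : ℤ_[p]) ^ n * X 1; (p : ℤ_[p]) ^ n * X 2,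
      1 + (p : ℤ_[p]) ^ n * X 3] (by
    apply isUnit_of_toZModPow hn
    have : PadicInt.toZModPow (p := p) n ((p : ℤ_[p]) ^ n) = 0 := by
      rw [← RingHom.mem_ker, PadicInt.ker_toZModPow]
      exact Ideal.mem_span_singleton_self _
    rw [Matrix.det_fin_two]
    simp only [Matrix.of_apply, Matrix.cons_val', Matrix.cons_val_zero, Matrix.cons_val_one,
      Matrix.cons_val_fin_one, map_sub, map_mul, map_add, map_one, this]
    simp)
  refine ⟨g, ?_, ?_, ?_, ?_⟩ <;> rw [hg] <;> simp

theorem cubicAct_ker_iff {p : ℕ} [hp : Fact p.Prime] (q : ℤ_[p]) (hq : q ≠ 0)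
    (v X l : Fin 4 → ℤ_[p])
    (g : Matrix.GeneralLinearGroup (Fin 2) ℤ_[p]) (h0 : g 0 0 = 1 + q * X 0)
    (h1 : g 0 1 = q * X 1) (h2 : g 1 0 = q * X 2) (h3 : g 1 1 = 1 + q * X 3) :
    cubicAct g v = v + q • l ↔
      (cubicL v).mulVec X - l + q • cubicRem q v l X = 0 := by
  rw [cubicAct_eq_iff, h0, h1, h2, h3, ← sub_eq_zero, cubicPoly_expand, smul_eq_zero]
  simp [hq]

/-- The orbit of the congruence subgroup. -/
theorem cubic_ball {p : ℕ} [hp : Fact p.Prime] (v : Fin 4 → ℤ_[p]) (b : ℕ)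
    (hv : disc3 (v 0) (v 1) (v 2) (v 3) ≠ 0)
    (hb : (disc3 (v 0) (v 1) (v 2) (v 3)).valuation = b) (w : Fin 4 → ℤ_[p]) :
    (∃ g, redGL p (b + 1) g = 1 ∧ cubicAct g v = w) ↔
      ∃ Y, v + (p : ℤ_[p]) ^ (b + 1) • (cubicL v).mulVec Y = w := by
  have hp0 : (p : ℤ_[p]) ≠ 0 := by exact_mod_cast hp.out.ne_zero
  have hq : (p : ℤ_[p]) ^ (b + 1) ≠ 0 := pow_ne_zero _ hp0
  constructor
  · rintro ⟨g, hg, rfl⟩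
    obtain ⟨X, h0, h1, h2, h3⟩ := (redGL_eq_one_iff _ _).1 hg
    obtain ⟨c, hc⟩ := exists_unit_pow _ hv
    rw [hb, ← det_cubicL] at hc
    have hex := cubicPoly_expand ((p : ℤ_[p]) ^ (b + 1)) v 0 X
    rw [← h0, ← h1, ← h2, ← h3, sub_eq_iff_eq_add] at hex
    rw [cubicAct_eq_smul, hex]
    set e := Matrix.det (↑(g⁻¹) : Matrix (Fin 2) (Fin 2) ℤ_[p])
    have he : e * (g 0 0 * g 1 1 - g 0 1 * g 1 0) = 1 := by
      rw [← Matrix.det_fin_two]; exact GL2_det_inv_mul g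
    generalize cubicRem ((p : ℤ_[p]) ^ (b + 1)) v 0 X = r
    refine ⟨e • (X + (p * c : ℤ_[p]) • (cubicL v).adjugate.mulVec r), ?_⟩
    rw [Matrix.mulVec_smul, Matrix.mulVec_add, Matrix.mulVec_smul, Matrix.mulVec_mulVec,
      Matrix.mul_adjugate, Matrix.smul_mulVec, Matrix.one_mulVec, smul_smul (p * c : ℤ_[p]),
      mul_comm _ (cubicL v).det, ← hc, smul_zero, add_zero, sub_zero]
    ext i
    simp only [Pi.add_apply, Pi.smul_apply, smul_eq_mul]
    linear_combination (-(v i)) * he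
  · rintro ⟨Y, rfl⟩
    obtain ⟨X, hX, -⟩ := cubic_hensel v hv _ rfl Y
    rw [hb] at hX
    obtain ⟨g, h0, h1, h2, h3⟩ := exists_redGL (n := b + 1) (Nat.succ_ne_zero b) X
    exact ⟨g, (redGL_eq_one_iff _ _).2 ⟨X, h0, h1, h2, h3⟩,
      (cubicAct_ker_iff _ hq v X _ g h0 h1 h2 h3).2 hX⟩

theorem cubic_stab_inj {p : ℕ} [hp : Fact p.Prime] (v : Fin 4 → ℤ_[p]) (b : ℕ)
    (hv : disc3 (v 0) (v 1) (v 2) (v 3) ≠ 0)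
    (hb : (disc3 (v 0) (v 1) (v 2) (v 3)).valuation = b)
    (g : Matrix.GeneralLinearGroup (Fin 2) ℤ_[p])
    (hg : redGL p (b + 1) g = 1) (h : cubicAct g v = v) : g = 1 := by
  have hp0 : (p : ℤ_[p]) ≠ 0 := by exact_mod_cast hp.out.ne_zero
  have hq : (p : ℤ_[p]) ^ (b + 1) ≠ 0 := pow_ne_zero _ hp0
  obtain ⟨X, h0, h1, h2, h3⟩ := (redGL_eq_one_iff _ _).1 hg
  have hX := (cubicAct_ker_iff _ hq v X 0 g h0 h1 h2 h3).1 (by simpa using h)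
  have hz := (cubicAct_ker_iff _ hq v 0 0 1 (by simp) (by simp) (by simp) (by simp)).1
    (by simpa using cubicAct_one v)
  obtain ⟨Z, -, hZ⟩ := cubic_hensel v hv _ rfl 0
  rw [hb] at hZ
  simp only [Matrix.mulVec_zero] at hZ hz hX
  have : X = 0 := (hZ X hX).trans (hZ 0 (by simpa using hz)).symm
  subst this
  ext i j
  fin_cases i <;> fin_cases j <;> simp [h0, h1, h2, h3]

theorem coset_measure {p : ℕ} [hp : Fact p.Prime] [MeasurableSpace (Fin 4 → ℤ_[p])]
    [BorelSpace (Fin 4 → ℤ_[p])] (ν : Measure (Fin 4 → ℤ_[p])) [ν.IsAddLeftInvariant]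
    [IsProbabilityMeasure ν] (A : Matrix (Fin 4) (Fin 4) ℤ_[p]) (hA : A.det ≠ 0)
    (v : Fin 4 → ℤ_[p]) :
    MeasurableSet {w | ∃ Y, v + A.mulVec Y = w} ∧
      ν {w | ∃ Y, v + A.mulVec Y = w} = ((p : ENNReal) ^ A.det.valuation)⁻¹ := by
  let T := Matrix.toLin' A
  have hdet : LinearMap.det T = A.det := LinearMap.det_toLin' A
  have hidx := padic_index_range T (by rw [hdet]; exact hA)
  rw [hdet] at hidx
  set H := (LinearMap.range T).toAddSubgroup with hH
  have hHset : (H : Set (Fin 4 → ℤ_[p])) = Set.range A.mulVec := by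
    ext w; simp [H, T]
  have hmeas : MeasurableSet (H : Set (Fin 4 → ℤ_[p])) := by
    rw [hHset]
    have : Continuous A.mulVec := Continuous.matrix_mulVec continuous_const continuous_id
    exact (isCompact_range this).isClosed.measurableSet
  have hpp : p ^ A.det.valuation ≠ 0 := pow_ne_zero _ hp.out.ne_zero
  have : H.FiniteIndex := ⟨by rw [hidx]; exact hpp⟩
  have hm := AddSubgroup.index_mul_measure H hmeas ν
  have hset : {w | ∃ Y, v + A.mulVec Y = w} = (fun w => -v + w) ⁻¹' (H : Set (Fin 4 → ℤ_[p])) := by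
    rw [hHset]
    ext w
    simp [eq_neg_add_iff_add_eq]
  rw [hset]
  refine ⟨measurable_const_add (-v) hmeas, ?_⟩
  rw [measure_preimage_add]
  rw [hidx, measure_univ] at hm
  push_cast at hm
  rw [mul_comm] at hm
  exact ENNReal.eq_inv_of_mul_eq_one_left hm

theorem pn_det {p : ℕ} [hp : Fact p.Prime] (n : ℕ) (A : Matrix (Fin 4) (Fin 4) ℤ_[p])
    (hA : A.det ≠ 0) : ((p : ℤ_[p]) ^ n • A).det ≠ 0 ∧
      ((p : ℤ_[p]) ^ n • A).det.valuation = 4 * n + A.det.valuation := by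
  rw [Matrix.det_smul, Fintype.card_fin, ← pow_mul]
  have hp0 : (p : ℤ_[p]) ≠ 0 := by exact_mod_cast hp.out.ne_zero
  exact ⟨mul_ne_zero (pow_ne_zero _ hp0) hA,
    by rw [PadicInt.valuation_p_pow_mul _ _ hA, mul_comm n]⟩

theorem card_GL_measure {p : ℕ} [hp : Fact p.Prime] [MeasurableSpace (Fin 4 → ℤ_[p])]
    [BorelSpace (Fin 4 → ℤ_[p])] (ν : Measure (Fin 4 → ℤ_[p])) [ν.IsAddLeftInvariant]
    [IsProbabilityMeasure ν] {n : ℕ} (hn : n ≠ 0) :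
    ν {X | IsUnit (X 0 * X 3 - X 1 * X 2)} =
      Nat.card (Matrix.GeneralLinearGroup (Fin 2) (ZMod (p ^ n))) * ((p : ENNReal) ^ (4 * n))⁻¹ := by
  have : NeZero (p ^ n) := ⟨pow_ne_zero _ hp.out.ne_zero⟩
  let F : Matrix.GeneralLinearGroup (Fin 2) (ZMod (p ^ n)) → Set (Fin 4 → ℤ_[p]) := fun g =>
    {X | PadicInt.toZModPow n (X 0) = g 0 0 ∧ PadicInt.toZModPow n (X 1) = g 0 1 ∧
      PadicInt.toZModPow n (X 2) = g 1 0 ∧ PadicInt.toZModPow n (X 3) = g 1 1}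
  have hU : {X : Fin 4 → ℤ_[p] | IsUnit (X 0 * X 3 - X 1 * X 2)} = ⋃ g, F g := by
    ext X
    simp only [Set.mem_ofPred_eq, Set.mem_iUnion, F]
    constructor
    · intro h
      obtain ⟨g, hg⟩ := exists_GL_of_unit !![X 0, X 1; X 2, X 3]
        (by rw [Matrix.det_fin_two_of]; exact h)
      refine ⟨redGL p n g, ?_, ?_, ?_, ?_⟩ <;> rw [redGL_apply, hg] <;> simp
    · rintro ⟨g, h0, h1, h2, h3⟩
      apply isUnit_of_toZModPow hn
      rw [map_sub, map_mul, map_mul, h0, h1, h2, h3, ← Matrix.det_fin_two]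
      exact (Matrix.isUnit_iff_isUnit_det _).1 g.isUnit
  have hF : ∀ g, MeasurableSet (F g) ∧ ν (F g) = ((p : ENNReal) ^ (4 * n))⁻¹ := by
    intro g
    obtain ⟨h, rfl⟩ := redGL_surjective (p := p) hn g
    have h1 := pn_det (p := p) n 1 (by simp)
    have h2 := coset_measure ν ((p : ℤ_[p]) ^ n • (1 : Matrix (Fin 4) (Fin 4) ℤ_[p])) h1.1
      ![h 0 0, h 0 1, h 1 0, h 1 1]
    have hset : {w | ∃ Y, ![h 0 0, h 0 1, h 1 0, h 1 1] +
        ((p : ℤ_[p]) ^ n • (1 : Matrix (Fin 4) (Fin 4) ℤ_[p])).mulVec Y = w} = F (redGL p n h) := by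
      ext w
      simp only [Set.mem_ofPred_eq, F, redGL_apply, toZModPow_eq_iff]
      constructor
      · rintro ⟨Y, rfl⟩
        refine ⟨⟨Y 0, ?_⟩, ⟨Y 1, ?_⟩, ⟨Y 2, ?_⟩, ⟨Y 3, ?_⟩⟩ <;> simp [Matrix.smul_mulVec]
      · rintro ⟨⟨a, ha⟩, ⟨b, hb⟩, ⟨c, hc⟩, ⟨d, hd⟩⟩
        refine ⟨![a, b, c, d], ?_⟩
        ext i
        fin_cases i <;> simp [Matrix.smul_mulVec, *]
    rw [hset, h1.2] at h2
    simpa using h2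
  have hdisj : Pairwise (Function.onFun Disjoint F) := by
    intro g h hgh
    rw [Function.onFun, Set.disjoint_left]
    rintro X ⟨h0, h1, h2, h3⟩ ⟨k0, k1, k2, k3⟩
    apply hgh
    ext i j
    fin_cases i <;> fin_cases j <;> simp [← h0, ← h1, ← h2, ← h3, ← k0, ← k1, ← k2, ← k3]
  rw [hU, measure_iUnion hdisj fun g => (hF g).1]
  simp only [fun g => (hF g).2]
  rw [tsum_fintype, Finset.sum_const, nsmul_eq_mul, Finset.card_univ, Nat.card_eq_fintype_card]

theorem card_GL_real {p : ℕ} [hp : Fact p.Prime] [MeasurableSpace (Fin 4 → ℤ_[p])]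
    [BorelSpace (Fin 4 → ℤ_[p])] (ν : Measure (Fin 4 → ℤ_[p])) [ν.IsAddLeftInvariant]
    [IsProbabilityMeasure ν] {n : ℕ} (hn : n ≠ 0) :
    (Nat.card (Matrix.GeneralLinearGroup (Fin 2) (ZMod (p ^ n))) : ℝ) =
      (1 - (p : ℝ)⁻¹) * (1 - ((p : ℝ) ^ 2)⁻¹) * (p : ℝ) ^ (4 * n) := by
  have h := (card_GL_measure ν hn).symm.trans (card_GL_measure ν (n := 1) one_ne_zero)
  have h' := congrArg ENNReal.toReal h
  simp only [ENNReal.toReal_mul, ENNReal.toReal_natCast, ENNReal.toReal_inv, ENNReal.toReal_pow] at h'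
  have : Fact (p ^ 1).Prime := by simpa using hp
  rw [Matrix.card_GL_field, ZMod.card] at h'
  have hp0 : (p : ℝ) ≠ 0 := by exact_mod_cast hp.out.ne_zero
  have hp1 : 1 ≤ p := hp.out.one_lt.le
  rw [mul_inv_eq_iff_eq_mul₀ (pow_ne_zero _ hp0)] at h'
  rw [h']
  simp only [Fin.prod_univ_two, pow_one, Fin.val_zero, Fin.val_one, pow_zero, mul_one]
  rw [Nat.cast_mul, Nat.cast_sub (Nat.one_le_pow _ _ hp1), Nat.cast_sub (by nlinarith)]
  push_cast
  field_simp

theorem orbit_measure {p : ℕ} [hp : Fact p.Prime] [MeasurableSpace (Fin 4 → ℤ_[p])]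
    [BorelSpace (Fin 4 → ℤ_[p])] (ν : Measure (Fin 4 → ℤ_[p])) [ν.IsAddLeftInvariant]
    [IsProbabilityMeasure ν] (v : Fin 4 → ℤ_[p]) (b : ℕ)
    (hv : disc3 (v 0) (v 1) (v 2) (v 3) ≠ 0)
    (hb : (disc3 (v 0) (v 1) (v 2) (v 3)).valuation = b) :
    {g : Matrix.GeneralLinearGroup (Fin 2) ℤ_[p] | cubicAct g v = v}.Finite ∧
    MeasurableSet {w | ∃ g, cubicAct g v = w} ∧
    ν.real {w | ∃ g, cubicAct g v = w} = (1 - (p : ℝ)⁻¹) * (1 - ((p : ℝ) ^ 2)⁻¹) *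
      ((p : ℝ) ^ b)⁻¹ *
      (1 / ({g : Matrix.GeneralLinearGroup (Fin 2) ℤ_[p] | cubicAct g v = v}.ncard : ℝ)) := by
  classical
  have : NeZero (p ^ (b + 1)) := ⟨pow_ne_zero _ hp.out.ne_zero⟩
  set St := {g : Matrix.GeneralLinearGroup (Fin 2) ℤ_[p] | cubicAct g v = v} with hSt
  set O := {w | ∃ g, cubicAct g v = w} with hO
  have hinv : ∀ g w, cubicAct g v = w → cubicAct g⁻¹ w = v := by
    rintro g w rfl
    rw [← cubicAct_mul, inv_mul_cancel, cubicAct_one]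
  have hinj : ∀ g0, Set.InjOn (fun s => redGL p (b + 1) (g0 * s)) St := by
    intro g0 s hs t ht hst
    simp only [map_mul, mul_right_inj] at hst
    have h1 : redGL p (b + 1) (s⁻¹ * t) = 1 := by rw [map_mul, map_inv, hst, inv_mul_cancel]
    have h2 := cubic_stab_inj v b hv hb _ h1 (by
      rw [cubicAct_mul, show cubicAct t v = v from ht]; exact hinv s v hs)
    exact inv_mul_eq_one.1 h2
  have hfin : St.Finite := Set.Finite.of_injOn (t := Set.univ)
    (fun _ _ => Set.mem_univ _) (hinj 1) Set.finite_univ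
  let B : Matrix.GeneralLinearGroup (Fin 2) (ZMod (p ^ (b + 1))) → Set (Fin 4 → ℤ_[p]) := fun k =>
    {w | ∃ g, redGL p (b + 1) g = k ∧ cubicAct g v = w}
  have hB : ∀ k, MeasurableSet (B k) ∧ ν (B k) = ((p : ENNReal) ^ (4 * (b + 1) + b))⁻¹ := by
    intro k
    obtain ⟨g0, rfl⟩ := redGL_surjective (p := p) (Nat.succ_ne_zero b) k
    set u := cubicAct g0 v with hu
    have hdu : IsUnit (Matrix.det (g0 : Matrix (Fin 2) (Fin 2) ℤ_[p]) ^ 2) :=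
      ((Matrix.isUnit_iff_isUnit_det _).1 g0.isUnit).pow 2
    have hdisc := disc3_cubicAct g0 v
    rw [← hu] at hdisc
    have hu0 : disc3 (u 0) (u 1) (u 2) (u 3) ≠ 0 := by
      rw [hdisc]; exact mul_ne_zero hdu.ne_zero hv
    have hub : (disc3 (u 0) (u 1) (u 2) (u 3)).valuation = b := by
      obtain ⟨c, hc⟩ := hdu
      rw [hdisc, ← hc, PadicInt.valuation_mul c.ne_zero hv, padic_valuation_unit, hb, zero_add]
    have hset : B (redGL p (b + 1) g0) =
        {w | ∃ Y, u + ((p : ℤ_[p]) ^ (b + 1) • cubicL u).mulVec Y = w} := by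
      ext w
      simp only [Matrix.smul_mulVec, Set.mem_ofPred_eq, B]
      rw [← cubic_ball u b hu0 hub]
      constructor
      · rintro ⟨g, hg, rfl⟩
        refine ⟨g * g0⁻¹, by rw [map_mul, hg, map_inv, mul_inv_cancel], ?_⟩
        rw [hu, ← cubicAct_mul, inv_mul_cancel_right]
      · rintro ⟨h, hh, rfl⟩
        exact ⟨h * g0, by rw [map_mul, hh, one_mul], by rw [cubicAct_mul]⟩
    have h1 := pn_det (p := p) (b + 1) (cubicL u) (by rw [det_cubicL]; exact hu0)
    have h2 := coset_measure ν _ h1.1 u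
    rwa [h1.2, det_cubicL, hub, ← hset] at h2
  have hOB : O = ⋃ k, B k := by
    ext w
    simp only [O, B, Set.mem_ofPred_eq, Set.mem_iUnion]
    exact ⟨fun ⟨g, hg⟩ => ⟨_, g, rfl, hg⟩, fun ⟨k, g, _, hg⟩ => ⟨g, hg⟩⟩
  have hOm : MeasurableSet O := by rw [hOB]; exact MeasurableSet.iUnion fun k => (hB k).1
  refine ⟨hfin, hOm, ?_⟩
  have hpt : ∀ w, ∑ k, (B k).indicator (1 : (Fin 4 → ℤ_[p]) → ENNReal) w =
      (St.ncard : ENNReal) * O.indicator (1 : (Fin 4 → ℤ_[p]) → ENNReal) w := by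
    intro w
    by_cases hw : w ∈ O
    · obtain ⟨g0, rfl⟩ := hw
      have : cubicAct g0 v ∈ O := ⟨g0, rfl⟩
      rw [Set.indicator_of_mem this, Pi.one_apply, mul_one, ← Set.ncard_image_of_injOn (hinj g0)]
      simp only [Set.indicator_apply, Pi.one_apply]
      rw [Finset.sum_boole, ← Set.ncard_coe_finset]
      congr 2
      ext k
      simp only [Finset.coe_filter, Finset.mem_univ, true_and, Set.mem_ofPred_eq, Set.mem_image, B, St]
      constructor
      · rintro ⟨g, rfl, hg⟩
        refine ⟨g0⁻¹ * g, ?_, by rw [mul_inv_cancel_left]⟩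
        rw [cubicAct_mul, hg]; exact hinv g0 _ rfl
      · rintro ⟨s, hs, rfl⟩
        exact ⟨_, rfl, by rw [cubicAct_mul, hs]⟩
    · rw [Set.indicator_of_notMem hw, mul_zero]
      refine Finset.sum_eq_zero fun k _ => Set.indicator_of_notMem (fun hk => hw ?_) _
      rw [hOB]; exact Set.mem_iUnion.2 ⟨k, hk⟩
  have hIntg := lintegral_congr (μ := ν) hpt
  rw [lintegral_finsetSum _ fun k _ => measurable_one.indicator (hB k).1,
    lintegral_const_mul _ (measurable_one.indicator hOm), lintegral_indicator_one hOm] at hIntg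
  simp only [fun k => lintegral_indicator_one (μ := ν) (hB k).1, fun k => (hB k).2] at hIntg
  rw [Finset.sum_const, nsmul_eq_mul, Finset.card_univ, ← Nat.card_eq_fintype_card] at hIntg
  have h' := congrArg ENNReal.toReal hIntg
  simp only [ENNReal.toReal_mul, ENNReal.toReal_natCast, ENNReal.toReal_inv, ENNReal.toReal_pow] at h'
  rw [card_GL_real ν (Nat.succ_ne_zero b)] at h'
  have hp0 : (p : ℝ) ≠ 0 := by exact_mod_cast hp.out.ne_zero
  have hcard : (St.ncard : ℝ) ≠ 0 := by
    have : 0 < St.ncard := (Set.ncard_pos hfin).2 ⟨1, cubicAct_one v⟩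
    exact_mod_cast this.ne'
  rw [mul_one_div, eq_div_iff hcard, mul_comm, Measure.real, ← h', pow_add, mul_inv, ← mul_assoc,
    mul_assoc _ ((p : ℝ) ^ (4 * (b + 1))), mul_inv_cancel₀ (pow_ne_zero _ hp0), mul_one]

theorem cubic_same_orbit {p : ℕ} [hp : Fact p.Prime] (v w : Fin 4 → ℤ_[p]) (b : ℕ)
    (hv : disc3 (v 0) (v 1) (v 2) (v 3) ≠ 0)
    (hb : (disc3 (v 0) (v 1) (v 2) (v 3)).valuation = b)
    (h : ∀ i, PadicInt.toZModPow (2 * b + 2) (w i) = PadicInt.toZModPow (2 * b + 2) (v i)) :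
    ∃ g, cubicAct g v = w := by
  simp only [toZModPow_eq_iff] at h
  choose Z hZ using h
  obtain ⟨c, hc⟩ := exists_unit_pow _ hv
  rw [hb, ← det_cubicL] at hc
  obtain ⟨g, -, hg⟩ := (cubic_ball v b hv hb w).2
    ⟨(p * c : ℤ_[p]) • (cubicL v).adjugate.mulVec Z, by
      rw [Matrix.mulVec_smul, Matrix.mulVec_mulVec,
        Matrix.mul_adjugate, Matrix.smul_mulVec, Matrix.one_mulVec, smul_smul (p * c : ℤ_[p]),
        mul_comm _ (cubicL v).det, ← hc]
      ext i
      simp only [Pi.add_apply, Pi.smul_apply, smul_eq_mul]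
      rw [hZ i]
      ring⟩
  exact ⟨g, hg⟩

theorem exists_weighted_count {p : ℕ} [hp : Fact p.Prime] [MeasurableSpace (Fin 4 → ℤ_[p])]
    [BorelSpace (Fin 4 → ℤ_[p])] (ν : Measure (Fin 4 → ℤ_[p])) [ν.IsAddLeftInvariant]
    [IsProbabilityMeasure ν] (b : ℕ) (S : Set (Fin 4 → ℤ_[p]))
    (hS : S = {v : Fin 4 → ℤ_[p] | disc3 (v 0) (v 1) (v 2) (v 3) ≠ 0 ∧
          (disc3 (v 0) (v 1) (v 2) (v 3)).valuation = (b : ℤ)}) :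
    ∃ N : ℝ, IsWeightedGL2OrbitCount S N ∧ MeasurableSet S ∧
      ν.real S = (1 - (p : ℝ)⁻¹) * (1 - ((p : ℝ) ^ 2)⁻¹) * ((p : ℝ) ^ b)⁻¹ * N := by
  classical
  have : NeZero (p ^ (2 * b + 2)) := ⟨pow_ne_zero _ hp.out.ne_zero⟩
  have hmem : ∀ v, v ∈ S ↔ disc3 (v 0) (v 1) (v 2) (v 3) ≠ 0 ∧
      (disc3 (v 0) (v 1) (v 2) (v 3)).valuation = b := by
    intro v; rw [hS]; simp
  have hstable : ∀ v ∈ S, ∀ g, cubicAct g v ∈ S := by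
    intro v hv g
    rw [hmem] at hv ⊢
    have hdu : IsUnit (Matrix.det (g : Matrix (Fin 2) (Fin 2) ℤ_[p]) ^ 2) :=
      ((Matrix.isUnit_iff_isUnit_det _).1 g.isUnit).pow 2
    rw [disc3_cubicAct]
    refine ⟨mul_ne_zero hdu.ne_zero hv.1, ?_⟩
    obtain ⟨c, hc⟩ := hdu
    rw [← hc, PadicInt.valuation_mul c.ne_zero hv.1, padic_valuation_unit, hv.2, zero_add]
  let r : Setoid S :=
    { r := fun v w => ∃ g, cubicAct g v.1 = w.1
      iseqv :=
        { refl := fun v => ⟨1, cubicAct_one _⟩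
          symm := by
            rintro v w ⟨g, hg⟩
            exact ⟨g⁻¹, by rw [← hg, ← cubicAct_mul, inv_mul_cancel, cubicAct_one]⟩
          trans := by
            rintro u v w ⟨g, hg⟩ ⟨h, hh⟩
            exact ⟨h * g, by rw [cubicAct_mul, hg, hh]⟩ } }
  have hfin : Finite (Quotient r) := by
    refine Finite.of_injective
      (fun q : Quotient r => fun i => PadicInt.toZModPow (2 * b + 2) (q.out.1 i)) ?_
    intro q q' hqq
    have hm := (hmem _).1 q.out.2
    have h1 : ∃ g, cubicAct g q.out.1 = q'.out.1 :=
      cubic_same_orbit _ _ b hm.1 hm.2 fun i => (congrFun hqq i).symm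
    have h2 : (⟦q.out⟧ : Quotient r) = ⟦q'.out⟧ := Quotient.sound h1
    rwa [Quotient.out_eq, Quotient.out_eq] at h2
  let e := Finite.equivFin (Quotient r)
  let reps : Fin (Nat.card (Quotient r)) → (Fin 4 → ℤ_[p]) := fun i => (e.symm i).out.1
  have hreps : ∀ i, reps i ∈ S := fun i => (e.symm i).out.2
  have huniq : ∀ i j, (∃ g, cubicAct g (reps i) = reps j) → i = j := by
    intro i j h
    have h2 : (⟦(e.symm i).out⟧ : Quotient r) = ⟦(e.symm j).out⟧ := Quotient.sound h
    rw [Quotient.out_eq, Quotient.out_eq] at h2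
    exact e.symm.injective h2
  have hcov : ∀ v ∈ S, ∃ i, ∃ g, cubicAct g (reps i) = v := by
    intro v hv
    refine ⟨e ⟦⟨v, hv⟩⟧, ?_⟩
    have h2 : (⟦(e.symm (e ⟦⟨v, hv⟩⟧)).out⟧ : Quotient r) = ⟦⟨v, hv⟩⟧ := by
      rw [Quotient.out_eq, Equiv.symm_apply_apply]
    exact Quotient.exact h2
  have horb := fun i => orbit_measure ν (reps i) b ((hmem _).1 (hreps i)).1 ((hmem _).1 (hreps i)).2
  have hSU : S = ⋃ i, {w | ∃ g, cubicAct g (reps i) = w} := by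
    ext v
    simp only [Set.mem_iUnion, Set.mem_ofPred_eq]
    constructor
    · exact hcov v
    · rintro ⟨i, g, rfl⟩
      exact hstable _ (hreps i) g
  refine ⟨_, ⟨_, reps, hreps, huniq, hcov, fun i => (horb i).1, rfl⟩, ?_, ?_⟩
  · rw [hSU]; exact MeasurableSet.iUnion fun i => (horb i).2.1
  · rw [Finset.mul_sum]
    simp only [← fun i => (horb i).2.2]
    have hνS : ν.real S = ν.real (⋃ i, {w | ∃ g, cubicAct g (reps i) = w}) := congrArg _ hSU
    rw [hνS, measureReal_def, measure_iUnion _ fun i => (horb i).2.1, tsum_fintype,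
      ENNReal.toReal_sum (fun i _ => measure_ne_top _ _)]
    · rfl
    · intro i j hij
      rw [Function.onFun, Set.disjoint_left]
      rintro w ⟨g, hg⟩ ⟨h, hh⟩
      refine hij (huniq i j ⟨h⁻¹ * g, ?_⟩)
      rw [cubicAct_mul, hg, ← hh, ← cubicAct_mul, inv_mul_cancel, cubicAct_one]

theorem null_of_fibers {p : ℕ} [hp : Fact p.Prime] [MeasurableSpace (Fin 4 → ℤ_[p])]
    [BorelSpace (Fin 4 → ℤ_[p])] (ν : Measure (Fin 4 → ℤ_[p])) [ν.IsAddLeftInvariant]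
    [IsProbabilityMeasure ν] (Z : Set (Fin 4 → ℤ_[p])) (hZ : MeasurableSet Z) (e : Fin 4 → ℤ_[p])
    (h : ∀ v, ∀ F : Finset ℕ, (∀ t ∈ F, (t : ℤ_[p]) • e + v ∈ Z) → F.card ≤ 2) : ν Z = 0 := by
  classical
  have hm : ∀ t : ℕ, MeasurableSet ((fun v => (t : ℤ_[p]) • e + v) ⁻¹' Z) := fun t =>
    measurable_const_add _ hZ
  have key : ∀ K : ℕ, K * ν Z ≤ 2 := by
    intro K
    calc K * ν Z = ∑ t ∈ Finset.range K, ν ((fun v => (t : ℤ_[p]) • e + v) ⁻¹' Z) := by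
          simp [measure_preimage_add]
      _ = ∫⁻ v, ∑ t ∈ Finset.range K, ((fun v => (t : ℤ_[p]) • e + v) ⁻¹' Z).indicator 1 v ∂ν := by
          rw [lintegral_finsetSum _ fun t _ => measurable_one.indicator (hm t)]
          exact Finset.sum_congr rfl fun t _ => (lintegral_indicator_one (hm t)).symm
      _ ≤ ∫⁻ v, 2 ∂ν := by
          refine lintegral_mono fun v => ?_
          simp only [Set.indicator_apply, Pi.one_apply]
          rw [Finset.sum_boole]
          have := h v ((Finset.range K).filter fun t => v ∈ (fun v => (t : ℤ_[p]) • e + v) ⁻¹' Z)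
            (fun t ht => (Finset.mem_filter.1 ht).2)
          exact_mod_cast this
      _ = 2 := by simp
  by_contra h0
  obtain ⟨K, hK⟩ := ENNReal.exists_nat_mul_gt h0 (ENNReal.ofNat_ne_top (n := 2))
  exact absurd hK (not_lt.2 (key K))

theorem continuous_disc3 {p : ℕ} [hp : Fact p.Prime] :
    Continuous fun v : Fin 4 → ℤ_[p] => disc3 (v 0) (v 1) (v 2) (v 3) := by
  unfold disc3; fun_prop

theorem quad_roots_card {R : Type*} [CommRing R] [IsDomain R] [CharZero R] (A B C : R) (hA : A ≠ 0)
    (F : Finset ℕ) (h : ∀ t ∈ F, A * (t : R) ^ 2 + B * t + C = 0) : F.card ≤ 2 := by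
  classical
  let P : Polynomial R := Polynomial.C A * Polynomial.X ^ 2 + Polynomial.C B * Polynomial.X
    + Polynomial.C C
  have hdeg : P.natDegree = 2 := Polynomial.natDegree_quadratic hA
  have hP : P ≠ 0 := by intro h0; rw [h0] at hdeg; simp at hdeg
  calc F.card = (F.image (fun t : ℕ => (t : R))).card :=
        (Finset.card_image_of_injective _ Nat.cast_injective).symm
    _ ≤ P.roots.toFinset.card := by
        refine Finset.card_le_card fun x hx => ?_
        obtain ⟨t, ht, rfl⟩ := Finset.mem_image.1 hx
        rw [Multiset.mem_toFinset, Polynomial.mem_roots hP, Polynomial.IsRoot.def]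
        simp [P, h t ht]
    _ ≤ P.roots.card := Multiset.toFinset_card_le _
    _ ≤ P.natDegree := Polynomial.card_roots' _
    _ = 2 := hdeg

theorem disc3_null {p : ℕ} [hp : Fact p.Prime] [MeasurableSpace (Fin 4 → ℤ_[p])]
    [BorelSpace (Fin 4 → ℤ_[p])] (ν : Measure (Fin 4 → ℤ_[p])) [ν.IsAddLeftInvariant]
    [IsProbabilityMeasure ν] : ν {v | disc3 (v 0) (v 1) (v 2) (v 3) = 0} = 0 := by
  have hc1 : MeasurableSet {v : Fin 4 → ℤ_[p] | disc3 (v 0) (v 1) (v 2) (v 3) = 0} :=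
    (isClosed_eq continuous_disc3 continuous_const).measurableSet
  have hc2 : MeasurableSet {v : Fin 4 → ℤ_[p] | v 0 = 0} :=
    (isClosed_eq (continuous_apply 0) continuous_const).measurableSet
  have n1 : ν {v : Fin 4 → ℤ_[p] | v 0 = 0} = 0 := by
    refine null_of_fibers ν _ hc2 (Pi.single 0 1) fun v F h => ?_
    by_contra hF
    push Not at hF
    obtain ⟨s, hs, t, ht, hst⟩ := Finset.one_lt_card.1 (show 1 < F.card by omega)
    have h1 : (s : ℤ_[p]) + v 0 = 0 := by simpa using h s hs
    have h2 : (t : ℤ_[p]) + v 0 = 0 := by simpa using h t ht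
    exact hst (by exact_mod_cast (add_right_cancel (h1.trans h2.symm)))
  have n2 : ν ({v : Fin 4 → ℤ_[p] | disc3 (v 0) (v 1) (v 2) (v 3) = 0} \ {v | v 0 = 0}) = 0 := by
    refine null_of_fibers ν _ (hc1.diff hc2) (Pi.single 3 1) fun v F h => ?_
    rcases F.eq_empty_or_nonempty with rfl | ⟨t0, ht0⟩
    · simp
    have ha : v 0 ≠ 0 := by simpa using (h t0 ht0).2
    refine quad_roots_card (-27 * v 0 ^ 2)
      (-4 * v 1 ^ 3 - 54 * v 0 ^ 2 * v 3 + 18 * v 0 * v 1 * v 2)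
      (disc3 (v 0) (v 1) (v 2) (v 3)) (mul_ne_zero (by norm_num) (pow_ne_zero _ ha)) F
      fun t ht => ?_
    have h1 := (h t ht).1
    simp [disc3] at h1
    rw [← h1]
    simp [disc3]; ring
  refine measure_mono_null (t := {v : Fin 4 → ℤ_[p] | v 0 = 0} ∪
    ({v : Fin 4 → ℤ_[p] | disc3 (v 0) (v 1) (v 2) (v 3) = 0} \ {v | v 0 = 0})) ?_
    (measure_union_null n1 n2)
  rw [Set.union_sdiff_self]
  exact Set.subset_union_right

theorem igusa_integral {p : ℕ} [hp : Fact p.Prime] [MeasurableSpace (Fin 4 → ℤ_[p])]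
    [BorelSpace (Fin 4 → ℤ_[p])] (ν : Measure (Fin 4 → ℤ_[p])) [ν.IsAddLeftInvariant]
    [IsProbabilityMeasure ν] (s : ℝ) (hs : 1 ≤ s) :
    ∃ N : ℕ → ℝ,
      (∀ b : ℕ, IsWeightedGL2OrbitCount
        {v : Fin 4 → ℤ_[p] | disc3 (v 0) (v 1) (v 2) (v 3) ≠ 0 ∧
          (disc3 (v 0) (v 1) (v 2) (v 3)).valuation = (b : ℤ)} (N b)) ∧
      HasSum (fun b : ℕ => (1 - (p : ℝ)⁻¹) * (1 - ((p : ℝ) ^ 2)⁻¹) *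
        (N b * (p : ℝ) ^ (-(b : ℝ) * s)))
        (∫ v : Fin 4 → ℤ_[p], ‖disc3 (v 0) (v 1) (v 2) (v 3)‖ ^ (s - 1) ∂ν) := by
  let S : ℕ → Set (Fin 4 → ℤ_[p]) := fun b =>
    {v : Fin 4 → ℤ_[p] | disc3 (v 0) (v 1) (v 2) (v 3) ≠ 0 ∧
          (disc3 (v 0) (v 1) (v 2) (v 3)).valuation = (b : ℤ)}
  choose N hN hm hν using fun b => exists_weighted_count ν b (S b) rfl
  refine ⟨N, hN, ?_⟩
  have hcont : Continuous fun v : Fin 4 → ℤ_[p] => ‖disc3 (v 0) (v 1) (v 2) (v 3)‖ ^ (s - 1) :=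
    continuous_disc3.norm.rpow_const fun _ => Or.inr (by linarith)
  have hIntg : Integrable (fun v : Fin 4 → ℤ_[p] => ‖disc3 (v 0) (v 1) (v 2) (v 3)‖ ^ (s - 1)) ν := by
    rw [← integrableOn_univ]
    exact hcont.continuousOn.integrableOn_compact isCompact_univ
  have hsum := hasSum_integral_iUnion (μ := ν) hm (by
    intro i j hij
    rw [Function.onFun, Set.disjoint_left]
    rintro v ⟨-, h1⟩ ⟨-, h2⟩
    exact hij (by exact_mod_cast h1.symm.trans h2)) hIntg.integrableOn
  have hU : ν.restrict (⋃ b, S b) = ν := by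
    refine Measure.restrict_eq_self_of_ae_mem ?_
    have h0 := disc3_null ν
    rw [measure_eq_zero_iff_ae_notMem] at h0
    filter_upwards [h0] with v hv
    exact Set.mem_iUnion.2 ⟨(disc3 (v 0) (v 1) (v 2) (v 3)).valuation, hv, rfl⟩
  rw [hU] at hsum
  have heq : (fun b : ℕ => (1 - (p : ℝ)⁻¹) * (1 - ((p : ℝ) ^ 2)⁻¹) *
        (N b * (p : ℝ) ^ (-(b : ℝ) * s))) =
      fun b => ∫ v in S b, ‖disc3 (v 0) (v 1) (v 2) (v 3)‖ ^ (s - 1) ∂ν := by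
    funext b
    have hpp : (0 : ℝ) < p := by exact_mod_cast hp.out.pos
    have hval : ∀ v ∈ S b, ‖disc3 (v 0) (v 1) (v 2) (v 3)‖ ^ (s - 1) = (p : ℝ) ^ (-(b : ℝ) * (s - 1)) := by
      rintro v ⟨h0, h1⟩
      rw [PadicInt.norm_eq_zpow_neg_valuation h0, h1, ← Real.rpow_intCast, ← Real.rpow_mul hpp.le]
      push_cast; rfl
    rw [setIntegral_congr_fun (hm b) hval, setIntegral_const, hν, smul_eq_mul]
    have : (p : ℝ) ^ (-(b : ℝ) * s) = ((p : ℝ) ^ b)⁻¹ * (p : ℝ) ^ (-(b : ℝ) * (s - 1)) := by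
      rw [← Real.rpow_natCast, ← Real.rpow_neg hpp.le, ← Real.rpow_add hpp]
      congr 1; ring
    rw [this]; ring
  rw [heq]
  exact hsum

/-- **The orbit-counting interpretation of Igusa's zeta function for binary cubic forms.**
Let `p ∉ {2,3}` be a prime, `s ≥ 1` real, and `μ` an additive Haar (translation-invariant
Borel) measure on `ℚ_p⁴` with `μ(ℤ_p⁴) = 1`.  For each `b`, the set of `v ∈ ℤ_p⁴` with
`v_p(Δ₃(v)) = b` is a finite union of orbits of the twisted `GL₂(ℤ_p)`-action, each with
finite stabilizer; the weighted counts `N b` satisfy: the series `Σ_b N_b p^{−bs}`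
converges and `(1 − p⁻¹)(1 − p⁻²) · Σ_b N_b p^{−bs} = ∫_{ℤ_p⁴} |Δ₃(v)|^{s−1} dμ(v)`. -/
theorem igusa_zeta_eq_weighted_orbit_count_cubic (p : ℕ) [Fact p.Prime]
    (hp2 : p ≠ 2) (hp3 : p ≠ 3) (s : ℝ) (hs : 1 ≤ s)
    [MeasurableSpace (Fin 4 → ℚ_[p])] [BorelSpace (Fin 4 → ℚ_[p])]
    (μ : Measure (Fin 4 → ℚ_[p])) [μ.IsAddLeftInvariant]
    (hμ : μ {v | ∀ i, ‖v i‖ ≤ 1} = 1) :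
    ∃ N : ℕ → ℝ,
      (∀ b : ℕ, IsWeightedGL2OrbitCount
        {v : Fin 4 → ℤ_[p] | disc3 (v 0) (v 1) (v 2) (v 3) ≠ 0 ∧
          (disc3 (v 0) (v 1) (v 2) (v 3)).valuation = (b : ℤ)} (N b)) ∧
      Summable (fun b : ℕ => N b * (p : ℝ) ^ (-(b : ℝ) * s)) ∧
      (1 - (p : ℝ)⁻¹) * (1 - ((p : ℝ) ^ 2)⁻¹) *
          ∑' b : ℕ, N b * (p : ℝ) ^ (-(b : ℝ) * s) =
        ∫ v in {v : Fin 4 → ℚ_[p] | ∀ i, ‖v i‖ ≤ 1},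
          ‖disc3 (v 0) (v 1) (v 2) (v 3)‖ ^ (s - 1) ∂μ := by
  have hp : Fact p.Prime := inferInstance
  letI : MeasurableSpace (Fin 4 → ℤ_[p]) := borel _
  haveI : BorelSpace (Fin 4 → ℤ_[p]) := ⟨rfl⟩
  let ι : (Fin 4 → ℤ_[p]) → (Fin 4 → ℚ_[p]) := fun v i => (v i : ℚ_[p])
  have hιc : Continuous ι :=
    continuous_pi fun i => continuous_subtype_val.comp (continuous_apply i)
  have hιi : Function.Injective ι := fun v w h => funext fun i => Subtype.ext (congrFun h i)
  have hιe : MeasurableEmbedding ι := (hιc.isClosedEmbedding hιi).measurableEmbedding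
  have hr : Set.range ι = {v | ∀ i, ‖v i‖ ≤ 1} := by
    ext v
    constructor
    · rintro ⟨w, rfl⟩ i
      exact (w i).2
    · intro h
      exact ⟨fun i => ⟨v i, h i⟩, rfl⟩
  let ν : Measure (Fin 4 → ℤ_[p]) := μ.comap ι
  have hprob : IsProbabilityMeasure ν :=
    ⟨by rw [hιe.comap_apply, Set.image_univ, hr, hμ]⟩
  have hinv : ν.IsAddLeftInvariant := by
    refine ⟨fun v => ?_⟩
    ext A hA
    rw [Measure.map_apply (measurable_const_add v) hA, hιe.comap_apply, hιe.comap_apply,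
      ← measure_preimage_add μ (ι v) (ι '' A)]
    congr 1
    ext w
    simp only [Set.mem_image, Set.mem_preimage]
    constructor
    · rintro ⟨x, hx, rfl⟩
      exact ⟨v + x, hx, by ext i; simp [ι]⟩
    · rintro ⟨x, hx, hxw⟩
      refine ⟨x - v, by simpa using hx, ?_⟩
      ext i
      have := congrFun hxw i
      simp only [ι, Pi.add_apply] at this
      simp [ι, this]
  obtain ⟨N, hN, hsum⟩ := igusa_integral ν s hs
  have hp1 : (1 : ℝ) < p := by exact_mod_cast hp.out.one_lt
  have h1 : (1 - (p : ℝ)⁻¹) ≠ 0 := (sub_pos.2 (inv_lt_one_of_one_lt₀ hp1)).ne'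
  have h2 : (1 - ((p : ℝ) ^ 2)⁻¹) ≠ 0 :=
    (sub_pos.2 (inv_lt_one_of_one_lt₀ (one_lt_pow₀ hp1 two_ne_zero))).ne'
  refine ⟨N, hN, (summable_mul_left_iff (mul_ne_zero h1 h2)).1 hsum.summable, ?_⟩
  rw [← tsum_mul_left, hsum.tsum_eq, ← hr, ← hιe.map_comap, hιe.integral_map]
  refine integral_congr_ae (Filter.Eventually.of_forall fun v => ?_)
  have hd : disc3 (ι v 0) (ι v 1) (ι v 2) (ι v 3) =
      ((disc3 (v 0) (v 1) (v 2) (v 3) : ℤ_[p]) : ℚ_[p]) := by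
    simp only [disc3, ι]; push_cast; rfl
  simp only [hd, PadicInt.norm_def]
end

section
/- Let p be a prime with p ∉ {2,3}, let s be a real number with s ≥ 1, and set t = p^{−s}. Let μ be a translation-invariant (additive Haar) Borel measure on ℚ_p⁴ normalized so that μ(ℤ_p⁴) = 1. Then ∫_{ℤ_p⁴} |Δ₃(v)|_p^{s−1} dμ(v) = (1 − p⁻¹)(1 − p⁻²) · (1 + t + t² + t³ + t⁴) / ((1 − t²)(1 − p·t⁶)), where |·|_p is the p-adic absolute value. -/
open MeasureTheory

open scoped ENNReal

namespace IgusaCubic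

lemma haar_uniq {G : Type*} [AddGroup G] [TopologicalSpace G] [IsTopologicalAddGroup G]
    [CompactSpace G] [MeasurableSpace G] [BorelSpace G] (ρ ν : Measure G)
    [ρ.IsAddLeftInvariant] [ν.IsAddLeftInvariant] [IsProbabilityMeasure ρ]
    [IsProbabilityMeasure ν] : ρ = ν := by
  have h1 : ρ.IsAddHaarMeasure :=
    Measure.isAddHaarMeasure_of_isCompact_nonempty_interior ρ Set.univ isCompact_univ
      (by simp) (by simp) (by simp)
  have h2 : ν.IsAddHaarMeasure :=
    Measure.isAddHaarMeasure_of_isCompact_nonempty_interior ν Set.univ isCompact_univ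
      (by simp) (by simp) (by simp)
  exact Measure.isAddHaarMeasure_eq_of_isProbabilityMeasure ρ ν

set_option linter.overlappingInstances false
set_option linter.unusedSectionVars false

variable {p : ℕ} [Fact p.Prime]

/-- The weight `|z|^σ`. -/
noncomputable def wt (σ : ℝ) (z : ℤ_[p]) : ℝ≥0∞ := ENNReal.ofReal (‖z‖ ^ σ)

/-- The inverse of `p`. -/
noncomputable def mP (p : ℕ) : ℝ≥0∞ := (p : ℝ≥0∞)⁻¹

/-- The weight of `p`. -/
noncomputable def mU (p : ℕ) [Fact p.Prime] (σ : ℝ) : ℝ≥0∞ := wt σ (p : ℤ_[p])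

lemma wt_mul (σ : ℝ) (x y : ℤ_[p]) : wt σ (x * y) = wt σ x * wt σ y := by
  unfold wt
  rw [norm_mul, Real.mul_rpow (norm_nonneg _) (norm_nonneg _),
    ENNReal.ofReal_mul (Real.rpow_nonneg (norm_nonneg _) _)]

lemma wt_of_norm (σ : ℝ) {x : ℤ_[p]} (h : ‖x‖ = 1) : wt σ x = 1 := by
  simp [wt, h]

lemma wt_p_mul (σ : ℝ) (x : ℤ_[p]) : wt σ ((p : ℤ_[p]) * x) = mU p σ * wt σ x := wt_mul _ _ _

lemma wt_le_one {σ : ℝ} (hσ : 0 ≤ σ) (x : ℤ_[p]) : wt σ x ≤ 1 := by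
  unfold wt
  rw [ENNReal.ofReal_le_one]
  exact Real.rpow_le_one (norm_nonneg _) (PadicInt.norm_le_one x) hσ

lemma wt_cont {σ : ℝ} (hσ : 0 ≤ σ) : Continuous (wt σ : ℤ_[p] → ℝ≥0∞) := by
  unfold wt
  exact ENNReal.continuous_ofReal.comp (continuous_norm.rpow_const (fun _ => Or.inr hσ))

lemma norm_unit_add {x y : ℤ_[p]} (h : ‖x‖ = 1) : ‖x + p * y‖ = 1 := by
  have hy : ‖(p : ℤ_[p]) * y‖ < 1 := (PadicInt.norm_lt_one_iff_dvd _).2 (dvd_mul_right _ _)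
  rw [← h] at hy
  rw [IsUltrametricDist.norm_add_eq_max_of_norm_ne_norm hy.ne', max_eq_left hy.le, h]

lemma exists_unit {u : ℤ_[p]} (hu : ‖u‖ = 1) : ∃ v : ℤ_[p], u * v = 1 ∧ ‖v‖ = 1 := by
  obtain ⟨w, rfl⟩ := PadicInt.isUnit_iff.2 hu
  exact ⟨((w⁻¹ : ℤ_[p]ˣ) : ℤ_[p]), by simp, PadicInt.norm_units _⟩

lemma compl_units : {x : ℤ_[p] | ‖x‖ = 1}ᶜ = {x : ℤ_[p] | ‖x‖ < 1} := by
  ext x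
  exact ⟨fun h => lt_of_le_of_ne (PadicInt.norm_le_one x) h, fun h => ne_of_lt h⟩

/-- The measure of the units. -/
noncomputable def mV [MeasurableSpace ℤ_[p]] (ν : Measure ℤ_[p]) : ℝ≥0∞ := ν {x | ‖x‖ = 1}

variable [MeasurableSpace ℤ_[p]] [BorelSpace ℤ_[p]]

lemma meas_units : MeasurableSet {x : ℤ_[p] | ‖x‖ = 1} :=
  (isClosed_eq continuous_norm continuous_const).measurableSet

variable (ν : Measure ℤ_[p]) [ν.IsAddLeftInvariant] [IsProbabilityMeasure ν]

lemma lint_unit {u : ℤ_[p]} (hu : ‖u‖ = 1) (f : ℤ_[p] → ℝ≥0∞) :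
    ∫⁻ x, f (u * x) ∂ν = ∫⁻ x, f x ∂ν := by
  obtain ⟨v, huv, hv⟩ := exists_unit hu
  let e : ℤ_[p] ≃ₜ ℤ_[p] :=
    { toFun := fun x => u * x
      invFun := fun x => v * x
      left_inv := fun x => by
        change v * (u * x) = x
        linear_combination x * huv
      right_inv := fun x => by
        change u * (v * x) = x
        linear_combination x * huv
      continuous_toFun := by fun_prop
      continuous_invFun := by fun_prop }
  have hme : MeasurableEmbedding (fun x : ℤ_[p] => u * x) := e.measurableEmbedding
  have hinv : (ν.comap (AddMonoidHom.mulLeft u)).IsAddLeftInvariant :=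
    Measure.IsAddLeftInvariant.comap ν hme
  have hprob : IsProbabilityMeasure (ν.comap (AddMonoidHom.mulLeft u)) := by
    constructor
    have h2 : ν.comap (AddMonoidHom.mulLeft u) Set.univ
      = ν ((fun x => u * x) '' Set.univ) := hme.comap_apply ν _
    have hr : Set.range (fun x => u * x) = Set.univ := e.surjective.range_eq
    rw [h2, Set.image_univ, hr, measure_univ]
  have h3 := haar_uniq (ν.comap (AddMonoidHom.mulLeft u)) ν
  have h4 : ν.map (fun x => u * x) = ν := by
    have h5 := hme.map_comap ν
    change (ν.comap (AddMonoidHom.mulLeft u)).map _ = _ at h5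
    have hr : Set.range (fun x => u * x) = Set.univ := e.surjective.range_eq
    rw [h3, hr, Measure.restrict_univ] at h5
    exact h5
  conv_rhs => rw [← h4]
  rw [hme.lintegral_map]

lemma lint_add (k : ℤ_[p]) (f : ℤ_[p] → ℝ≥0∞) :
    ∫⁻ x, f (x + k) ∂ν = ∫⁻ x, f x ∂ν := by
  simp_rw [add_comm _ k]
  exact lintegral_add_left_eq_self f k

lemma meas_p : ν {x : ℤ_[p] | ‖x‖ < 1} = mP p := by
  let H : AddSubgroup ℤ_[p] := (PadicInt.toZMod (p := p)).toAddMonoidHom.ker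
  have hset : (H : Set ℤ_[p]) = {x : ℤ_[p] | ‖x‖ < 1} := by
    ext x
    have : x ∈ RingHom.ker (PadicInt.toZMod (p := p)) ↔ ‖x‖ < 1 := by
      rw [PadicInt.ker_toZMod, IsLocalRing.mem_maximalIdeal, PadicInt.mem_nonunits]
    exact this
  have hsurj : Function.Surjective (PadicInt.toZMod (p := p)).toAddMonoidHom :=
    fun z => ⟨(z.val : ℤ_[p]), by simp⟩
  have hidx : H.index = p := by
    have := AddSubgroup.index_ker (PadicInt.toZMod (p := p)).toAddMonoidHom
    rw [AddMonoidHom.range_eq_top.2 hsurj] at this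
    rw [this]; simp
  have hp0 : p ≠ 0 := (Fact.out : p.Prime).ne_zero
  have : H.FiniteIndex := ⟨by rw [hidx]; exact hp0⟩
  have hm : MeasurableSet (H : Set ℤ_[p]) := by
    rw [hset]; exact (isOpen_lt continuous_norm continuous_const).measurableSet
  have h := AddSubgroup.index_mul_measure H hm ν
  rw [hidx, hset, measure_univ] at h
  exact ENNReal.eq_inv_of_mul_eq_one_left (by rw [mul_comm]; exact h)

lemma V_add_P : mV ν + mP p = 1 := by
  rw [← meas_p ν, ← compl_units, mV, measure_add_measure_compl meas_units, measure_univ]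

lemma lint_p (f : ℤ_[p] → ℝ≥0∞) :
    ∫⁻ x in {x : ℤ_[p] | ‖x‖ < 1}, f x ∂ν = mP p * ∫⁻ x, f (p * x) ∂ν := by
  have hp0 : (p : ℤ_[p]) ≠ 0 := by exact_mod_cast (Fact.out : p.Prime).ne_zero
  have hc : Continuous (fun x : ℤ_[p] => (p : ℤ_[p]) * x) := by fun_prop
  have hme : MeasurableEmbedding (fun x : ℤ_[p] => (p : ℤ_[p]) * x) :=
    (hc.isClosedEmbedding (mul_right_injective₀ hp0)).measurableEmbedding
  have hrange : Set.range (fun x : ℤ_[p] => (p : ℤ_[p]) * x) = {x : ℤ_[p] | ‖x‖ < 1} := by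
    ext x
    rw [Set.mem_ofPred_eq, PadicInt.norm_lt_one_iff_dvd]
    exact ⟨fun ⟨y, hy⟩ => ⟨y, hy.symm⟩, fun ⟨y, hy⟩ => ⟨y, hy.symm⟩⟩
  set κ := ν.comap (AddMonoidHom.mulLeft (p : ℤ_[p])) with hκ
  have hinv : κ.IsAddLeftInvariant := Measure.IsAddLeftInvariant.comap ν hme
  have hPne : mP p ≠ 0 := by simp [mP]
  have hPtop : mP p ≠ ∞ := by simp [mP, (Fact.out : p.Prime).ne_zero]
  have hprob : IsProbabilityMeasure ((mP p)⁻¹ • κ) := by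
    constructor
    have h2 : κ Set.univ = ν ((fun x => (p : ℤ_[p]) * x) '' Set.univ) := hme.comap_apply ν _
    rw [Measure.smul_apply, h2, Set.image_univ, hrange, meas_p, smul_eq_mul]
    exact ENNReal.inv_mul_cancel hPne hPtop
  have hinv2 : ((mP p)⁻¹ • κ).IsAddLeftInvariant := inferInstance
  have h3 := haar_uniq ((mP p)⁻¹ • κ) ν
  have h4 : κ = mP p • ν := by
    rw [← h3, smul_smul, ENNReal.mul_inv_cancel hPne hPtop, one_smul]
  have h5 := hme.map_comap ν
  change κ.map _ = _ at h5
  rw [hrange] at h5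
  rw [← h5, hme.lintegral_map, h4, lintegral_smul_measure, smul_eq_mul]

lemma split (f : ℤ_[p] → ℝ≥0∞) :
    ∫⁻ x, f x ∂ν = ∫⁻ x in {x : ℤ_[p] | ‖x‖ = 1}, f x ∂ν + mP p * ∫⁻ x, f (p * x) ∂ν := by
  rw [← lint_p, ← compl_units, lintegral_add_compl _ meas_units]

lemma split_const (f : ℤ_[p] → ℝ≥0∞) (C : ℝ≥0∞) (h : ∀ x, ‖x‖ = 1 → f x = C) :
    ∫⁻ x, f x ∂ν = mV ν * C + mP p * ∫⁻ x, f (p * x) ∂ν := by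
  rw [split, setLIntegral_congr_fun meas_units (g := fun _ => C) (fun x hx => h x hx),
    setLIntegral_const, mul_comm C, mV]

/-- The integral of `|z|^σ`. -/
noncomputable def mL (σ : ℝ) : ℝ≥0∞ := ∫⁻ x, wt σ x ∂ν

lemma L_eq (σ : ℝ) : mL ν σ = mV ν + mP p * (mU p σ * mL ν σ) := by
  conv_lhs => rw [mL, split_const ν _ 1 (fun x hx => wt_of_norm σ hx)]
  have hU : mU p σ ≠ ∞ := ENNReal.ofReal_ne_top
  simp_rw [wt_p_mul]
  rw [mul_one, lintegral_const_mul' _ _ hU, mL]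

lemma lint_quad (σ : ℝ) (α β γ : ℤ_[p]) (hβ : ‖β‖ = 1) :
    ∫⁻ x, wt σ (α + β * x + (p : ℤ_[p]) * γ * x ^ 2) ∂ν = mL ν σ := by
  obtain ⟨v, huv, hv⟩ := exists_unit hβ
  have hroot : ∃ z : ℤ_[p], α + β * z + p * γ * z ^ 2 = 0 := by
    let F : Polynomial ℤ_[p] := Polynomial.C α + Polynomial.C β * Polynomial.X
      + Polynomial.C (p * γ) * Polynomial.X ^ 2
    have hF : ∀ z, Polynomial.aeval z F = α + β * z + p * γ * z ^ 2 := fun z => by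
      simp [F]
    have hF' : ∀ z, Polynomial.aeval z F.derivative = β + p * (2 * γ * z) := fun z => by
      simp [F]; ring
    have hd : ‖Polynomial.aeval (-(v * α)) F.derivative‖ = 1 := by
      rw [hF']; exact norm_unit_add hβ
    have hlt : ‖Polynomial.aeval (-(v * α)) F‖
        < ‖Polynomial.aeval (-(v * α)) F.derivative‖ ^ 2 := by
      rw [hd, hF, one_pow, PadicInt.norm_lt_one_iff_dvd]
      exact ⟨γ * (v * α) ^ 2, by linear_combination (-α) * huv⟩
    obtain ⟨z, hz, -⟩ := hensels_lemma hlt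
    exact ⟨z, by rw [← hF, hz]⟩
  obtain ⟨z, hz⟩ := hroot
  have : ∀ x, wt σ (α + β * x + (p : ℤ_[p]) * γ * x ^ 2) = wt σ (x + -z) := fun x => by
    have h1 : α + β * x + p * γ * x ^ 2 = (x + -z) * (β + p * (γ * (x + z))) := by
      linear_combination hz
    rw [h1, wt_mul, wt_of_norm σ (norm_unit_add hβ), mul_one]
  simp_rw [this]
  exact lint_add ν (-z) (wt σ)

/-- Reversing the order of a fourfold integral. -/
lemma rev4 (F : ℤ_[p] → ℤ_[p] → ℤ_[p] → ℤ_[p] → ℝ≥0∞)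
    (hF : Continuous fun q : (ℤ_[p] × ℤ_[p]) × (ℤ_[p] × ℤ_[p]) => F q.1.1 q.1.2 q.2.1 q.2.2) :
    ∫⁻ a, ∫⁻ b, ∫⁻ c, ∫⁻ d, F a b c d ∂ν ∂ν ∂ν ∂ν
      = ∫⁻ d, ∫⁻ c, ∫⁻ b, ∫⁻ a, F a b c d ∂ν ∂ν ∂ν ∂ν := by
  have hm := hF.measurable
  have h1 : ∀ a b, ∫⁻ c, ∫⁻ d, F a b c d ∂ν ∂ν
      = ∫⁻ y : ℤ_[p] × ℤ_[p], F a b y.1 y.2 ∂(ν.prod ν) := fun a b => by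
    rw [lintegral_prod]
    exact (hm.comp (measurable_const.prodMk measurable_id :
      Measurable fun y : ℤ_[p] × ℤ_[p] => ((a, b), y))).aemeasurable
  have h2 : ∀ c d, ∫⁻ b, ∫⁻ a, F a b c d ∂ν ∂ν
      = ∫⁻ x : ℤ_[p] × ℤ_[p], F x.1 x.2 c d ∂(ν.prod ν) := fun c d => by
    rw [lintegral_prod_symm]
    exact (hm.comp (measurable_id.prodMk measurable_const :
      Measurable fun x : ℤ_[p] × ℤ_[p] => (x, (c, d)))).aemeasurable
  simp_rw [h1, h2]
  have hA : Measurable fun x : ℤ_[p] × ℤ_[p] =>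
      ∫⁻ y : ℤ_[p] × ℤ_[p], F x.1 x.2 y.1 y.2 ∂(ν.prod ν) := hm.lintegral_prod_right'
  have hB : Measurable fun y : ℤ_[p] × ℤ_[p] =>
      ∫⁻ x : ℤ_[p] × ℤ_[p], F x.1 x.2 y.1 y.2 ∂(ν.prod ν) := hm.lintegral_prod_left'
  rw [← lintegral_prod (fun x : ℤ_[p] × ℤ_[p] =>
      ∫⁻ y : ℤ_[p] × ℤ_[p], F x.1 x.2 y.1 y.2 ∂(ν.prod ν)) hA.aemeasurable,
    ← lintegral_prod_symm (fun y : ℤ_[p] × ℤ_[p] =>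
      ∫⁻ x : ℤ_[p] × ℤ_[p], F x.1 x.2 y.1 y.2 ∂(ν.prod ν)) hB.aemeasurable]
  exact lintegral_lintegral_swap (f := fun x y : ℤ_[p] × ℤ_[p] => F x.1 x.2 y.1 y.2)
    hm.aemeasurable

/-- The cusp integral. -/
noncomputable def cusp [MeasurableSpace ℤ_[p]] (ν : Measure ℤ_[p]) (σ : ℝ) (α β : ℤ_[p]) : ℝ≥0∞ :=
  ∫⁻ c, ∫⁻ d, wt σ (4 * α * c ^ 3 + 27 * β * d ^ 2) ∂ν ∂ν

lemma U_ne_top (σ : ℝ) : mU p σ ≠ ∞ := ENNReal.ofReal_ne_top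

lemma P_ne_top : mP p ≠ ∞ := by simp [mP, (Fact.out : p.Prime).ne_zero]

lemma lint_const_add (C D : ℝ≥0∞) (hD : D ≠ ∞) (f : ℤ_[p] → ℝ≥0∞) :
    ∫⁻ x, (C + D * f x) ∂ν = C + D * ∫⁻ x, f x ∂ν := by
  rw [lintegral_add_left measurable_const, lintegral_const_mul' _ _ hD]
  simp

lemma cusp_pull (σ : ℝ) (α β : ℤ_[p]) :
    cusp ν σ ((p : ℤ_[p]) * α) ((p : ℤ_[p]) * β) = mU p σ * cusp ν σ α β := by
  unfold cusp
  rw [← lintegral_const_mul' _ _ (U_ne_top σ)]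
  refine lintegral_congr fun c => ?_
  rw [← lintegral_const_mul' _ _ (U_ne_top σ)]
  refine lintegral_congr fun d => ?_
  rw [← wt_p_mul]
  congr 1; ring

lemma norm_nat (n : ℕ) (h : ¬ p ∣ n) : ‖(n : ℤ_[p])‖ = 1 := by
  by_contra hne
  have hlt := lt_of_le_of_ne (PadicInt.norm_le_one _) hne
  have h2 : ‖((n : ℤ) : ℤ_[p])‖ < 1 := by exact_mod_cast hlt
  rw [PadicInt.norm_int_lt_one_iff_dvd] at h2
  exact h (by exact_mod_cast h2)

lemma not_dvd {n q k : ℕ} (hq : q.Prime) (hn : n = q ^ k) (hp : p ≠ q) : ¬ p ∣ n := by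
  intro h
  rw [hn] at h
  exact hp ((Nat.prime_dvd_prime_iff_eq Fact.out hq).1 ((Fact.out : p.Prime).dvd_of_dvd_pow h))

lemma norm4 (hp2 : p ≠ 2) : ‖(4 : ℤ_[p])‖ = 1 :=
  norm_nat 4 (not_dvd (k := 2) Nat.prime_two (by norm_num) hp2)

lemma norm27 (hp3 : p ≠ 3) : ‖(27 : ℤ_[p])‖ = 1 :=
  norm_nat 27 (not_dvd (k := 3) Nat.prime_three (by norm_num) hp3)

lemma norm3 (hp3 : p ≠ 3) : ‖(3 : ℤ_[p])‖ = 1 :=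
  norm_nat 3 (not_dvd (k := 1) Nat.prime_three (by norm_num) hp3)

lemma norm_ab {a b : ℤ_[p]} (ha : ‖a‖ = 1) (hb : ‖b‖ = 1) : ‖a * b‖ = 1 := by
  rw [norm_mul, ha, hb, one_mul]

lemma norm_an {a : ℤ_[p]} (ha : ‖a‖ = 1) (n : ℕ) : ‖a ^ n‖ = 1 := by
  rw [norm_pow, ha, one_pow]

lemma cusp_d (hp3 : p ≠ 3) (σ : ℝ) (α : ℤ_[p]) :
    cusp ν σ ((p : ℤ_[p]) * α) 1 = mV ν + mP p * cusp ν σ ((p : ℤ_[p]) * α) (p ^ 2) := by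
  unfold cusp
  rw [← lint_const_add ν _ _ P_ne_top]
  refine lintegral_congr fun c => ?_
  rw [split_const ν _ 1, mul_one]
  · congr 2
    refine lintegral_congr fun d => ?_
    congr 1; ring
  · intro d hd
    refine wt_of_norm σ ?_
    have : 4 * ((p : ℤ_[p]) * α) * c ^ 3 + 27 * 1 * d ^ 2 = 27 * d ^ 2 + p * (4 * α * c ^ 3) := by ring
    rw [this]
    exact norm_unit_add (norm_ab (norm27 hp3) (norm_an hd 2))

lemma cusp_c (hp2 : p ≠ 2) (σ : ℝ) (β : ℤ_[p]) :
    cusp ν σ 1 ((p : ℤ_[p]) * β) = mV ν + mP p * cusp ν σ (p ^ 3) ((p : ℤ_[p]) * β) := by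
  unfold cusp
  rw [split_const ν _ 1, mul_one]
  · congr 2
    refine lintegral_congr fun c => lintegral_congr fun d => ?_
    congr 1; ring
  · intro c hc
    have : ∀ d, wt σ (4 * 1 * c ^ 3 + 27 * ((p : ℤ_[p]) * β) * d ^ 2) = 1 := fun d => by
      refine wt_of_norm σ ?_
      have : 4 * 1 * c ^ 3 + 27 * ((p : ℤ_[p]) * β) * d ^ 2 = 4 * c ^ 3 + p * (27 * β * d ^ 2) := by ring
      rw [this]
      exact norm_unit_add (norm_ab (norm4 hp2) (norm_an hc 3))
    simp only [this]
    simp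

lemma K_eq (hp2 : p ≠ 2) (hp3 : p ≠ 3) (σ : ℝ) :
    cusp ν σ (p ^ 3) (p ^ 2) = mU p σ * (mU p σ * (mV ν + mP p * (mU p σ * (mV ν + mP p *
      (mU p σ * (mV ν + mP p * (mU p σ * (mU p σ * cusp ν σ 1 1)))))))) := by
  have e1 := cusp_pull ν σ 1 1
  have e2 := cusp_pull ν σ p p
  have e3 := cusp_d ν hp3 σ p
  have e4 := cusp_pull ν σ (p ^ 2) 1
  have e5 := cusp_c ν hp2 σ 1
  have e6 := cusp_pull ν σ 1 p
  have e7 := cusp_d ν hp3 σ 1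
  have e8 := cusp_pull ν σ p 1
  have e9 := cusp_pull ν σ (p ^ 2) p
  have q2 : (p : ℤ_[p]) * p = p ^ 2 := by ring
  have q3 : (p : ℤ_[p]) * p ^ 2 = p ^ 3 := by ring
  simp only [mul_one, q2, q3] at *
  rw [e9, e8, e7, e6, e5, e4, e3, e2, e1]

lemma J_eq (hp2 : p ≠ 2) (hp3 : p ≠ 3) {σ : ℝ} (hσ : 0 ≤ σ) :
    cusp ν σ 1 1 + mP p * (mV ν + mP p * (mU p σ * mL ν σ))
      = mL ν σ + mP p * (mV ν + mP p * cusp ν σ (p ^ 3) (p ^ 2)) := by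
  set A := ∫⁻ c in {x : ℤ_[p] | ‖x‖ = 1}, ∫⁻ d, wt σ (4 * c + 27 * d ^ 2) ∂ν ∂ν with hA
  have h1 : cusp ν σ 1 1 = A + mP p * cusp ν σ (p ^ 3) 1 := by
    conv_lhs => rw [cusp, split]
    congr 1
    · refine setLIntegral_congr_fun meas_units fun c hc => ?_
      change ‖c‖ = 1 at hc
      change ∫⁻ d, wt σ (4 * 1 * c ^ 3 + 27 * 1 * d ^ 2) ∂ν = _
      rw [← lint_unit ν hc]
      refine lintegral_congr fun d => ?_
      have : 4 * 1 * c ^ 3 + 27 * 1 * (c * d) ^ 2 = c ^ 2 * (4 * c + 27 * d ^ 2) := by ring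
      rw [this, wt_mul, wt_of_norm σ (norm_an hc 2), one_mul]
    · rw [cusp]
      congr 1
      refine lintegral_congr fun c => lintegral_congr fun d => ?_
      congr 1; ring
  have h2 : cusp ν σ (p ^ 3) 1 = mV ν + mP p * cusp ν σ (p ^ 3) (p ^ 2) := by
    have e3 := cusp_d ν hp3 σ (p ^ 2)
    have q3 : (p : ℤ_[p]) * p ^ 2 = p ^ 3 := by ring
    rwa [q3] at e3
  have hw := (wt_cont (p := p) hσ)
  have h3 : ∫⁻ c, ∫⁻ d, wt σ (4 * c + 27 * d ^ 2) ∂ν ∂ν = mL ν σ := by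
    rw [lintegral_lintegral_swap]
    · have : ∀ d : ℤ_[p], ∫⁻ c, wt σ (4 * c + 27 * d ^ 2) ∂ν = mL ν σ := fun d => by
        rw [← lint_quad ν σ (27 * d ^ 2) 4 0 (norm4 hp2)]
        refine lintegral_congr fun c => ?_
        congr 1; ring
      simp [this]
    · exact Continuous.aemeasurable (hw.comp (by fun_prop :
        Continuous fun q : ℤ_[p] × ℤ_[p] => 4 * q.1 + 27 * q.2 ^ 2))
  have h4 : ∫⁻ c, ∫⁻ d, wt σ (4 * ((p : ℤ_[p]) * c) + 27 * d ^ 2) ∂ν ∂ν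
      = mV ν + mP p * (mU p σ * mL ν σ) := by
    rw [lintegral_lintegral_swap]
    · rw [split_const ν _ 1, mul_one]
      · have : ∀ d : ℤ_[p], ∫⁻ c, wt σ (4 * ((p : ℤ_[p]) * c) + 27 * ((p : ℤ_[p]) * d) ^ 2) ∂ν
            = mU p σ * mL ν σ := fun d => by
          rw [← lint_quad ν σ ((p : ℤ_[p]) * 27 * d ^ 2) 4 0 (norm4 hp2),
            ← lintegral_const_mul' _ _ (U_ne_top σ)]
          refine lintegral_congr fun c => ?_
          rw [← wt_p_mul]
          congr 1; ring
        simp [this]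
      · intro d hd
        have : ∀ c, wt σ (4 * ((p : ℤ_[p]) * c) + 27 * d ^ 2) = 1 := fun c => by
          refine wt_of_norm σ ?_
          have : 4 * ((p : ℤ_[p]) * c) + 27 * d ^ 2 = 27 * d ^ 2 + p * (4 * c) := by ring
          rw [this]
          exact norm_unit_add (norm_ab (norm27 hp3) (norm_an hd 2))
        simp [this]
    · exact Continuous.aemeasurable (hw.comp (by fun_prop :
        Continuous fun q : ℤ_[p] × ℤ_[p] => 4 * ((p : ℤ_[p]) * q.1) + 27 * q.2 ^ 2))
  have h5 : mL ν σ = A + mP p * (mV ν + mP p * (mU p σ * mL ν σ)) := by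
    rw [← h4, hA]
    conv_lhs => rw [← h3, split]
  rw [h1, h2]
  conv_rhs => rw [h5]
  ring

lemma disc3_symm {R : Type*} [CommRing R] (a b c d : R) : disc3 a b c d = disc3 d c b a := by
  unfold disc3; ring

lemma disc3_shift {R : Type*} [CommRing R] (a b c d k : R) :
    disc3 a b c d = disc3 a (b - 3 * a * k) (c - 2 * b * k + 3 * a * k ^ 2)
      (d - c * k + b * k ^ 2 - a * k ^ 3) := by
  unfold disc3; ring

lemma cubic (hp3 : p ≠ 3) (σ : ℝ) {α : ℤ_[p]} (hα : ‖α‖ = 1) (q : ℤ_[p]) :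
    ∫⁻ x, ∫⁻ y, ∫⁻ z, wt σ (disc3 α (q * x) (q * y) (q * z)) ∂ν ∂ν ∂ν
      = cusp ν σ (q ^ 3) (q ^ 2) := by
  obtain ⟨e, he, -⟩ := exists_unit (norm_ab (norm3 hp3) hα)
  have main : ∀ x, ∫⁻ y, ∫⁻ z, wt σ (disc3 α (q * x) (q * y) (q * z)) ∂ν ∂ν
      = cusp ν σ (q ^ 3) (q ^ 2) := fun x => by
    have h1 : ∀ y z, wt σ (disc3 α (q * x) (q * y) (q * z))
        = wt σ (4 * q ^ 3 * (α * (y + (-(q * x ^ 2 * e)))) ^ 3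
          + 27 * q ^ 2 * (α ^ 2 * (z + (-(q * x * y * e) + 2 * α * q ^ 2 * x ^ 3 * e ^ 3))) ^ 2) := by
      intro y z
      have h2 : wt σ (disc3 α (q * x) (q * y) (q * z))
          = wt σ (-α ^ 2 * disc3 α (q * x) (q * y) (q * z)) := by
        rw [wt_mul, wt_of_norm σ (x := -α ^ 2) (by rw [norm_neg]; exact norm_an hα 2), one_mul]
      have hb0 : q * x - 3 * α * (q * x * e) = 0 := by linear_combination (-(q * x)) * he
      have hc0 : q * y - 2 * (q * x) * (q * x * e) + 3 * α * (q * x * e) ^ 2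
          = q * (y + (-(q * x ^ 2 * e))) := by linear_combination (q ^ 2 * x ^ 2 * e) * he
      have hd0 : q * z - q * y * (q * x * e) + q * x * (q * x * e) ^ 2 - α * (q * x * e) ^ 3
          = q * (z + (-(q * x * y * e) + 2 * α * q ^ 2 * x ^ 3 * e ^ 3)) := by
        linear_combination (-(q ^ 3 * x ^ 3 * e ^ 2)) * he
      rw [h2, disc3_shift α (q * x) (q * y) (q * z) (q * x * e), hb0, hc0, hd0]
      congr 1
      unfold disc3
      ring
    simp_rw [h1]
    have h3 : ∀ y, ∫⁻ z, wt σ (4 * q ^ 3 * (α * (y + (-(q * x ^ 2 * e)))) ^ 3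
          + 27 * q ^ 2 * (α ^ 2 * (z + (-(q * x * y * e) + 2 * α * q ^ 2 * x ^ 3 * e ^ 3))) ^ 2) ∂ν
        = ∫⁻ z, wt σ (4 * q ^ 3 * (α * (y + (-(q * x ^ 2 * e)))) ^ 3
          + 27 * q ^ 2 * z ^ 2) ∂ν := fun y => by
      rw [lint_add ν (-(q * x * y * e) + 2 * α * q ^ 2 * x ^ 3 * e ^ 3)
        (fun z => wt σ (4 * q ^ 3 * (α * (y + (-(q * x ^ 2 * e)))) ^ 3
          + 27 * q ^ 2 * (α ^ 2 * z) ^ 2)),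
        lint_unit ν (norm_an hα 2) (fun z => wt σ (4 * q ^ 3 * (α * (y + (-(q * x ^ 2 * e)))) ^ 3
          + 27 * q ^ 2 * z ^ 2))]
    simp_rw [h3]
    rw [lint_add ν (-(q * x ^ 2 * e)) (fun y => ∫⁻ z, wt σ (4 * q ^ 3 * (α * y) ^ 3
          + 27 * q ^ 2 * z ^ 2) ∂ν), lint_unit ν hα (fun y => ∫⁻ z, wt σ (4 * q ^ 3 * y ^ 3
          + 27 * q ^ 2 * z ^ 2) ∂ν), cusp]
  simp [main]

/-- The zeta integral. -/
noncomputable def mZ [MeasurableSpace ℤ_[p]] (ν : Measure ℤ_[p]) (σ : ℝ) : ℝ≥0∞ :=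
  ∫⁻ a, ∫⁻ b, ∫⁻ c, ∫⁻ d, wt σ (disc3 a b c d) ∂ν ∂ν ∂ν ∂ν

lemma Z_eq (hp2 : p ≠ 2) (hp3 : p ≠ 3) {σ : ℝ} (hσ : 0 ≤ σ) :
    mZ ν σ = mV ν * cusp ν σ 1 1 + mP p * (mV ν * mL ν σ + mP p * (mV ν * (mU p σ * mL ν σ)
      + mP p * (mV ν * cusp ν σ (p ^ 3) (p ^ 2) + mP p * (mU p σ ^ 4 * mZ ν σ)))) := by
  have h0 : mZ ν σ = mV ν * cusp ν σ 1 1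
      + mP p * ∫⁻ a, ∫⁻ b, ∫⁻ c, ∫⁻ d, wt σ (disc3 ((p : ℤ_[p]) * a) b c d) ∂ν ∂ν ∂ν ∂ν := by
    rw [mZ, split_const ν _ (cusp ν σ 1 1)]
    intro a ha
    have := cubic ν hp3 σ ha 1
    simpa using this
  have h1 : ∫⁻ a, ∫⁻ b, ∫⁻ c, ∫⁻ d, wt σ (disc3 ((p : ℤ_[p]) * a) b c d) ∂ν ∂ν ∂ν ∂ν
      = mV ν * mL ν σ
        + mP p * ∫⁻ a, ∫⁻ b, ∫⁻ c, ∫⁻ d, wt σ (disc3 ((p : ℤ_[p]) * a) ((p : ℤ_[p]) * b) c d) ∂ν ∂ν ∂ν ∂ν := by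
    rw [← lint_const_add ν _ _ P_ne_top]
    refine lintegral_congr fun a => ?_
    rw [split_const ν _ (mL ν σ)]
    intro b hb
    have : ∀ c, ∫⁻ d, wt σ (disc3 ((p : ℤ_[p]) * a) b c d) ∂ν = mL ν σ := fun c => by
      have hn : ‖-4 * b ^ 3 + p * (18 * a * b * c)‖ = 1 :=
        norm_unit_add (norm_ab (by rw [norm_neg]; exact norm4 hp2) (norm_an hb 3))
      rw [← lint_quad ν σ (b ^ 2 * c ^ 2 - 4 * ((p : ℤ_[p]) * a) * c ^ 3) _ (-27 * p * a ^ 2) hn]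
      refine lintegral_congr fun d => ?_
      congr 1; unfold disc3; ring
    simp [this]
  have h2 : ∫⁻ a, ∫⁻ b, ∫⁻ c, ∫⁻ d, wt σ (disc3 ((p : ℤ_[p]) * a) ((p : ℤ_[p]) * b) c d) ∂ν ∂ν ∂ν ∂ν
      = mV ν * (mU p σ * mL ν σ) + mP p *
        ∫⁻ d, ∫⁻ c, ∫⁻ b, ∫⁻ a, wt σ (disc3 ((p : ℤ_[p]) * a) ((p : ℤ_[p]) * b) ((p : ℤ_[p]) * c) d) ∂ν ∂ν ∂ν ∂ν := by
    rw [rev4 ν (fun a b c d => wt σ (disc3 ((p : ℤ_[p]) * a) ((p : ℤ_[p]) * b) c d))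
      ((wt_cont hσ).comp (by unfold disc3; fun_prop)), ← lint_const_add ν _ _ P_ne_top]
    refine lintegral_congr fun d => ?_
    rw [split_const ν _ (mU p σ * mL ν σ)]
    intro c hc
    have : ∀ b, ∫⁻ a, wt σ (disc3 ((p : ℤ_[p]) * a) ((p : ℤ_[p]) * b) c d) ∂ν = mU p σ * mL ν σ := fun b => by
      have hn : ‖-4 * c ^ 3 + p * (18 * b * c * d)‖ = 1 :=
        norm_unit_add (norm_ab (by rw [norm_neg]; exact norm4 hp2) (norm_an hc 3))
      rw [← lint_quad ν σ ((p : ℤ_[p]) * b ^ 2 * c ^ 2 - 4 * p ^ 2 * b ^ 3 * d) _ (-27 * d ^ 2) hn,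
        ← lintegral_const_mul' _ _ (U_ne_top σ)]
      refine lintegral_congr fun a => ?_
      rw [← wt_p_mul]
      congr 1; unfold disc3; ring
    simp [this]
  have h3 : ∫⁻ d, ∫⁻ c, ∫⁻ b, ∫⁻ a, wt σ (disc3 ((p : ℤ_[p]) * a) ((p : ℤ_[p]) * b) ((p : ℤ_[p]) * c) d) ∂ν ∂ν ∂ν ∂ν
      = mV ν * cusp ν σ (p ^ 3) (p ^ 2) + mP p * (mU p σ ^ 4 * mZ ν σ) := by
    rw [split_const ν _ (cusp ν σ (p ^ 3) (p ^ 2))]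
    · congr 2
      have hU4 : mU p σ ^ 4 ≠ ∞ := ENNReal.pow_ne_top (U_ne_top σ)
      rw [mZ, ← lintegral_const_mul' _ _ hU4]
      refine lintegral_congr fun d => ?_
      rw [← lintegral_const_mul' _ _ hU4]
      refine lintegral_congr fun c => ?_
      rw [← lintegral_const_mul' _ _ hU4]
      refine lintegral_congr fun b => ?_
      rw [← lintegral_const_mul' _ _ hU4]
      refine lintegral_congr fun a => ?_
      have : disc3 ((p : ℤ_[p]) * a) ((p : ℤ_[p]) * b) ((p : ℤ_[p]) * c) ((p : ℤ_[p]) * d)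
          = p * ((p : ℤ_[p]) * ((p : ℤ_[p]) * ((p : ℤ_[p]) * disc3 d c b a))) := by unfold disc3; ring
      rw [this, wt_p_mul, wt_p_mul, wt_p_mul, wt_p_mul]
      ring
    · intro d hd
      rw [← cubic ν hp3 σ hd p]
      simp_rw [fun a b c => disc3_symm ((p : ℤ_[p]) * a) ((p : ℤ_[p]) * b) ((p : ℤ_[p]) * c) d]
  rw [← h3, ← h2, ← h1, ← h0]

lemma lint_le_one {f : ℤ_[p] → ℝ≥0∞} (hf : ∀ x, f x ≤ 1) : ∫⁻ x, f x ∂ν ≤ 1 := by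
  calc ∫⁻ x, f x ∂ν ≤ ∫⁻ _, 1 ∂ν := lintegral_mono hf
    _ = 1 := by simp

lemma real_alg {v P U l j k z t : ℝ} (hP0 : 0 < P) (hP1 : P < 1) (hU0 : 0 < U) (hU1 : U ≤ 1)
    (hv : v + P = 1) (hl : l = v + P * (U * l))
    (hj : j + P * (v + P * (U * l)) = l + P * (v + P * k))
    (hk : k = U * (U * (v + P * (U * (v + P * (U * (v + P * (U * (U * j)))))))))
    (hz : z = v * j + P * (v * l + P * (v * (U * l) + P * (v * k + P * (U ^ 4 * z)))))
    (ht : t = P * U) :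
    z = (1 - P) * (1 - P ^ 2) * (1 + t + t ^ 2 + t ^ 3 + t ^ 4) /
      ((1 - t ^ 2) * (1 - P⁻¹ * t ^ 6)) := by
  have hv' : v = 1 - P := by linarith
  have ht0 : 0 < P * U := mul_pos hP0 hU0
  have htP : P * U ≤ P := by nlinarith
  have ht1 : P * U < 1 := by linarith
  have n1 : 1 - P * U ≠ 0 := by linarith
  have n2 : 1 - (P * U) ^ 2 ≠ 0 := by
    have := pow_lt_one₀ ht0.le ht1 (n := 2) (by norm_num)
    linarith
  have n4 : 1 - (P * U) ^ 4 ≠ 0 := by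
    have := pow_lt_one₀ ht0.le ht1 (n := 4) (by norm_num)
    linarith
  have n5 : 1 - P ^ 5 * U ^ 6 ≠ 0 := by
    have h5 := pow_lt_one₀ hP0.le hP1 (n := 5) (by norm_num)
    have h6 := pow_le_one₀ hU0.le hU1 (n := 6)
    have : P ^ 5 * U ^ 6 ≤ P ^ 5 := mul_le_of_le_one_right (by positivity) h6
    linarith
  have hP : P ≠ 0 := hP0.ne'
  have e6 : 1 - P⁻¹ * t ^ 6 = 1 - P ^ 5 * U ^ 6 := by
    rw [ht]; field_simp
  have el : l = (1 - P) / (1 - P * U) := by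
    rw [eq_div_iff n1]; linear_combination hl + hv
  have ej : j = (l * (1 - P ^ 2 * U) + P ^ 2 * v * (U ^ 2 + P * U ^ 3 + P ^ 2 * U ^ 4))
      / (1 - P ^ 5 * U ^ 6) := by
    rw [eq_div_iff n5]; linear_combination hj + P ^ 2 * hk
  have ez : z = v * (j + P * l + P ^ 2 * U * l + P ^ 3 * k) / (1 - (P * U) ^ 4) := by
    rw [eq_div_iff n4]; linear_combination hz
  rw [e6, ez, hk, ej, el, hv', ht, div_eq_div_iff n4 (mul_ne_zero n2 n5)]
  field_simp
  ring

lemma Z_real (hp2 : p ≠ 2) (hp3 : p ≠ 3) {s t : ℝ} (hs : 1 ≤ s) (ht : t = (p : ℝ) ^ (-s)) :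
    (mZ ν (s - 1)).toReal =
      (1 - (p : ℝ)⁻¹) * (1 - ((p : ℝ) ^ 2)⁻¹) * (1 + t + t ^ 2 + t ^ 3 + t ^ 4) /
        ((1 - t ^ 2) * (1 - (p : ℝ) * t ^ 6)) := by
  have hσ : 0 ≤ s - 1 := by linarith
  have hpp : (1 : ℝ) < p := by exact_mod_cast (Fact.out : p.Prime).one_lt
  have hp0 : (0 : ℝ) < p := by linarith
  have hw := wt_le_one (p := p) hσ
  have fin {x : ℝ≥0∞} (h : x ≤ 1) : x ≠ ∞ := ne_top_of_le_ne_top ENNReal.one_ne_top h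
  have fV : mV ν ≠ ∞ := measure_ne_top _ _
  have fP : mP p ≠ ∞ := P_ne_top
  have fU : mU p (s - 1) ≠ ∞ := U_ne_top _
  have fL : mL ν (s - 1) ≠ ∞ := fin (lint_le_one ν fun x => hw x)
  have fC : ∀ α β, cusp ν (s - 1) α β ≠ ∞ := fun α β =>
    fin (lint_le_one ν fun x => lint_le_one ν fun y => hw _)
  have fZ : mZ ν (s - 1) ≠ ∞ := fin (lint_le_one ν fun a => lint_le_one ν fun b =>
    lint_le_one ν fun c => lint_le_one ν fun d => hw _)
  have hP : (mP p).toReal = (p : ℝ)⁻¹ := by simp [mP]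
  have hU : (mU p (s - 1)).toReal = ((p : ℝ)⁻¹) ^ (s - 1) := by
    rw [mU, wt, ENNReal.toReal_ofReal (Real.rpow_nonneg (norm_nonneg _) _), PadicInt.norm_p]
  have q1 := V_add_P ν
  have q2 := L_eq ν (s - 1)
  have q3 := J_eq ν hp2 hp3 hσ
  have q4 := K_eq ν hp2 hp3 (s - 1)
  have q5 := Z_eq ν hp2 hp3 hσ
  have fJ := fC 1 1
  have fK := fC (p ^ 3) (p ^ 2)
  generalize mV ν = V at *
  generalize mP p = P at *
  generalize mU p (s - 1) = U at *
  generalize mL ν (s - 1) = L at *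
  generalize mZ ν (s - 1) = Z at *
  generalize cusp ν (s - 1) 1 1 = J at *
  generalize cusp ν (s - 1) (p ^ 3) (p ^ 2) = K at *
  lift V to NNReal using fV
  lift P to NNReal using fP
  lift U to NNReal using fU
  lift L to NNReal using fL
  lift J to NNReal using fJ
  lift K to NNReal using fK
  lift Z to NNReal using fZ
  simp only [ENNReal.coe_toReal] at *
  have hi0 : (0 : ℝ) < (p : ℝ)⁻¹ := inv_pos.2 hp0
  have hi1 : (p : ℝ)⁻¹ < 1 := inv_lt_one_of_one_lt₀ hpp
  have := real_alg (v := V) (P := P) (U := U) (l := L) (j := J) (k := K) (z := Z) (t := t)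
    (by rw [hP]; exact hi0) (by rw [hP]; exact hi1)
    (by rw [hU]; exact Real.rpow_pos_of_pos hi0 _)
    (by rw [hU]; exact Real.rpow_le_one hi0.le hi1.le hσ)
    (by exact_mod_cast q1) (by exact_mod_cast q2) (by exact_mod_cast q3)
    (by exact_mod_cast q4) (by exact_mod_cast q5)
    (by
      rw [hP, hU, ht, Real.inv_rpow hp0.le, ← Real.rpow_neg hp0.le, ← Real.rpow_neg_one,
        ← Real.rpow_add hp0]
      congr 1; ring)
  rw [this, hP, inv_inv, inv_pow]

end IgusaCubic

/-- **Igusa's zeta function for binary cubic forms.**  Let `p ∉ {2,3}` be a prime, `s ≥ 1`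
real, `t = p^{−s}`, and let `μ` be an additive Haar (translation-invariant Borel) measure
on `ℚ_p⁴` normalized so that `μ(ℤ_p⁴) = 1`.  Then
`∫_{ℤ_p⁴} |Δ₃(v)|^{s−1} dμ(v) = (1 − p⁻¹)(1 − p⁻²)·(1 + t + t² + t³ + t⁴)/((1 − t²)(1 − p·t⁶))`. -/
theorem igusa_zeta_binary_cubic (p : ℕ) [Fact p.Prime] (hp2 : p ≠ 2) (hp3 : p ≠ 3)
    (s : ℝ) (hs : 1 ≤ s) (t : ℝ) (ht : t = (p : ℝ) ^ (-s))
    [MeasurableSpace (Fin 4 → ℚ_[p])] [BorelSpace (Fin 4 → ℚ_[p])]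
    (μ : Measure (Fin 4 → ℚ_[p])) [μ.IsAddLeftInvariant]
    (hμ : μ {v | ∀ i, ‖v i‖ ≤ 1} = 1) :
    ∫ v in {v : Fin 4 → ℚ_[p] | ∀ i, ‖v i‖ ≤ 1},
        ‖disc3 (v 0) (v 1) (v 2) (v 3)‖ ^ (s - 1) ∂μ =
      (1 - (p : ℝ)⁻¹) * (1 - ((p : ℝ) ^ 2)⁻¹) * (1 + t + t ^ 2 + t ^ 3 + t ^ 4) /
        ((1 - t ^ 2) * (1 - (p : ℝ) * t ^ 6)) := by
  classical
  let _ : MeasurableSpace ℤ_[p] := borel _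
  have : BorelSpace ℤ_[p] := ⟨rfl⟩
  let ν : Measure ℤ_[p] := Measure.addHaarMeasure ⊤
  have : IsProbabilityMeasure ν := ⟨by
    have := Measure.addHaarMeasure_self (K₀ := (⊤ : TopologicalSpace.PositiveCompacts ℤ_[p]))
    simpa using this⟩
  have : ν.IsAddLeftInvariant :=
    inferInstanceAs (Measure.addHaarMeasure (⊤ : TopologicalSpace.PositiveCompacts ℤ_[p])).IsAddLeftInvariant
  let ρ : Measure (ℤ_[p] × (ℤ_[p] × (ℤ_[p] × ℤ_[p]))) := ν.prod (ν.prod (ν.prod ν))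
  have hi2 : (ν.prod ν).IsAddLeftInvariant := Measure.prod.instIsAddLeftInvariant
  have hi3 : (ν.prod (ν.prod ν)).IsAddLeftInvariant := Measure.prod.instIsAddLeftInvariant
  have hi4 : ρ.IsAddLeftInvariant := Measure.prod.instIsAddLeftInvariant
  have : IsProbabilityMeasure ρ :=
    inferInstanceAs (IsProbabilityMeasure (ν.prod (ν.prod (ν.prod ν))))
  let e : (ℤ_[p] × (ℤ_[p] × (ℤ_[p] × ℤ_[p]))) →+ (Fin 4 → ℚ_[p]) :=
    { toFun := fun q => ![(q.1 : ℚ_[p]), (q.2.1 : ℚ_[p]), (q.2.2.1 : ℚ_[p]), (q.2.2.2 : ℚ_[p])]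
      map_zero' := by ext i; fin_cases i <;> simp
      map_add' := fun x y => by ext i; fin_cases i <;> simp }
  have he : ∀ q, e q = ![(q.1 : ℚ_[p]), (q.2.1 : ℚ_[p]), (q.2.2.1 : ℚ_[p]), (q.2.2.2 : ℚ_[p])] :=
    fun _ => rfl
  have hcoe : Continuous (fun x : ℤ_[p] => (x : ℚ_[p])) := continuous_subtype_val
  have hcont : Continuous e := by
    refine continuous_pi fun i => ?_
    fin_cases i
    · exact hcoe.comp continuous_fst
    · exact hcoe.comp (continuous_fst.comp continuous_snd)
    · exact hcoe.comp (continuous_fst.comp (continuous_snd.comp continuous_snd))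
    · exact hcoe.comp (continuous_snd.comp (continuous_snd.comp continuous_snd))
  have hinj : Function.Injective e := by
    intro x y hxy
    have h0 := congrFun hxy 0
    have h1 := congrFun hxy 1
    have h2 := congrFun hxy 2
    have h3 := congrFun hxy 3
    simp only [he] at h0 h1 h2 h3
    exact Prod.ext (Subtype.ext h0) (Prod.ext (Subtype.ext h1)
      (Prod.ext (Subtype.ext h2) (Subtype.ext h3)))
  have hme : MeasurableEmbedding e := (hcont.isClosedEmbedding hinj).measurableEmbedding
  have hrange : Set.range e = {v : Fin 4 → ℚ_[p] | ∀ i, ‖v i‖ ≤ 1} := by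
    ext v
    constructor
    · rintro ⟨q, rfl⟩ i
      fin_cases i
      · exact q.1.2
      · exact q.2.1.2
      · exact q.2.2.1.2
      · exact q.2.2.2.2
    · intro hv
      refine ⟨(⟨v 0, hv 0⟩, ⟨v 1, hv 1⟩, ⟨v 2, hv 2⟩, ⟨v 3, hv 3⟩), ?_⟩
      ext i
      fin_cases i <;> rfl
  have : (μ.comap e).IsAddLeftInvariant := Measure.IsAddLeftInvariant.comap μ hme
  have : IsProbabilityMeasure (μ.comap e) := ⟨by
    rw [hme.comap_apply, Set.image_univ, hrange, hμ]⟩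
  have hρ : μ.comap e = ρ := IgusaCubic.haar_uniq _ _
  have hres : μ.restrict {v : Fin 4 → ℚ_[p] | ∀ i, ‖v i‖ ≤ 1} = ρ.map e := by
    rw [← hρ, hme.map_comap, hrange]
  have hσ : 0 ≤ s - 1 := by linarith
  have hwc : Continuous fun q : ℤ_[p] × (ℤ_[p] × (ℤ_[p] × ℤ_[p])) =>
      IgusaCubic.wt (s - 1) (disc3 q.1 q.2.1 q.2.2.1 q.2.2.2) :=
    (IgusaCubic.wt_cont hσ).comp (by unfold disc3; fun_prop)
  rw [hres, hme.integral_map, integral_eq_lintegral_of_nonneg_ae]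
  · rw [← IgusaCubic.Z_real ν hp2 hp3 hs ht]
    congr 1
    have hpt : ∀ q, ENNReal.ofReal (‖disc3 (e q 0) (e q 1) (e q 2) (e q 3)‖ ^ (s - 1))
        = IgusaCubic.wt (s - 1) (disc3 q.1 q.2.1 q.2.2.1 q.2.2.2) := fun q => by
      unfold IgusaCubic.wt
      congr 2
    simp_rw [hpt]
    have hm := hwc.measurable
    rw [lintegral_prod _ hm.aemeasurable, IgusaCubic.mZ]
    refine lintegral_congr fun a => ?_
    have hm1 := hm.comp (measurable_prodMk_left (x := a))
    refine (lintegral_prod _ hm1.aemeasurable).trans ?_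
    refine lintegral_congr fun b => ?_
    have hm2 := hm1.comp (measurable_prodMk_left (x := b))
    refine (lintegral_prod _ hm2.aemeasurable).trans ?_
    rfl
  · exact Filter.Eventually.of_forall fun q => Real.rpow_nonneg (norm_nonneg _) _
  · refine Continuous.aestronglyMeasurable ?_
    have hd : Continuous fun q => disc3 (e q 0) (e q 1) (e q 2) (e q 3) := by
      unfold disc3; fun_prop
    exact hd.norm.rpow_const fun _ => Or.inr hσ
end

section
/- Let k be a field with char k ∉ {2,3}, and let k⟦t⟧ be the ring of formal power series over k. Let (A,B) be a pair of symmetric 3×3 matrices over k⟦t⟧ with Δ₄(A,B) ≠ 0, and let M be the image of the k⟦t⟧-linear map 𝔤₄(k⟦t⟧) → Sym₃(k⟦t⟧)² sending (X₃,X₂) to (X₃,X₂)·(A,B), where Sym₃ denotes symmetric 3×3 matrices. Then the quotient Sym₃(k⟦t⟧)² / M is a finite-dimensional k-vector space of dimension equal to the t-adic order of Δ₄(A,B). -/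
/-- The binary cubic form `4·det(x·A − y·B)` associated to a pair of 3×3 matrices,
as an element of `R[x][y]` (the inner variable is `x`, the outer variable is `y`). -/
noncomputable def pairCubic {R : Type*} [CommRing R] (A B : Matrix (Fin 3) (Fin 3) R) :
    Polynomial (Polynomial R) :=
  4 * Matrix.det (Matrix.of fun i j =>
    (Polynomial.C (Polynomial.C (A i j) * Polynomial.X) -
      Polynomial.X * Polynomial.C (Polynomial.C (B i j)) : Polynomial (Polynomial R)))

/-- The discriminant `Δ₄(A,B)` of a pair of 3×3 matrices: writing
`4·det(x·A − y·B) = a·x³ + b·x²y + c·xy² + d·y³`, it is `Δ₃(a,b,c,d)`. -/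
noncomputable def disc4 {R : Type*} [CommRing R] (A B : Matrix (Fin 3) (Fin 3) R) : R :=
  disc3 (((pairCubic A B).coeff 0).coeff 3) (((pairCubic A B).coeff 1).coeff 2)
    (((pairCubic A B).coeff 2).coeff 1) (((pairCubic A B).coeff 3).coeff 0)

/-- The Lie algebra action of `𝔤₄(R) = {(X₃,X₂) : tr X₃ = tr X₂}` on pairs of symmetric
3×3 matrices: `(X₃,X₂)·(A,B) = (X₃A + AX₃ᵀ − x₁₁A − x₂₁B, X₃B + BX₃ᵀ − x₁₂A − x₂₂B)`. -/
def lieAct4 {R : Type*} [CommRing R] (X3 : Matrix (Fin 3) (Fin 3) R)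
    (X2 : Matrix (Fin 2) (Fin 2) R) (A B : Matrix (Fin 3) (Fin 3) R) :
    Matrix (Fin 3) (Fin 3) R × Matrix (Fin 3) (Fin 3) R :=
  (X3 * A + A * X3.transpose - X2 0 0 • A - X2 1 0 • B,
   X3 * B + B * X3.transpose - X2 0 1 • A - X2 1 1 • B)

/-- Index set for the entries of a symmetric 3×3 matrix: pairs `(i,j)` with `i ≤ j`.
Functions `SymIdx → R` form a free `R`-module of rank 6, a model of the module `Sym₃(R)` of
symmetric 3×3 matrices over `R`. -/
abbrev SymIdx : Type := {ij : Fin 3 × Fin 3 // ij.1 ≤ ij.2}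

/-- The coordinates of (the upper triangle of) a 3×3 matrix. -/
def symOf {R : Type*} (A : Matrix (Fin 3) (Fin 3) R) : SymIdx → R :=
  fun ij => A ij.1.1 ij.1.2


set_option linter.unusedVariables false
set_option linter.unusedSimpArgs false

def phi11 {R : Type*} [CommRing R] (a00 a01 a02 a11 a12 a22 b00 b01 b02 b11 b12 b22 : R) : Matrix (Fin 6) (Fin 6) R :=
  !![2 * a00, 2 * a01, 2 * a02, 0, 0, 0;
     a01, a11, a12, a01, a02, 0;
     a02, a12, a22, 0, 0, a02;
     0, 0, 0, 2 * a11, 2 * a12, 0;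
     0, 0, 0, a12, a22, a12;
     0, 0, 0, 0, 0, 2 * a22]

def phi12 {R : Type*} [CommRing R] (a00 a01 a02 a11 a12 a22 b00 b01 b02 b11 b12 b22 : R) : Matrix (Fin 6) (Fin 6) R :=
  !![0, 0, 0, -a00, -b00, 0;
     a00, 0, 0, -a01, -b01, 0;
     0, a00, a01, -a02, -b02, 0;
     2 * a01, 0, 0, -a11, -b11, 0;
     a02, a01, a11, -a12, -b12, 0;
     0, 2 * a02, 2 * a12, -a22, -b22, 0]

def phi21 {R : Type*} [CommRing R] (a00 a01 a02 a11 a12 a22 b00 b01 b02 b11 b12 b22 : R) : Matrix (Fin 6) (Fin 6) R :=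
  !![b00, 2 * b01, 2 * b02, -b00, 0, -b00;
     0, b11, b12, 0, b02, -b01;
     0, b12, b22, -b02, 0, 0;
     -b11, 0, 0, b11, 2 * b12, -b11;
     -b12, 0, 0, 0, b22, 0;
     -b22, 0, 0, -b22, 0, b22]

def phi22 {R : Type*} [CommRing R] (a00 a01 a02 a11 a12 a22 b00 b01 b02 b11 b12 b22 : R) : Matrix (Fin 6) (Fin 6) R :=
  !![0, 0, 0, b00, 0, -a00;
     b00, 0, 0, b01, 0, -a01;
     0, b00, b01, b02, 0, -a02;
     2 * b01, 0, 0, b11, 0, -a11;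
     b02, b01, b11, b12, 0, -a12;
     0, 2 * b02, 2 * b12, b22, 0, -a22]

def symS {R : Type*} [CommRing R] (p q r : R) : Matrix (Fin 6) (Fin 6) R :=
  !![1, 0, 0, 0, 0, 0;
     p, 1, 0, 0, 0, 0;
     q, r, 1, 0, 0, 0;
     p * p, 2 * p, 0, 1, 0, 0;
     p * q, p * r + q, p, r, 1, 0;
     q * q, 2 * q * r, 2 * q, r * r, 2 * r, 1]

def conjC11 {R : Type*} [CommRing R] (p q r : R) : Matrix (Fin 6) (Fin 6) R :=
  !![1, -p, p * r - q, 0, 0, 0;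
     0, 1, -r, 0, 0, 0;
     0, 0, 1, 0, 0, 0;
     0, p, -p * r, 1, -r, 0;
     0, 0, p, 0, 1, 0;
     0, 0, q, 0, r, 1]

def conjC21 {R : Type*} [CommRing R] (p q r : R) : Matrix (Fin 6) (Fin 6) R :=
  !![p, -p * p, p * p * r - p * q, -p, p * r - q, 0;
     q, -p * q, p * q * r - q * q, -p * r, p * r * r - q * r, p * r - q;
     0, q, -q * r, r, -r * r, -r;
     0, 0, 0, 0, 0, 0;
     0, 0, 0, 0, 0, 0;
     0, 0, 0, 0, 0, 0]

def conjC22 {R : Type*} [CommRing R] (p q r : R) : Matrix (Fin 6) (Fin 6) R :=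
  !![1, 0, 0, 0, 0, 0;
     r, 1, -p, 0, 0, 0;
     0, 0, 1, 0, 0, 0;
     0, 0, 0, 1, 0, 0;
     0, 0, 0, 0, 1, 0;
     0, 0, 0, 0, 0, 1]

def elimQ12 {R : Type*} [CommRing R] (x y z b00 b01 b02 b11 b12 b22 : R) : Matrix (Fin 6) (Fin 6) R :=
  !![0, 0, 0, 1, 2 * b00 * y * z + b11 * x * z + b22 * x * y, 0;
     x, 0, 0, 0, b01 * x * z, 0;
     0, x, 0, 0, b02 * x * y, 0;
     0, 0, 0, 1, b00 * y * z + 2 * b11 * x * z + b22 * x * y, 0;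
     0, 0, y, 0, b12 * x * y, 0;
     0, 0, 0, 1, b00 * y * z + b11 * x * z + 2 * b22 * x * y, 0]

def elimQ22 {R : Type*} [CommRing R] (x y z b00 b01 b02 b11 b12 b22 : R) : Matrix (Fin 6) (Fin 6) R :=
  !![-y, 0, 0, 0, b01 * y * z, 0;
     0, -z, 0, 0, b02 * y * z, 0;
     0, 0, -z, 0, b12 * x * z, 0;
     0, 0, 0, 2, 2 * b00 * y * z + 2 * b11 * x * z + 2 * b22 * x * y, 0;
     0, 0, 0, 0, 2 * x * y * z, 0;
     0, 0, 0, 0, 0, -1]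

def elimT {R : Type*} [CommRing R] (x y z b00 b01 b02 b11 b12 b22 : R) : Matrix (Fin 6) (Fin 6) R :=
  !![2 * b01 * x, 2 * b02 * x, 0, b00, 2 * b00 * b00 * y * z + 2 * b01 * b01 * x * z + 2 * b02 * b02 * x * y, x;
     -b00 * y + b11 * x, b12 * x, b02 * y, b01, 2 * b00 * b01 * y * z + 2 * b01 * b11 * x * z + 2 * b02 * b12 * x * y, 0;
     b12 * x, -b00 * z + b22 * x, -b01 * z, b02, 2 * b00 * b02 * y * z + 2 * b01 * b12 * x * z + 2 * b02 * b22 * x * y, 0;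
     -2 * b01 * y, 0, 2 * b12 * y, b11, 2 * b01 * b01 * y * z + 2 * b11 * b11 * x * z + 2 * b12 * b12 * x * y, y;
     -b02 * y, -b01 * z, -b11 * z + b22 * y, b12, 2 * b01 * b02 * y * z + 2 * b11 * b12 * x * z + 2 * b12 * b22 * x * y, 0;
     0, -2 * b02 * z, -2 * b12 * z, b22, 2 * b02 * b02 * y * z + 2 * b12 * b12 * x * z + 2 * b22 * b22 * x * y, z]
/-- The 12×12 matrix of the Lie algebra action map. -/
def phiMat {R : Type*} [CommRing R] (a00 a01 a02 a11 a12 a22 b00 b01 b02 b11 b12 b22 : R) :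
    Matrix (Fin 6 ⊕ Fin 6) (Fin 6 ⊕ Fin 6) R :=
  Matrix.fromBlocks (phi11 a00 a01 a02 a11 a12 a22 b00 b01 b02 b11 b12 b22)
    (phi12 a00 a01 a02 a11 a12 a22 b00 b01 b02 b11 b12 b22)
    (phi21 a00 a01 a02 a11 a12 a22 b00 b01 b02 b11 b12 b22)
    (phi22 a00 a01 a02 a11 a12 a22 b00 b01 b02 b11 b12 b22)

/-- Explicit discriminant of the binary cubic form `det(x·A − y·B)`. -/
def dform {R : Type*} [CommRing R] (a00 a01 a02 a11 a12 a22 b00 b01 b02 b11 b12 b22 : R) : R :=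
  disc3 (a00 * a11 * a22 + 2 * a01 * a02 * a12 - a00 * a12 ^ 2 - a11 * a02 ^ 2 - a22 * a01 ^ 2)
    (-(b00 * (a11 * a22 - a12 ^ 2) + b11 * (a00 * a22 - a02 ^ 2) + b22 * (a00 * a11 - a01 ^ 2)
      + 2 * b01 * (a02 * a12 - a01 * a22) + 2 * b02 * (a01 * a12 - a02 * a11)
      + 2 * b12 * (a01 * a02 - a00 * a12)))
    (a00 * (b11 * b22 - b12 ^ 2) + a11 * (b00 * b22 - b02 ^ 2) + a22 * (b00 * b11 - b01 ^ 2)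
      + 2 * a01 * (b02 * b12 - b01 * b22) + 2 * a02 * (b01 * b12 - b02 * b11)
      + 2 * a12 * (b01 * b02 - b00 * b12))
    (-(b00 * b11 * b22 + 2 * b01 * b02 * b12 - b00 * b12 ^ 2 - b11 * b02 ^ 2 - b22 * b01 ^ 2))

theorem det_symS {R : Type*} [CommRing R] (p q r : R) : (symS p q r).det = 1 := by
  rw [Matrix.det_of_isLowerTriangular]
  · simp [symS, Fin.prod_univ_succ]
  · intro i j h
    fin_cases i <;> fin_cases j <;> first | rfl | (exfalso; revert h; decide)

theorem det_conjC11 {R : Type*} [CommRing R] (p q r : R) : (conjC11 p q r).det = 1 := by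
  simp [conjC11, Matrix.det_succ_row_zero, Fin.sum_univ_succ, Fin.succAbove]

theorem det_conjC22 {R : Type*} [CommRing R] (p q r : R) : (conjC22 p q r).det = 1 := by
  simp [conjC22, Matrix.det_succ_row_zero, Fin.sum_univ_succ, Fin.succAbove]

theorem det_elimQ22 {R : Type*} [CommRing R] (x y z b00 b01 b02 b11 b12 b22 : R) :
    (elimQ22 x y z b00 b01 b02 b11 b12 b22).det = 4 * x * y ^ 2 * z ^ 3 := by
  rw [Matrix.det_of_isUpperTriangular]
  · simp [elimQ22, Fin.prod_univ_succ]
    ring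
  · intro i j h
    fin_cases i <;> fin_cases j <;> first | rfl | (exfalso; revert h; decide)

theorem det_elimT {R : Type*} [CommRing R] (x y z b00 b01 b02 b11 b12 b22 : R) :
    (elimT x y z b00 b01 b02 b11 b12 b22).det = 2 * dform x 0 0 y 0 z b00 b01 b02 b11 b12 b22 := by
  simp [elimT, Matrix.det_succ_row_zero, Fin.sum_univ_succ, Fin.succAbove, dform, disc3]
  ring

set_option maxHeartbeats 8000000 in
theorem phi_equivariant {R : Type*} [CommRing R]
    (p q r a00 a01 a02 a11 a12 a22 b00 b01 b02 b11 b12 b22 : R) :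
    phiMat a00 (p * a00 + a01) (q * a00 + r * a01 + a02) (p * p * a00 + 2 * p * a01 + a11)
      (p * q * a00 + (p * r + q) * a01 + p * a02 + r * a11 + a12)
      (q * q * a00 + 2 * q * r * a01 + 2 * q * a02 + r * r * a11 + 2 * r * a12 + a22)
      b00 (p * b00 + b01) (q * b00 + r * b01 + b02) (p * p * b00 + 2 * p * b01 + b11)
      (p * q * b00 + (p * r + q) * b01 + p * b02 + r * b11 + b12)
      (q * q * b00 + 2 * q * r * b01 + 2 * q * b02 + r * r * b11 + 2 * r * b12 + b22) *
      Matrix.fromBlocks (conjC11 p q r) 0 (conjC21 p q r) (conjC22 p q r) =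
    Matrix.fromBlocks (symS p q r) 0 0 (symS p q r) *
      phiMat a00 a01 a02 a11 a12 a22 b00 b01 b02 b11 b12 b22 := by
  rw [phiMat, phiMat, Matrix.fromBlocks_multiply, Matrix.fromBlocks_multiply]
  simp only [Matrix.mul_zero, Matrix.zero_mul, add_zero, zero_add]
  congr 1
  · ext i j
    simp only [Matrix.add_apply, Matrix.mul_apply, Fin.sum_univ_six, Matrix.zero_apply]
    unfold phi11 phi12 conjC11 conjC21 symS
    fin_cases i <;> fin_cases j <;>
      simp only [Matrix.of_apply, Matrix.cons_val, Fin.mk_one, Fin.zero_eta, Fin.reduceFinMk,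
        mul_zero, zero_mul, add_zero, zero_add, Fin.isValue] <;> ring1
  · ext i j
    simp only [Matrix.add_apply, Matrix.mul_apply, Fin.sum_univ_six, Matrix.zero_apply]
    unfold phi12 conjC22 symS
    fin_cases i <;> fin_cases j <;>
      simp only [Matrix.of_apply, Matrix.cons_val, Fin.mk_one, Fin.zero_eta, Fin.reduceFinMk,
        mul_zero, zero_mul, add_zero, zero_add, Fin.isValue] <;> ring1
  · ext i j
    simp only [Matrix.add_apply, Matrix.mul_apply, Fin.sum_univ_six, Matrix.zero_apply]
    unfold phi21 phi22 conjC11 conjC21 symS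
    fin_cases i <;> fin_cases j <;>
      simp only [Matrix.of_apply, Matrix.cons_val, Fin.mk_one, Fin.zero_eta, Fin.reduceFinMk,
        mul_zero, zero_mul, add_zero, zero_add, Fin.isValue] <;> ring1
  · ext i j
    simp only [Matrix.add_apply, Matrix.mul_apply, Fin.sum_univ_six, Matrix.zero_apply]
    unfold phi22 conjC22 symS
    fin_cases i <;> fin_cases j <;>
      simp only [Matrix.of_apply, Matrix.cons_val, Fin.mk_one, Fin.zero_eta, Fin.reduceFinMk,
        mul_zero, zero_mul, add_zero, zero_add, Fin.isValue] <;> ring1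

theorem phi_det_invariant {R : Type*} [CommRing R]
    (p q r a00 a01 a02 a11 a12 a22 b00 b01 b02 b11 b12 b22 : R) :
    (phiMat a00 (p * a00 + a01) (q * a00 + r * a01 + a02) (p * p * a00 + 2 * p * a01 + a11)
      (p * q * a00 + (p * r + q) * a01 + p * a02 + r * a11 + a12)
      (q * q * a00 + 2 * q * r * a01 + 2 * q * a02 + r * r * a11 + 2 * r * a12 + a22)
      b00 (p * b00 + b01) (q * b00 + r * b01 + b02) (p * p * b00 + 2 * p * b01 + b11)
      (p * q * b00 + (p * r + q) * b01 + p * b02 + r * b11 + b12)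
      (q * q * b00 + 2 * q * r * b01 + 2 * q * b02 + r * r * b11 + 2 * r * b12 + b22)).det =
    (phiMat a00 a01 a02 a11 a12 a22 b00 b01 b02 b11 b12 b22).det := by
  have h := congrArg Matrix.det
    (phi_equivariant p q r a00 a01 a02 a11 a12 a22 b00 b01 b02 b11 b12 b22)
  rw [Matrix.det_mul, Matrix.det_mul, Matrix.det_fromBlocks_zero₁₂,
    Matrix.det_fromBlocks_zero₁₂, det_symS, det_conjC11, det_conjC22] at h
  simpa using h

theorem dform_invariant {R : Type*} [CommRing R]
    (p q r a00 a01 a02 a11 a12 a22 b00 b01 b02 b11 b12 b22 : R) :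
    dform a00 (p * a00 + a01) (q * a00 + r * a01 + a02) (p * p * a00 + 2 * p * a01 + a11)
      (p * q * a00 + (p * r + q) * a01 + p * a02 + r * a11 + a12)
      (q * q * a00 + 2 * q * r * a01 + 2 * q * a02 + r * r * a11 + 2 * r * a12 + a22)
      b00 (p * b00 + b01) (q * b00 + r * b01 + b02) (p * p * b00 + 2 * p * b01 + b11)
      (p * q * b00 + (p * r + q) * b01 + p * b02 + r * b11 + b12)
      (q * q * b00 + 2 * q * r * b01 + 2 * q * b02 + r * r * b11 + 2 * r * b12 + b22) =
    dform a00 a01 a02 a11 a12 a22 b00 b01 b02 b11 b12 b22 := by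
  unfold dform
  congr 1 <;> ring

set_option maxHeartbeats 8000000 in
theorem phi_elim {R : Type*} [CommRing R] (x y z b00 b01 b02 b11 b12 b22 : R) :
    phiMat x 0 0 y 0 z b00 b01 b02 b11 b12 b22 *
      Matrix.fromBlocks 1 (elimQ12 x y z b00 b01 b02 b11 b12 b22) 0
        (elimQ22 x y z b00 b01 b02 b11 b12 b22) =
    Matrix.fromBlocks (Matrix.diagonal ![2 * x, y, z, 2 * y, z, 2 * z]) 0
      (phi21 x 0 0 y 0 z b00 b01 b02 b11 b12 b22) (elimT x y z b00 b01 b02 b11 b12 b22) := by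
  rw [phiMat, Matrix.fromBlocks_multiply]
  simp only [Matrix.mul_zero, Matrix.mul_one, add_zero]
  congr 1
  · ext i j
    fin_cases i <;> fin_cases j <;> simp [phi11]
  · ext i j
    simp only [Matrix.add_apply, Matrix.mul_apply, Fin.sum_univ_six, Matrix.zero_apply]
    unfold phi11 phi12 elimQ12 elimQ22
    fin_cases i <;> fin_cases j <;>
      simp only [Matrix.of_apply, Matrix.cons_val, Fin.mk_one, Fin.zero_eta, Fin.reduceFinMk,
        mul_zero, zero_mul, add_zero, zero_add, Fin.isValue] <;> ring1
  · ext i j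
    simp only [Matrix.add_apply, Matrix.mul_apply, Fin.sum_univ_six, Matrix.zero_apply]
    unfold phi21 phi22 elimQ12 elimQ22 elimT
    fin_cases i <;> fin_cases j <;>
      simp only [Matrix.of_apply, Matrix.cons_val, Fin.mk_one, Fin.zero_eta, Fin.reduceFinMk,
        mul_zero, zero_mul, add_zero, zero_add, Fin.isValue] <;> ring1

theorem phi_det_diag {K : Type*} [CommRing K] [IsDomain K] (h2 : (2 : K) ≠ 0)
    (x y z b00 b01 b02 b11 b12 b22 : K) (hx : x ≠ 0) (hy : y ≠ 0) (hz : z ≠ 0) :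
    (phiMat x 0 0 y 0 z b00 b01 b02 b11 b12 b22).det =
      4 * dform x 0 0 y 0 z b00 b01 b02 b11 b12 b22 := by
  have h := congrArg Matrix.det (phi_elim x y z b00 b01 b02 b11 b12 b22)
  rw [Matrix.det_mul, Matrix.det_fromBlocks_zero₂₁, Matrix.det_fromBlocks_zero₁₂,
    Matrix.det_diagonal, Matrix.det_one, det_elimQ22, det_elimT] at h
  have hne : (4 : K) * x * y ^ 2 * z ^ 3 ≠ 0 := by
    have h4 : (4 : K) ≠ 0 := by
      have : (4 : K) = 2 * 2 := by norm_num
      rw [this]; exact mul_ne_zero h2 h2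
    simp [hx, hy, hz, h4]
  apply mul_right_cancel₀ hne
  simp [Fin.prod_univ_succ] at h
  linear_combination h

theorem phi_det_field {K : Type*} [Field K] (h2 : (2 : K) ≠ 0)
    (a00 a01 a02 a11 a12 a22 b00 b01 b02 b11 b12 b22 : K) (h0 : a00 ≠ 0)
    (h1 : a00 * a11 - a01 ^ 2 ≠ 0)
    (h3 : a00 * a11 * a22 + 2 * a01 * a02 * a12 - a00 * a12 ^ 2 - a11 * a02 ^ 2
      - a22 * a01 ^ 2 ≠ 0) :
    (phiMat a00 a01 a02 a11 a12 a22 b00 b01 b02 b11 b12 b22).det =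
      4 * dform a00 a01 a02 a11 a12 a22 b00 b01 b02 b11 b12 b22 := by
  have key : ∀ y w z c00 c01 c02 c11 c12 c22 : K, y ≠ 0 → y * z - w ^ 2 ≠ 0 →
      (phiMat a00 0 0 y w z c00 c01 c02 c11 c12 c22).det =
        4 * dform a00 0 0 y w z c00 c01 c02 c11 c12 c22 := by
    intro y w z c00 c01 c02 c11 c12 c22 hy hz
    rw [← phi_det_invariant 0 0 (-w / y), ← dform_invariant 0 0 (-w / y)]
    have e1 : (0 : K) * a00 + 0 = 0 := by ring
    have e2 : (0 : K) * a00 + -w / y * 0 + 0 = 0 := by ring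
    have e3 : (0 : K) * 0 * a00 + 2 * 0 * 0 + y = y := by ring
    have e4 : (0 : K) * 0 * a00 + (0 * (-w / y) + 0) * 0 + 0 * 0 + -w / y * y + w = 0 := by
      field_simp
      ring
    rw [e1, e2, e3, e4]
    apply phi_det_diag h2 _ _ _ _ _ _ _ _ _ h0 hy
    intro h
    apply hz
    field_simp at h
    linear_combination h
  rw [← phi_det_invariant (-a01 / a00) (-a02 / a00) 0, ← dform_invariant (-a01 / a00) (-a02 / a00) 0]
  have e1 : -a01 / a00 * a00 + a01 = 0 := by field_simp; ring
  have e2 : -a02 / a00 * a00 + 0 * a01 + a02 = 0 := by field_simp; ring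
  rw [e1, e2]
  apply key
  · intro h
    apply h1
    field_simp at h
    linear_combination h
  · intro h
    apply mul_ne_zero h0 h3
    field_simp at h
    linear_combination h

theorem phiMat_map {R S : Type*} [CommRing R] [CommRing S] (f : R →+* S)
    (a00 a01 a02 a11 a12 a22 b00 b01 b02 b11 b12 b22 : R) :
    (phiMat a00 a01 a02 a11 a12 a22 b00 b01 b02 b11 b12 b22).map f =
      phiMat (f a00) (f a01) (f a02) (f a11) (f a12) (f a22)
        (f b00) (f b01) (f b02) (f b11) (f b12) (f b22) := by
  rw [phiMat, phiMat, Matrix.fromBlocks_map]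
  congr 1
  · simp [phi11, ← Matrix.ext_iff, Fin.forall_fin_succ, map_ofNat]
  · simp [phi12, ← Matrix.ext_iff, Fin.forall_fin_succ, map_ofNat]
  · simp [phi21, ← Matrix.ext_iff, Fin.forall_fin_succ, map_ofNat]
  · simp [phi22, ← Matrix.ext_iff, Fin.forall_fin_succ, map_ofNat]

theorem dform_map {R S : Type*} [CommRing R] [CommRing S] (f : R →+* S)
    (a00 a01 a02 a11 a12 a22 b00 b01 b02 b11 b12 b22 : R) :
    f (dform a00 a01 a02 a11 a12 a22 b00 b01 b02 b11 b12 b22) =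
      dform (f a00) (f a01) (f a02) (f a11) (f a12) (f a22)
        (f b00) (f b01) (f b02) (f b11) (f b12) (f b22) := by
  simp only [dform, disc3, map_mul, map_add, map_sub, map_neg, map_pow, map_ofNat]

theorem phi_det_univ :
    (phiMat (MvPolynomial.X 0 : MvPolynomial (Fin 12) ℤ) (MvPolynomial.X 1) (MvPolynomial.X 2)
      (MvPolynomial.X 3) (MvPolynomial.X 4) (MvPolynomial.X 5) (MvPolynomial.X 6)
      (MvPolynomial.X 7) (MvPolynomial.X 8) (MvPolynomial.X 9) (MvPolynomial.X 10)
      (MvPolynomial.X 11)).det =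
    4 * dform (MvPolynomial.X 0 : MvPolynomial (Fin 12) ℤ) (MvPolynomial.X 1) (MvPolynomial.X 2)
      (MvPolynomial.X 3) (MvPolynomial.X 4) (MvPolynomial.X 5) (MvPolynomial.X 6)
      (MvPolynomial.X 7) (MvPolynomial.X 8) (MvPolynomial.X 9) (MvPolynomial.X 10)
      (MvPolynomial.X 11) := by
  let f := algebraMap (MvPolynomial (Fin 12) ℤ) (FractionRing (MvPolynomial (Fin 12) ℤ))
  have hf : Function.Injective f := IsFractionRing.injective _ _
  let ev : MvPolynomial (Fin 12) ℤ →+* ℤ :=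
    MvPolynomial.eval ![1, 0, 0, 1, 0, 1, 0, 0, 0, 0, 0, 0]
  have hne : ∀ P : MvPolynomial (Fin 12) ℤ, ev P = 1 → f P ≠ 0 := by
    intro P hP h0
    have h1 : P = 0 := hf (by rw [h0, map_zero])
    rw [h1, map_zero] at hP
    exact zero_ne_one hP
  apply hf
  rw [RingHom.map_det, RingHom.mapMatrix_apply, phiMat_map, map_mul, dform_map, map_ofNat]
  apply phi_det_field
  · exact two_ne_zero
  · apply hne
    simp [ev]
  · have := hne (MvPolynomial.X 0 * MvPolynomial.X 3 - MvPolynomial.X 1 ^ 2) (by simp [ev])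
    simpa only [map_mul, map_add, map_sub, map_pow, map_ofNat] using this
  · have := hne (MvPolynomial.X 0 * MvPolynomial.X 3 * MvPolynomial.X 5
      + 2 * MvPolynomial.X 1 * MvPolynomial.X 2 * MvPolynomial.X 4
      - MvPolynomial.X 0 * MvPolynomial.X 4 ^ 2 - MvPolynomial.X 3 * MvPolynomial.X 2 ^ 2
      - MvPolynomial.X 5 * MvPolynomial.X 1 ^ 2) (by simp [ev])
    simpa only [map_mul, map_add, map_sub, map_pow, map_ofNat] using this

theorem phi_det {R : Type*} [CommRing R]
    (a00 a01 a02 a11 a12 a22 b00 b01 b02 b11 b12 b22 : R) :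
    (phiMat a00 a01 a02 a11 a12 a22 b00 b01 b02 b11 b12 b22).det =
      4 * dform a00 a01 a02 a11 a12 a22 b00 b01 b02 b11 b12 b22 := by
  let ev : MvPolynomial (Fin 12) ℤ →+* R := MvPolynomial.eval₂Hom (Int.castRingHom R)
    ![a00, a01, a02, a11, a12, a22, b00, b01, b02, b11, b12, b22]
  have h := congrArg ev phi_det_univ
  rw [RingHom.map_det, RingHom.mapMatrix_apply, phiMat_map, map_mul, dform_map, map_ofNat] at h
  simpa [ev] using h

theorem disc3_scale {R : Type*} [CommRing R] (a b c d : R) :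
    disc3 (4 * a) (4 * b) (4 * c) (4 * d) = 256 * disc3 a b c d := by
  unfold disc3
  ring

theorem disc4_eq {R : Type*} [CommRing R] (A B : Matrix (Fin 3) (Fin 3) R)
    (hA : A.IsSymm) (hB : B.IsSymm) :
    disc4 A B = 256 * dform (A 0 0) (A 0 1) (A 0 2) (A 1 1) (A 1 2) (A 2 2)
      (B 0 0) (B 0 1) (B 0 2) (B 1 1) (B 1 2) (B 2 2) := by
  have hA1 := hA.apply 0 1
  have hA2 := hA.apply 0 2
  have hA3 := hA.apply 1 2
  have hB1 := hB.apply 0 1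
  have hB2 := hB.apply 0 2
  have hB3 := hB.apply 1 2
  have hp : ∃ a b c d : R, pairCubic A B =
      Polynomial.C (Polynomial.C a * Polynomial.X ^ 3)
      + Polynomial.C (Polynomial.C b * Polynomial.X ^ 2) * Polynomial.X
      + Polynomial.C (Polynomial.C c * Polynomial.X) * Polynomial.X ^ 2
      + Polynomial.C (Polynomial.C d) * Polynomial.X ^ 3 ∧
      disc3 a b c d = 256 * dform (A 0 0) (A 0 1) (A 0 2) (A 1 1) (A 1 2) (A 2 2)
      (B 0 0) (B 0 1) (B 0 2) (B 1 1) (B 1 2) (B 2 2) := by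
    refine ⟨4 * (A 0 0 * A 1 1 * A 2 2 + 2 * A 0 1 * A 0 2 * A 1 2 - A 0 0 * A 1 2 ^ 2
        - A 1 1 * A 0 2 ^ 2 - A 2 2 * A 0 1 ^ 2),
      4 * (-(B 0 0 * (A 1 1 * A 2 2 - A 1 2 ^ 2) + B 1 1 * (A 0 0 * A 2 2 - A 0 2 ^ 2)
        + B 2 2 * (A 0 0 * A 1 1 - A 0 1 ^ 2)
        + 2 * B 0 1 * (A 0 2 * A 1 2 - A 0 1 * A 2 2)
        + 2 * B 0 2 * (A 0 1 * A 1 2 - A 0 2 * A 1 1)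
        + 2 * B 1 2 * (A 0 1 * A 0 2 - A 0 0 * A 1 2))),
      4 * (A 0 0 * (B 1 1 * B 2 2 - B 1 2 ^ 2) + A 1 1 * (B 0 0 * B 2 2 - B 0 2 ^ 2)
        + A 2 2 * (B 0 0 * B 1 1 - B 0 1 ^ 2)
        + 2 * A 0 1 * (B 0 2 * B 1 2 - B 0 1 * B 2 2)
        + 2 * A 0 2 * (B 0 1 * B 1 2 - B 0 2 * B 1 1)
        + 2 * A 1 2 * (B 0 1 * B 0 2 - B 0 0 * B 1 2)),
      4 * (-(B 0 0 * B 1 1 * B 2 2 + 2 * B 0 1 * B 0 2 * B 1 2 - B 0 0 * B 1 2 ^ 2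
        - B 1 1 * B 0 2 ^ 2 - B 2 2 * B 0 1 ^ 2)), ?_, ?_⟩
    · rw [pairCubic, Matrix.det_fin_three]
      simp only [Matrix.of_apply, hA1, hA2, hA3, hB1, hB2, hB3]
      simp only [map_mul, map_add, map_sub, map_neg, map_pow, map_ofNat]
      ring
    · exact disc3_scale _ _ _ _
  obtain ⟨a, b, c, d, h1, h2⟩ := hp
  rw [disc4, h1, ← h2]
  congr 1 <;> simp [Polynomial.coeff_X, Polynomial.coeff_C, Polynomial.coeff_X_pow,
    -map_mul, -map_pow]

/-- Coordinates of a pair of symmetric matrices. -/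
def idx6 : Fin 6 → SymIdx :=
  ![⟨(0, 0), by decide⟩, ⟨(0, 1), by decide⟩, ⟨(0, 2), by decide⟩, ⟨(1, 1), by decide⟩,
    ⟨(1, 2), by decide⟩, ⟨(2, 2), by decide⟩]

theorem idx6_bij : Function.Bijective idx6 := by
  constructor
  · decide
  · decide

/-- Linear coordinates on pairs of symmetric matrices. -/
noncomputable def coordEquiv (R : Type*) [CommRing R] :
    ((SymIdx → R) × (SymIdx → R)) ≃ₗ[R] (Fin 6 ⊕ Fin 6 → R) :=
  ((LinearEquiv.funCongrLeft R R (Equiv.ofBijective idx6 idx6_bij)).prodCongr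
    (LinearEquiv.funCongrLeft R R (Equiv.ofBijective idx6 idx6_bij))) ≪≫ₗ
  (LinearEquiv.sumArrowLequivProdArrow (Fin 6) (Fin 6) R R).symm

theorem coordEquiv_apply {R : Type*} [CommRing R] (v : (SymIdx → R) × (SymIdx → R)) :
    coordEquiv R v = Sum.elim (fun i => v.1 (idx6 i)) (fun i => v.2 (idx6 i)) := by
  ext i
  rcases i with i | i <;> rfl

/-- Coordinates on the Lie algebra. -/
def lieCoord {R : Type*} (X3 : Matrix (Fin 3) (Fin 3) R) (X2 : Matrix (Fin 2) (Fin 2) R) :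
    Fin 6 ⊕ Fin 6 → R :=
  Sum.elim ![X3 0 0, X3 0 1, X3 0 2, X3 1 1, X3 1 2, X3 2 2]
    ![X3 1 0, X3 2 0, X3 2 1, X2 0 0, X2 1 0, X2 0 1]

theorem phi_mulVec {R : Type*} [CommRing R] (A B : Matrix (Fin 3) (Fin 3) R)
    (hA : A.IsSymm) (hB : B.IsSymm) (X3 : Matrix (Fin 3) (Fin 3) R)
    (X2 : Matrix (Fin 2) (Fin 2) R) (h : X3.trace = X2.trace) :
    (phiMat (A 0 0) (A 0 1) (A 0 2) (A 1 1) (A 1 2) (A 2 2)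
      (B 0 0) (B 0 1) (B 0 2) (B 1 1) (B 1 2) (B 2 2)).mulVec (lieCoord X3 X2) =
    coordEquiv R (symOf (lieAct4 X3 X2 A B).1, symOf (lieAct4 X3 X2 A B).2) := by
  have hA1 := hA.apply 0 1
  have hA2 := hA.apply 0 2
  have hA3 := hA.apply 1 2
  have hB1 := hB.apply 0 1
  have hB2 := hB.apply 0 2
  have hB3 := hB.apply 1 2
  have hw : X2 1 1 = X3 0 0 + X3 1 1 + X3 2 2 - X2 0 0 := by
    rw [Matrix.trace_fin_three, Matrix.trace_fin_two] at h
    rw [h]; ring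
  rw [coordEquiv_apply, phiMat, lieCoord, Matrix.fromBlocks_mulVec]
  ext i
  rcases i with i | i
  · simp only [Sum.elim_inl, Sum.elim_comp_inl, Sum.elim_comp_inr, Pi.add_apply, Matrix.mulVec,
      dotProduct, Fin.sum_univ_six]
    unfold phi11 phi12 symOf lieAct4 idx6
    fin_cases i <;>
      simp [Matrix.mul_apply, Fin.sum_univ_three, hA1, hA2, hA3, hB1, hB2, hB3, hw] <;> ring
  · simp only [Sum.elim_inr, Sum.elim_comp_inl, Sum.elim_comp_inr, Pi.add_apply, Matrix.mulVec,
      dotProduct, Fin.sum_univ_six]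
    unfold phi21 phi22 symOf lieAct4 idx6
    fin_cases i <;>
      simp [Matrix.mul_apply, Fin.sum_univ_three, hA1, hA2, hA3, hB1, hB2, hB3, hw] <;> ring

theorem lieCoord_surj {R : Type*} [CommRing R] (w : Fin 6 ⊕ Fin 6 → R) :
    ∃ X3 X2, Matrix.trace X3 = Matrix.trace X2 ∧ lieCoord X3 X2 = w := by
  refine ⟨!![w (.inl 0), w (.inl 1), w (.inl 2); w (.inr 0), w (.inl 3), w (.inl 4);
      w (.inr 1), w (.inr 2), w (.inl 5)],
    !![w (.inr 3), w (.inr 5); w (.inr 4), w (.inl 0) + w (.inl 3) + w (.inl 5) - w (.inr 3)],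
    ?_, ?_⟩
  · rw [Matrix.trace_fin_three, Matrix.trace_fin_two]
    simp
  · ext i
    rcases i with i | i <;> fin_cases i <;> simp [lieCoord]


theorem ps_quot {k : Type*} [Field k] (a : PowerSeries k) (ha : a ≠ 0) :
    FiniteDimensional k (PowerSeries k ⧸ Ideal.span ({a} : Set (PowerSeries k))) ∧
    ((Module.finrank k (PowerSeries k ⧸ Ideal.span ({a} : Set (PowerSeries k))) : ℕ) : ℕ∞) = a.order := by
  set n := a.order.toNat with hn
  have hord : (n : ℕ∞) = a.order := by
    rw [hn, ENat.natCast_toNat]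
    exact fun h => ha (PowerSeries.order_eq_top.mp h)
  let I := Ideal.span ({a} : Set (PowerSeries k))
  have hI : ∀ x : PowerSeries k, x ∈ I ↔ ∀ m, m < n → PowerSeries.coeff m x = 0 := by
    intro x
    rw [← PowerSeries.X_pow_dvd_iff, Ideal.mem_span_singleton]
    have h1 : a ∣ PowerSeries.X ^ n ∧ PowerSeries.X ^ n ∣ a := by
      have h2 := PowerSeries.X_pow_order_mul_divXPowOrder (f := a)
      refine ⟨⟨PowerSeries.Inv_divided_by_X_pow_order ha, ?_⟩, PowerSeries.X_pow_order_dvd⟩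
      calc PowerSeries.X ^ n
          = (PowerSeries.X ^ n * a.divXPowOrder) * PowerSeries.Inv_divided_by_X_pow_order ha := by
            rw [mul_assoc, PowerSeries.Inv_divided_by_X_pow_order_rightInv, mul_one]
        _ = a * PowerSeries.Inv_divided_by_X_pow_order ha :=
            congrArg (· * PowerSeries.Inv_divided_by_X_pow_order ha) h2
    exact ⟨fun h => h1.2.trans h, fun h => h1.1.trans h⟩
  let g : PowerSeries k →ₗ[k] (Fin n → k) := LinearMap.pi fun i => PowerSeries.coeff (i : ℕ)
  have hker : LinearMap.ker g = I.restrictScalars k := by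
    ext x
    rw [LinearMap.mem_ker, Submodule.restrictScalars_mem, hI]
    constructor
    · intro h m hm
      exact congrFun h ⟨m, hm⟩
    · intro h
      funext i
      exact h i i.2
  have hsurj : Function.Surjective g := by
    intro y
    refine ⟨PowerSeries.mk fun m => if h : m < n then y ⟨m, h⟩ else 0, ?_⟩
    funext i
    simp [g]
  let e : (PowerSeries k ⧸ I) ≃ₗ[k] (Fin n → k) :=
    (Submodule.Quotient.restrictScalarsEquiv k I).symm ≪≫ₗ
      (Submodule.quotEquivOfEq _ _ hker.symm) ≪≫ₗ g.quotKerEquivOfSurjective hsurj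
  refine ⟨Module.Finite.equiv e.symm, ?_⟩
  rw [e.finrank_eq, Module.finrank_fin_fun, hord]

theorem coker_det {k V ι : Type*} [Field k] [Fintype ι] [AddCommGroup V] [Module k V]
    [Module (PowerSeries k) V] [IsScalarTower k (PowerSeries k) V]
    (b : Module.Basis ι (PowerSeries k) V) (f : V →ₗ[PowerSeries k] V) (hf : LinearMap.det f ≠ 0) :
    FiniteDimensional k (V ⧸ LinearMap.range f) ∧
      ((Module.finrank k (V ⧸ LinearMap.range f) : ℕ) : ℕ∞) = (LinearMap.det f).order := by
  classical
  have hfin : Module.Finite (PowerSeries k) V := Module.Finite.of_basis b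
  have hfree : Module.Free (PowerSeries k) V := Module.Free.of_basis b
  have hinj : Function.Injective f := by
    rw [← LinearMap.ker_eq_bot]
    by_contra hk
    exact hf (LinearMap.det_eq_zero_iff_ker_ne_bot.mpr hk)
  let e0 := LinearEquiv.ofInjective f hinj
  have h : Module.finrank (PowerSeries k) (LinearMap.range f) = Module.finrank (PowerSeries k) V :=
    e0.symm.finrank_eq
  have hne := Submodule.smithNormalFormCoeffs_ne_zero b h
  have hfd := fun i => (ps_quot _ (hne i)).1
  have hassoc : Associated (LinearMap.det f) (∏ i, Submodule.smithNormalFormCoeffs b h i) := by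
    let b' := Submodule.smithNormalFormTopBasis b h
    rw [← Matrix.det_diagonal, ← LinearMap.det_toLin b']
    let e := (b'.equiv (Submodule.smithNormalFormBotBasis b h) (Equiv.refl _)).trans e0.symm
    refine (LinearMap.associated_det_of_eq_comp e _ _ ?_).symm
    intro x
    suffices (Matrix.toLin b' b' (Matrix.diagonal (Submodule.smithNormalFormCoeffs b h))) =
        f ∘ₗ (e : V →ₗ[PowerSeries k] V) from LinearMap.congr_fun this x
    refine b'.ext fun i => ?_
    have h2 : f (e (b' i)) = (Submodule.smithNormalFormBotBasis b h i : V) := by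
      have : ∀ y, f (e0.symm y) = y := fun y => by
        rw [← LinearEquiv.ofInjective_apply f (h := hinj), LinearEquiv.apply_symm_apply]
      simp [e, this]
    rw [LinearMap.comp_apply, LinearEquiv.coe_coe, h2, Submodule.smithNormalFormBotBasis_def]
    simp_rw [Matrix.toLin_apply, Module.Basis.repr_self,
      Finsupp.single_eq_pi_single, Matrix.diagonal_mulVec_single, Pi.single_apply, ite_smul,
      zero_smul, Finset.sum_ite_eq', mul_one, if_pos (Finset.mem_univ _)]
    rfl
  constructor
  · exact Module.Finite.equiv ((Submodule.quotientEquivPiSpan _ b h).restrictScalars k).symm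
  · rw [Submodule.finrank_quotient_eq_sum k b h]
    obtain ⟨u, hu⟩ := hassoc
    have hu0 : (u : PowerSeries k).order = 0 := by
      exact PowerSeries.order_zero_of_unit u.isUnit
    have h3 : (LinearMap.det f).order = (∏ i, Submodule.smithNormalFormCoeffs b h i).order := by
      rw [← hu, PowerSeries.order_mul, hu0, add_zero]
    rw [h3]
    push_cast
    rw [Finset.sum_congr rfl (fun i _ => (ps_quot _ (hne i)).2)]
    induction (Finset.univ : Finset ι) using Finset.induction_on with
    | empty => simp
    | insert a s ha ih => rw [Finset.sum_insert ha, Finset.prod_insert ha, PowerSeries.order_mul, ih]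

/-- Let `k` be a field of characteristic not `2` or `3`, and let `(A,B)` be a pair of
symmetric 3×3 matrices over `k⟦t⟧` with `Δ₄(A,B) ≠ 0`.  If `M ⊆ Sym₃(k⟦t⟧)²` is the image
of the Lie algebra action map `𝔤₄(k⟦t⟧) → Sym₃(k⟦t⟧)²`, `(X₃,X₂) ↦ (X₃,X₂)·(A,B)`, then
`Sym₃(k⟦t⟧)²/M` is a finite-dimensional `k`-vector space of dimension equal to the
`t`-adic order of `Δ₄(A,B)`. -/
theorem finrank_quotient_lieAct4_eq_order_disc4 {k : Type*} [Field k]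
    (hchar2 : ringChar k ≠ 2) (hchar3 : ringChar k ≠ 3)
    (A B : Matrix (Fin 3) (Fin 3) (PowerSeries k))
    (hA : A.IsSymm) (hB : B.IsSymm)
    (hv : disc4 A B ≠ 0)
    (M : Submodule (PowerSeries k) ((SymIdx → PowerSeries k) × (SymIdx → PowerSeries k)))
    (hM : (M : Set ((SymIdx → PowerSeries k) × (SymIdx → PowerSeries k))) =
      Set.range (fun X : {Y : Matrix (Fin 3) (Fin 3) (PowerSeries k) ×
          Matrix (Fin 2) (Fin 2) (PowerSeries k) // Y.1.trace = Y.2.trace} =>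
        (symOf (lieAct4 X.1.1 X.1.2 A B).1, symOf (lieAct4 X.1.1 X.1.2 A B).2))) :
    FiniteDimensional k (((SymIdx → PowerSeries k) × (SymIdx → PowerSeries k)) ⧸ M) ∧
      (Module.finrank k (((SymIdx → PowerSeries k) × (SymIdx → PowerSeries k)) ⧸ M) : ℕ∞) =
        PowerSeries.order (disc4 A B) := by
  have h2 : (2 : k) ≠ 0 := Ring.two_ne_zero hchar2
  set D := (phiMat (A 0 0) (A 0 1) (A 0 2) (A 1 1) (A 1 2) (A 2 2)
      (B 0 0) (B 0 1) (B 0 2) (B 1 1) (B 1 2) (B 2 2)) with hD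
  have hdisc : disc4 A B = PowerSeries.C (64 : k) * D.det := by
    rw [disc4_eq A B hA hB, hD, phi_det, map_ofNat]
    ring
  have h64 : (PowerSeries.C (64 : k)).order = 0 := by
    apply PowerSeries.order_zero_of_unit
    apply IsUnit.map
    have : (64 : k) = 2 ^ 6 := by norm_num
    rw [this]
    exact (pow_ne_zero 6 h2).isUnit
  let e := coordEquiv (PowerSeries k)
  let f := e.symm.toLinearMap ∘ₗ Matrix.toLin' D ∘ₗ e.toLinearMap
  have hdet : LinearMap.det f = D.det := by
    have := LinearMap.det_conj (Matrix.toLin' D) e.symm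
    rw [LinearEquiv.symm_symm, LinearMap.det_toLin'] at this
    exact this
  have hrange : M = LinearMap.range f := by
    apply SetLike.ext'
    rw [hM, LinearMap.coe_range]
    ext y
    constructor
    · rintro ⟨⟨⟨X3, X2⟩, hX⟩, rfl⟩
      refine ⟨e.symm (lieCoord X3 X2), ?_⟩
      apply e.injective
      simp only [f, LinearMap.comp_apply, LinearEquiv.coe_coe, LinearEquiv.apply_symm_apply,
        Matrix.toLin'_apply]
      exact phi_mulVec A B hA hB X3 X2 hX
    · rintro ⟨v, rfl⟩
      obtain ⟨X3, X2, hX, hw⟩ := lieCoord_surj (e v)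
      refine ⟨⟨⟨X3, X2⟩, hX⟩, ?_⟩
      apply e.injective
      simp only [f, LinearMap.comp_apply, LinearEquiv.coe_coe, LinearEquiv.apply_symm_apply,
        Matrix.toLin'_apply]
      rw [← hw]
      exact (phi_mulVec A B hA hB X3 X2 hX).symm
  have hne : LinearMap.det f ≠ 0 := by
    intro h
    apply hv
    rw [hdisc, ← hdet, h, mul_zero]
  have hmain := coker_det ((Pi.basisFun (PowerSeries k) SymIdx).prod
    (Pi.basisFun (PowerSeries k) SymIdx)) f hne
  rw [hdisc, PowerSeries.order_mul, h64, zero_add, ← hdet, hrange]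
  exact hmain
end

section
/- Let R be a commutative ring in which 6 is invertible, and let (A,B) be a pair of symmetric 3×3 matrices over R with Δ₄(A,B) a unit of R. Then the R-linear map 𝔤₄(R) → Sym₃(R)² sending (X₃,X₂) to (X₃,X₂)·(A,B) is bijective, where Sym₃(R) denotes the R-module of symmetric 3×3 matrices over R (both source and target are free R-modules of rank 12). -/
/-- The cubic form of a pair, with explicit coefficients. -/
def cfA {R : Type*} [CommRing R] (A : Matrix (Fin 3) (Fin 3) R) : R := 4 * A.det

/-- Polarised adjugate of two 3×3 matrices. -/
def polAdj {R : Type*} [CommRing R] (A B : Matrix (Fin 3) (Fin 3) R) :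
    Matrix (Fin 3) (Fin 3) R :=
  (A + B).adjugate - A.adjugate - B.adjugate

def cfB {R : Type*} [CommRing R] (A B : Matrix (Fin 3) (Fin 3) R) : R :=
  -4 * (A.adjugate * B).trace

def cfC {R : Type*} [CommRing R] (A B : Matrix (Fin 3) (Fin 3) R) : R :=
  4 * (B.adjugate * A).trace

theorem pairCubic_eq {R : Type*} [CommRing R] (A B : Matrix (Fin 3) (Fin 3) R) :
    pairCubic A B =
      Polynomial.C (Polynomial.C (cfA A) * Polynomial.X ^ 3)
      + Polynomial.C (Polynomial.C (cfB A B) * Polynomial.X ^ 2) * Polynomial.X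
      + Polynomial.C (Polynomial.C (cfC A B) * Polynomial.X) * Polynomial.X ^ 2
      + Polynomial.C (Polynomial.C (-cfA B)) * Polynomial.X ^ 3 := by
  simp only [pairCubic, cfA, cfB, cfC, Matrix.det_fin_three, Matrix.adjugate_fin_three,
    Matrix.trace_fin_three, Matrix.mul_apply, Fin.sum_univ_three, Matrix.of_apply,
    Matrix.cons_val, Matrix.cons_val_zero, Matrix.cons_val_one, map_mul, map_add, map_sub, map_neg, map_pow, map_ofNat]
  ring

theorem disc4_eq_s13 {R : Type*} [CommRing R] (A B : Matrix (Fin 3) (Fin 3) R) :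
    disc4 A B = disc3 (cfA A) (cfB A B) (cfC A B) (-cfA B) := by
  unfold disc4
  rw [pairCubic_eq]
  congr 1 <;>
  simp [Polynomial.coeff_X, Polynomial.coeff_C, Polynomial.coeff_X_pow, -map_mul, -map_neg, -map_pow]

theorem cf_deriv {R : Type*} [CommRing R] (A B X : Matrix (Fin 3) (Fin 3) R)
    (hA : A.IsSymm) (hB : B.IsSymm) (p q r s : R)
    (h1 : X * A + A * X.transpose = p • A + r • B)
    (h2 : X * B + B * X.transpose = q • A + s • B) :
    3 * cfA A * p - r * cfB A B = 2 * X.trace * cfA A ∧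
    2 * cfB A B * p - 3 * q * cfA A + s * cfB A B - 2 * r * cfC A B = 2 * X.trace * cfB A B ∧
    cfC A B * p - 2 * q * cfB A B + 2 * s * cfC A B - 3 * r * (-cfA B)
      = 2 * X.trace * cfC A B ∧
    - q * cfC A B + 3 * (-cfA B) * s = 2 * X.trace * (-cfA B) := by
  have a10 := hA.apply 0 1
  have a20 := hA.apply 0 2
  have a21 := hA.apply 1 2
  have b10 := hB.apply 0 1
  have b20 := hB.apply 0 2
  have b21 := hB.apply 1 2
  have g1 := congrArg (fun Z => (A.adjugate * Z).trace) h1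
  have g2 := congrArg (fun Z => (polAdj A B * Z).trace) h1
  have g3 := congrArg (fun Z => (A.adjugate * Z).trace) h2
  have g4 := congrArg (fun Z => (B.adjugate * Z).trace) h1
  have g5 := congrArg (fun Z => (polAdj A B * Z).trace) h2
  have g6 := congrArg (fun Z => (B.adjugate * Z).trace) h2
  clear h1 h2
  simp only [polAdj, Matrix.adjugate_fin_three, Matrix.trace_fin_three, Matrix.mul_apply,
    Fin.sum_univ_three, Matrix.of_apply, Matrix.cons_val, Matrix.cons_val_zero, Matrix.cons_val_one, Matrix.add_apply,
    Matrix.sub_apply, Matrix.smul_apply, smul_eq_mul, Matrix.transpose_apply,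
    a10, a20, a21, b10, b20, b21] at g1 g2 g3 g4 g5 g6
  simp only [cfA, cfB, cfC, Matrix.det_fin_three, Matrix.adjugate_fin_three,
    Matrix.trace_fin_three, Matrix.mul_apply, Fin.sum_univ_three, Matrix.of_apply,
    Matrix.cons_val, Matrix.cons_val_zero, Matrix.cons_val_one, a10, a20, a21, b10, b20, b21]
  refine ⟨?_, ?_, ?_, ?_⟩
  · linear_combination (-4) * g1
  · linear_combination 4 * g2 + 4 * g3
  · linear_combination (-4) * g4 + (-4) * g5
  · linear_combination 4 * g6

theorem cubic_stab {K : Type*} [Field K] (a b c d p q r s : K)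
    (hd : disc3 a b c d ≠ 0)
    (e1 : 3 * a * p - r * b = 2 * (p + s) * a)
    (e2 : 2 * b * p - 3 * q * a + s * b - 2 * r * c = 2 * (p + s) * b)
    (e3 : c * p - 2 * q * b + 2 * s * c - 3 * r * d = 2 * (p + s) * c)
    (e4 : - q * c + 3 * d * s = 2 * (p + s) * d) :
    p = 0 ∧ q = 0 ∧ r = 0 ∧ s = 0 := by
  let N : Matrix (Fin 4) (Fin 4) K :=
    !![a, 0, -b, -2*a; 0, -3*a, -2*c, -b; -c, -2*b, -3*d, 0; -2*d, -c, 0, d]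
  have hN : N.det = disc3 a b c d := by
    simp [N, Matrix.det_succ_row_zero, Fin.sum_univ_succ, disc3, Fin.succAbove]
    ring
  have hv : N.mulVec ![p, q, r, s] = 0 := by
    funext i
    fin_cases i
    · simp [N, Matrix.mulVec, dotProduct, Fin.sum_univ_four]; linear_combination e1
    · simp [N, Matrix.mulVec, dotProduct, Fin.sum_univ_four]; linear_combination e2
    · simp [N, Matrix.mulVec, dotProduct, Fin.sum_univ_four]; linear_combination e3
    · simp [N, Matrix.mulVec, dotProduct, Fin.sum_univ_four]; linear_combination e4
  have := Matrix.eq_zero_of_mulVec_eq_zero (hN ▸ hd) hv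
  exact ⟨congrFun this 0, congrFun this 1, congrFun this 2, congrFun this 3⟩

theorem rank_one_form {K : Type*} [Field K]
    (s1 s2 s3 m11 m12 m13 m21 m22 m23 m31 m32 m33 : K) (hs : s1 ≠ 0)
    (e22 : s3 * m12 = s1 * m32) (e33 : s2 * m13 = s1 * m23)
    (e12 : -s3 * m22 + s2 * m32 + s3 * m11 - s1 * m31 = 0)
    (e13 : -s3 * m23 + s2 * m33 - s2 * m11 + s1 * m21 = 0)
    (e23 : s3 * m13 - s1 * m33 - s2 * m12 + s1 * m22 = 0) :
    ∃ k w1 w2 w3 : K,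
      m11 = k + s1 * w1 ∧ m12 = s1 * w2 ∧ m13 = s1 * w3 ∧
      m21 = s2 * w1 ∧ m22 = k + s2 * w2 ∧ m23 = s2 * w3 ∧
      m31 = s3 * w1 ∧ m32 = s3 * w2 ∧ m33 = k + s3 * w3 := by
  obtain ⟨w2, rfl⟩ : ∃ w, m12 = s1 * w := ⟨m12 / s1, by field_simp⟩
  obtain ⟨w3, rfl⟩ : ∃ w, m13 = s1 * w := ⟨m13 / s1, by field_simp⟩
  obtain ⟨k, rfl⟩ : ∃ k, m22 = k + s2 * w2 := ⟨m22 - s2 * w2, by ring⟩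
  obtain ⟨w1, rfl⟩ : ∃ w, m11 = k + s1 * w := ⟨(m11 - k) / s1, by field_simp; ring⟩
  have h23 : m23 = s2 * w3 := mul_left_cancel₀ hs (by linear_combination -e33)
  have h32 : m32 = s3 * w2 := mul_left_cancel₀ hs (by linear_combination -e22)
  subst h23 h32
  have h33 : m33 = k + s3 * w3 := mul_left_cancel₀ hs (by linear_combination -e23)
  subst h33
  exact ⟨k, w1, w2, w3, rfl, rfl, rfl, mul_left_cancel₀ hs (by linear_combination e13), rfl, rfl,
    mul_left_cancel₀ hs (by linear_combination -e12), rfl, rfl⟩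

theorem disc_rank_one {R : Type*} [CommRing R] (C M : Matrix (Fin 3) (Fin 3) R)
    (k : R) (s w : Fin 3 → R)
    (hM : M = k • (1 : Matrix (Fin 3) (Fin 3) R) + Matrix.vecMulVec s w) :
    disc4 C (C * M) = 0 := by
  have hb : cfB C (C * M) = -(4 * C.det) * M.trace := by
    rw [cfB, ← Matrix.mul_assoc, Matrix.adjugate_mul, Matrix.smul_mul, Matrix.one_mul,
      Matrix.trace_smul, smul_eq_mul]
    ring
  have hc : cfC C (C * M) = (4 * C.det) * M.adjugate.trace := by
    rw [cfC, Matrix.adjugate_mul_distrib, Matrix.mul_assoc, Matrix.adjugate_mul, Matrix.mul_smul,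
      Matrix.mul_one, Matrix.trace_smul, smul_eq_mul]
    ring
  have hd : cfA (C * M) = (4 * C.det) * M.det := by
    rw [cfA, Matrix.det_mul]; ring
  rw [disc4_eq_s13, hb, hc, hd, cfA]
  generalize C.det = δ
  have t1 : M.trace = 3 * k + (s 0 * w 0 + s 1 * w 1 + s 2 * w 2) := by
    subst hM
    simp [dotProduct, Fin.sum_univ_three]
    ring
  have t2 : M.adjugate.trace = 3 * k ^ 2 + 2 * k * (s 0 * w 0 + s 1 * w 1 + s 2 * w 2) := by
    subst hM
    simp [Matrix.trace_fin_three, Matrix.adjugate_fin_three, Matrix.vecMulVec_apply]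
    ring
  have t3 : M.det = k ^ 3 + k ^ 2 * (s 0 * w 0 + s 1 * w 1 + s 2 * w 2) := by
    subst hM
    simp [Matrix.det_fin_three, Matrix.vecMulVec_apply]
    ring
  rw [t1, t2, t3, disc3]
  ring

theorem skew_zero {K : Type*} [Field K] (h2 : (2 : K) ≠ 0)
    (C M S : Matrix (Fin 3) (Fin 3) K)
    (hS : S.transpose = -S) (hSM : (S * M).transpose = -(S * M))
    (hd : disc4 C (C * M) ≠ 0) : S = 0 := by
  have hz : ∀ x : K, x = -x → x = 0 := fun x hx => by
    have : 2 * x = 0 := by linear_combination hx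
    exact (mul_eq_zero.1 this).resolve_left h2
  have q : ∀ i j, S j i = - S i j := fun i j => congrFun (congrFun hS i) j
  have q00 := hz _ (q 0 0)
  have q11 := hz _ (q 1 1)
  have q22 := hz _ (q 2 2)
  have q10 := q 0 1
  have q02 := q 2 0
  have q21 := q 1 2
  have e : ∀ i j, (S * M) j i = - (S * M) i j := fun i j => congrFun (congrFun hSM i) j
  have e00 := hz _ (e 0 0)
  have e11 := hz _ (e 1 1)
  have e22 := hz _ (e 2 2)
  have e01 := e 0 1
  have e02 := e 0 2
  have e12 := e 1 2
  simp only [Matrix.mul_apply, Fin.sum_univ_three, q00, q11, q22, q10, q02, q21]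
    at e00 e11 e22 e01 e02 e12
  -- s1 = - S 1 2, s2 = - S 2 0, s3 = - S 0 1
  by_contra hne
  have key : ∃ k w1 w2 w3 : K,
      M 0 0 = k + S 1 2 * w1 ∧ M 0 1 = S 1 2 * w2 ∧ M 0 2 = S 1 2 * w3 ∧
      M 1 0 = S 2 0 * w1 ∧ M 1 1 = k + S 2 0 * w2 ∧ M 1 2 = S 2 0 * w3 ∧
      M 2 0 = S 0 1 * w1 ∧ M 2 1 = S 0 1 * w2 ∧ M 2 2 = k + S 0 1 * w3 := by
    by_cases c1 : S 1 2 = 0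
    · by_cases c2 : S 2 0 = 0
      · by_cases c3 : S 0 1 = 0
        · exfalso
          apply hne
          ext i j
          fin_cases i <;> fin_cases j <;> simp [q00, q11, q22, q10, q02, q21, c1, c2, c3]
        · obtain ⟨k, w1, w2, w3, h⟩ := rank_one_form (S 0 1) (S 1 2) (S 2 0)
            (M 2 2) (M 2 0) (M 2 1) (M 0 2) (M 0 0) (M 0 1) (M 1 2) (M 1 0) (M 1 1) c3
            (by linear_combination -e00) (by linear_combination e11)
            (by linear_combination -e02) (by linear_combination -e12)
            (by linear_combination -e01)
          exact ⟨k, w2, w3, w1, by tauto⟩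
      · obtain ⟨k, w1, w2, w3, h⟩ := rank_one_form (S 2 0) (S 0 1) (S 1 2)
            (M 1 1) (M 1 2) (M 1 0) (M 2 1) (M 2 2) (M 2 0) (M 0 1) (M 0 2) (M 0 0) c2
            (by linear_combination -e22) (by linear_combination e00)
            (by linear_combination -e12) (by linear_combination -e01)
            (by linear_combination -e02)
        exact ⟨k, w3, w1, w2, by tauto⟩
    · exact rank_one_form (S 1 2) (S 2 0) (S 0 1)
            (M 0 0) (M 0 1) (M 0 2) (M 1 0) (M 1 1) (M 1 2) (M 2 0) (M 2 1) (M 2 2) c1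
            (by linear_combination -e11) (by linear_combination e22)
            (by linear_combination -e01) (by linear_combination -e02)
            (by linear_combination -e12)
  obtain ⟨k, w1, w2, w3, h1, h2, h3, h4, h5, h6, h7, h8, h9⟩ := key
  apply hd
  apply disc_rank_one C M k ![S 1 2, S 2 0, S 0 1] ![w1, w2, w3]
  ext i j
  fin_cases i <;> fin_cases j <;> simp [Matrix.vecMulVec_apply, h1, h2, h3, h4, h5, h6, h7, h8, h9]

theorem disc4_translate {R : Type*} [CommRing R] (A B : Matrix (Fin 3) (Fin 3) R) (y : R) :
    cfA (A - y • B) = cfA A + cfB A B * y + cfC A B * y ^ 2 + (-cfA B) * y ^ 3 ∧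
    disc4 (A - y • B) B = disc4 A B := by
  have h1 : cfA (A - y • B) = cfA A + cfB A B * y + cfC A B * y ^ 2 + (-cfA B) * y ^ 3 := by
    simp only [cfA, cfB, cfC, Matrix.det_fin_three, Matrix.adjugate_fin_three,
      Matrix.trace_fin_three, Matrix.mul_apply, Fin.sum_univ_three, Matrix.of_apply,
      Matrix.cons_val, Matrix.cons_val_zero, Matrix.cons_val_one, Matrix.sub_apply, Matrix.smul_apply, smul_eq_mul]
    ring
  have h2 : cfB (A - y • B) B = cfB A B + 2 * cfC A B * y + 3 * (-cfA B) * y ^ 2 := by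
    simp only [cfA, cfB, cfC, Matrix.det_fin_three, Matrix.adjugate_fin_three,
      Matrix.trace_fin_three, Matrix.mul_apply, Fin.sum_univ_three, Matrix.of_apply,
      Matrix.cons_val, Matrix.cons_val_zero, Matrix.cons_val_one, Matrix.sub_apply, Matrix.smul_apply, smul_eq_mul]
    ring
  have h3 : cfC (A - y • B) B = cfC A B + 3 * (-cfA B) * y := by
    simp only [cfA, cfB, cfC, Matrix.det_fin_three, Matrix.adjugate_fin_three,
      Matrix.trace_fin_three, Matrix.mul_apply, Fin.sum_univ_three, Matrix.of_apply,
      Matrix.cons_val, Matrix.cons_val_zero, Matrix.cons_val_one, Matrix.sub_apply, Matrix.smul_apply, smul_eq_mul]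
    ring
  refine ⟨h1, ?_⟩
  rw [disc4_eq_s13, disc4_eq_s13, h1, h2, h3, disc3, disc3]
  ring

theorem exists_nonroot {K : Type*} [Field K] [Infinite K] (a b c d : K)
    (hd : disc3 a b c d ≠ 0) : ∃ y : K, a + b * y + c * y ^ 2 + d * y ^ 3 ≠ 0 := by
  by_contra! h
  have hp : (Polynomial.C a + Polynomial.C b * Polynomial.X + Polynomial.C c * Polynomial.X ^ 2
      + Polynomial.C d * Polynomial.X ^ 3 : Polynomial K) = 0 := by
    apply Polynomial.funext
    intro y
    simpa using h y
  have k0 := congrArg (fun f => Polynomial.coeff f 0) hp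
  have k1 := congrArg (fun f => Polynomial.coeff f 1) hp
  have k2 := congrArg (fun f => Polynomial.coeff f 2) hp
  have k3 := congrArg (fun f => Polynomial.coeff f 3) hp
  simp [Polynomial.coeff_X, Polynomial.coeff_C, Polynomial.coeff_X_pow] at k0 k1 k2 k3
  apply hd
  subst k0 k1 k2 k3
  simp [disc3]

theorem stab_zero {K : Type*} [Field K] [Infinite K] (h2 : (2 : K) ≠ 0)
    (A B X : Matrix (Fin 3) (Fin 3) K) (hA : A.IsSymm) (hB : B.IsSymm)
    (hd : disc4 A B ≠ 0) (p q r s : K) (ht : X.trace = p + s)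
    (e1 : X * A + A * X.transpose = p • A + r • B)
    (e2 : X * B + B * X.transpose = q • A + s • B) :
    X = 0 ∧ p = 0 ∧ q = 0 ∧ r = 0 ∧ s = 0 := by
  have hd' := hd
  rw [disc4_eq_s13] at hd'
  obtain ⟨g1, g2, g3, g4⟩ := cf_deriv A B X hA hB p q r s e1 e2
  rw [ht] at g1 g2 g3 g4
  obtain ⟨rfl, rfl, rfl, rfl⟩ := cubic_stab _ _ _ _ p q r s hd' g1 g2 g3 g4
  refine ⟨?_, rfl, rfl, rfl, rfl⟩
  obtain ⟨y, hy⟩ := exists_nonroot _ _ _ _ hd'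
  obtain ⟨t1, t2⟩ := disc4_translate A B y
  rw [← t1] at hy
  rw [← t2] at hd
  simp only [zero_smul, add_zero] at e1 e2
  have hCs : (A - y • B).transpose = A - y • B := by
    rw [Matrix.transpose_sub, Matrix.transpose_smul, hA.eq, hB.eq]
  have e3 : X * (A - y • B) + (A - y • B) * X.transpose = 0 := by
    have : X * (A - y • B) + (A - y • B) * X.transpose
        = (X * A + A * X.transpose) - y • (X * B + B * X.transpose) := by
      rw [mul_sub, sub_mul, Matrix.mul_smul, Matrix.smul_mul, smul_add]; abel
    rw [this, e1, e2]; simp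
  generalize A - y • B = C at *
  have hC : IsUnit C.det := by
    rw [isUnit_iff_ne_zero]
    rintro h
    apply hy
    rw [cfA, h, mul_zero]
  have hCM : C * (C⁻¹ * B) = B := by rw [← Matrix.mul_assoc, Matrix.mul_nonsing_inv _ hC, one_mul]
  have hS : X * C = 0 := by
    apply skew_zero h2 C (C⁻¹ * B)
    · rw [Matrix.transpose_mul, hCs]; exact (neg_eq_of_add_eq_zero_right e3).symm
    · rw [Matrix.mul_assoc, hCM, Matrix.transpose_mul, hB.eq]
      exact (neg_eq_of_add_eq_zero_right e2).symm
    · rw [hCM]; exact hd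
  calc X = X * C * C⁻¹ := by rw [Matrix.mul_assoc, Matrix.mul_nonsing_inv _ hC, mul_one]
    _ = 0 := by rw [hS, zero_mul]

abbrev SrcIdx : Type := (Fin 3 × Fin 3) ⊕ (Fin 2 × Fin 2)

abbrev TgtIdx : Type := SymIdx ⊕ (SymIdx ⊕ Unit)

def src3 {R : Type*} (x : SrcIdx → R) : Matrix (Fin 3) (Fin 3) R :=
  Matrix.of fun i j => x (Sum.inl (i, j))

def src2 {R : Type*} (x : SrcIdx → R) : Matrix (Fin 2) (Fin 2) R :=
  Matrix.of fun i j => x (Sum.inr (i, j))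

/-- The action map, extended by the trace condition to a map between free modules of rank 13. -/
def extMap {R : Type*} [CommRing R] (A B : Matrix (Fin 3) (Fin 3) R) :
    (SrcIdx → R) →ₗ[R] (TgtIdx → R) where
  toFun x := Sum.elim (symOf (lieAct4 (src3 x) (src2 x) A B).1)
    (Sum.elim (symOf (lieAct4 (src3 x) (src2 x) A B).2)
      (fun _ => (src3 x).trace - (src2 x).trace))
  map_add' x y := by
    funext j
    rcases j with j | j | j <;>
    simp [symOf, lieAct4, src3, src2, Matrix.mul_apply, Fin.sum_univ_three, Matrix.trace_fin_three,
      Matrix.trace_fin_two] <;> ring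
  map_smul' c x := by
    funext j
    rcases j with j | j | j <;>
    simp [symOf, lieAct4, src3, src2, Matrix.mul_apply, Fin.sum_univ_three, Matrix.trace_fin_three,
      Matrix.trace_fin_two] <;> ring

theorem extMap_map {R S : Type*} [CommRing R] [CommRing S] (φ : R →+* S)
    (A B : Matrix (Fin 3) (Fin 3) R) (x : SrcIdx → R) (j : TgtIdx) :
    φ (extMap A B x j) = extMap (A.map φ) (B.map φ) (fun i => φ (x i)) j := by
  rcases j with j | j | j <;>
  simp [extMap, symOf, lieAct4, src3, src2, Matrix.mul_apply, Fin.sum_univ_three,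
    Matrix.trace_fin_three, Matrix.trace_fin_two]

theorem disc4_map {R S : Type*} [CommRing R] [CommRing S] (φ : R →+* S)
    (A B : Matrix (Fin 3) (Fin 3) R) : φ (disc4 A B) = disc4 (A.map φ) (B.map φ) := by
  simp only [disc4_eq_s13, disc3, cfA, cfB, cfC, Matrix.det_fin_three, Matrix.adjugate_fin_three,
    Matrix.trace_fin_three, Matrix.mul_apply, Fin.sum_univ_three, Matrix.of_apply,
    Matrix.cons_val, Matrix.cons_val_zero, Matrix.cons_val_one, map_mul, map_add, map_sub, map_neg, map_pow, map_ofNat, Matrix.map_apply]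

theorem sym_ext {R : Type*} (P Q : Matrix (Fin 3) (Fin 3) R) (hP : P.IsSymm) (hQ : Q.IsSymm)
    (h : symOf P = symOf Q) : P = Q := by
  ext i j
  rcases le_total i j with hij | hij
  · exact congrFun h ⟨(i, j), hij⟩
  · rw [← hP.apply, ← hQ.apply]
    exact congrFun h ⟨(j, i), hij⟩

theorem extMap_inj {K : Type*} [Field K] [Infinite K] (h2 : (2 : K) ≠ 0)
    (A B : Matrix (Fin 3) (Fin 3) K) (hA : A.IsSymm) (hB : B.IsSymm)
    (hd : disc4 A B ≠ 0) (x : SrcIdx → K) (hx : extMap A B x = 0) : x = 0 := by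
  have hl : ∀ (Y D : Matrix (Fin 3) (Fin 3) K), D.IsSymm →
      (Y * D + D * Y.transpose).IsSymm := by
    intro Y D hD
    unfold Matrix.IsSymm
    rw [Matrix.transpose_add, Matrix.transpose_mul, Matrix.transpose_mul, hD.eq,
      Matrix.transpose_transpose, add_comm]
  have hr : ∀ a b : K, (a • A + b • B).IsSymm := fun a b => (hA.smul a).add (hB.smul b)
  have e1 : src3 x * A + A * (src3 x).transpose = src2 x 0 0 • A + src2 x 1 0 • B := by
    apply sym_ext _ _ (hl _ _ hA) (hr _ _)
    funext j
    have := congrFun hx (Sum.inl j)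
    simp only [extMap, symOf, lieAct4, LinearMap.coe_mk, AddHom.coe_mk, Sum.elim_inl,
      Matrix.sub_apply, Pi.zero_apply] at this
    simp only [symOf, Matrix.add_apply] at this ⊢
    linear_combination this
  have e2 : src3 x * B + B * (src3 x).transpose = src2 x 0 1 • A + src2 x 1 1 • B := by
    apply sym_ext _ _ (hl _ _ hB) (hr _ _)
    funext j
    have := congrFun hx (Sum.inr (Sum.inl j))
    simp only [extMap, symOf, lieAct4, LinearMap.coe_mk, AddHom.coe_mk, Sum.elim_inl, Sum.elim_inr,
      Matrix.sub_apply, Pi.zero_apply] at this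
    simp only [symOf, Matrix.add_apply] at this ⊢
    linear_combination this
  have ht : (src3 x).trace = src2 x 0 0 + src2 x 1 1 := by
    have := congrFun hx (Sum.inr (Sum.inr ()))
    simp only [extMap, LinearMap.coe_mk, AddHom.coe_mk, Sum.elim_inr, Pi.zero_apply] at this
    rw [sub_eq_zero.1 this, Matrix.trace_fin_two]
  obtain ⟨hX, k1, k2, k3, k4⟩ := stab_zero h2 A B (src3 x) hA hB hd _ _ _ _ ht e1 e2
  funext i
  rcases i with ⟨i, j⟩ | ⟨i, j⟩
  · exact congrFun (congrFun hX i) j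
  · fin_cases i <;> fin_cases j
    · exact k1
    · exact k2
    · exact k3
    · exact k4

theorem card_idx : Fintype.card TgtIdx = Fintype.card SrcIdx := by decide

theorem extMap_bij {R : Type*} [CommRing R]
    (h6 : IsUnit (6 : R)) (A B : Matrix (Fin 3) (Fin 3) R)
    (hA : A.IsSymm) (hB : B.IsSymm) (hu : IsUnit (disc4 A B)) :
    Function.Bijective (extMap A B) := by
  let e : TgtIdx ≃ SrcIdx := Fintype.equivOfCardEq card_idx
  let N : Matrix SrcIdx SrcIdx R := (LinearMap.toMatrix' (extMap A B)).submatrix e.symm id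
  have hNv : ∀ x, N.mulVec x = fun i => extMap A B x (e.symm i) := by
    intro x
    funext i
    have := congrFun (LinearMap.toMatrix'_mulVec (extMap A B) x) (e.symm i)
    rw [← this]
    rfl
  have hN : IsUnit N.det := by
    by_contra hn
    obtain ⟨m, hm, hmem⟩ := exists_max_ideal_of_mem_nonunits (mem_nonunits_iff.2 hn)
    letI : Field (R ⧸ m) := Ideal.Quotient.field m
    let K := AlgebraicClosure (R ⧸ m)
    let φ : R →+* K := (algebraMap (R ⧸ m) K).comp (Ideal.Quotient.mk m)
    have hφ : φ N.det = 0 := by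
      simp only [φ, RingHom.comp_apply, Ideal.Quotient.eq_zero_iff_mem.2 hmem, map_zero]
    haveI : Infinite K := IsAlgClosed.instInfinite
    rw [RingHom.map_det] at hφ
    obtain ⟨v, hv0, hv⟩ := Matrix.exists_mulVec_eq_zero_iff.2 hφ
    apply hv0
    have h2 : (2 : K) ≠ 0 := by
      intro h
      have := (h6.map φ).ne_zero
      apply this
      rw [map_ofNat]
      linear_combination 3 * h
    apply extMap_inj h2 (A.map φ) (B.map φ) (hA.map φ) (hB.map φ)
      (by rw [← disc4_map]; exact (hu.map φ).ne_zero)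
    have hM : LinearMap.toMatrix' (extMap (A.map φ) (B.map φ))
        = (LinearMap.toMatrix' (extMap A B)).map φ := by
      ext j i
      rw [Matrix.map_apply, LinearMap.toMatrix'_apply, LinearMap.toMatrix'_apply, extMap_map]
      have hs : (fun l => φ ((Pi.single i (1 : R) : SrcIdx → R) l)) = Pi.single i (1 : K) := by
        funext l
        by_cases hl : l = i
        · subst hl; simp
        · simp [hl]
      rw [hs]
    rw [← LinearMap.toMatrix'_mulVec, hM]
    funext j
    have := congrFun hv (e j)
    simpa [N, Matrix.mulVec, dotProduct] using this
  have hNu : IsUnit N := (Matrix.isUnit_iff_isUnit_det N).2 hN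
  constructor
  · intro x y hxy
    apply Matrix.mulVec_injective_of_isUnit hNu
    show N.mulVec x = N.mulVec y
    rw [hNv, hNv, hxy]
  · intro z
    obtain ⟨x, hx⟩ := Matrix.mulVec_surjective_iff_isUnit.2 hNu (fun i => z (e.symm i))
    refine ⟨x, ?_⟩
    have hx' : N.mulVec x = _ := hx
    rw [hNv] at hx'
    funext j
    simpa using congrFun hx' (e j)

/-- If `6` is invertible in a commutative ring `R` and `(A,B)` is a pair of symmetric
3×3 matrices over `R` whose discriminant `Δ₄(A,B)` is a unit, then the Lie algebra action
map `𝔤₄(R) → Sym₃(R)²`, `(X₃,X₂) ↦ (X₃,X₂)·(A,B)`, is bijective (both sides being free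
`R`-modules of rank 12). -/
theorem lieAct4_bijective_of_isUnit_disc4 {R : Type*} [CommRing R]
    (h6 : IsUnit (6 : R)) (A B : Matrix (Fin 3) (Fin 3) R)
    (hA : A.IsSymm) (hB : B.IsSymm) (hu : IsUnit (disc4 A B)) :
    Function.Bijective
      (fun X : {Y : Matrix (Fin 3) (Fin 3) R × Matrix (Fin 2) (Fin 2) R //
          Y.1.trace = Y.2.trace} =>
        (symOf (lieAct4 X.1.1 X.1.2 A B).1, symOf (lieAct4 X.1.1 X.1.2 A B).2)) := by
  have hbij := extMap_bij h6 A B hA hB hu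
  constructor
  · rintro ⟨⟨X3, X2⟩, hX⟩ ⟨⟨Y3, Y2⟩, hY⟩ h
    simp only [Prod.mk.injEq] at h
    let x : SrcIdx → R := Sum.elim (fun p => X3 p.1 p.2) (fun p => X2 p.1 p.2)
    let y : SrcIdx → R := Sum.elim (fun p => Y3 p.1 p.2) (fun p => Y2 p.1 p.2)
    have hxy : x = y := by
      apply hbij.1
      funext j
      rcases j with j | j | j
      · exact congrFun h.1 j
      · exact congrFun h.2 j
      · show X3.trace - X2.trace = Y3.trace - Y2.trace
        simp only at hX hY
        rw [hX, hY, sub_self, sub_self]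
    have h3 : X3 = Y3 := by
      ext i j
      exact congrFun hxy (Sum.inl (i, j))
    have h2 : X2 = Y2 := by
      ext i j
      exact congrFun hxy (Sum.inr (i, j))
    subst h3 h2
    rfl
  · rintro ⟨u, v⟩
    obtain ⟨x, hx⟩ := hbij.2 (Sum.elim u (Sum.elim v (fun _ => 0)))
    refine ⟨⟨(src3 x, src2 x), sub_eq_zero.1 (congrFun hx (Sum.inr (Sum.inr ())))⟩, ?_⟩
    refine Prod.ext ?_ ?_
    · funext j
      exact congrFun hx (Sum.inl j)
    · funext j
      exact congrFun hx (Sum.inr (Sum.inl j))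
end
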